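/- Let p be an odd prime and n a positive integer. There exists a p-basic set B of the symmetric group S_n, stable under multiplication by the sign character ε (χ ∈ B implies ε·χ ∈ B), whose restriction to A_n is a p-basic set of A_n; that is, the set B_{A_n} = {ρ ∈ Irr(A_n) : ⟨Res^{S_n}_{A_n}(χ), ρ⟩_{A_n} ≠ 0 for some χ ∈ B} of all irreducible constituents of restrictions to A_n of members of B is a p-basic set of A_n. -/

import Mathlib

/-!
The proof has three parts: an explicit sign-stable basic set for `S_n`, the description of the
irreducible characters of `S_n` that split on restriction to `A_n`, and a parity argument which
transfers any sign-stable basic set of `S_n` to `A_n`.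

**The symmetric group.** The characters of `S_n` are read off from antisymmetric functions of the
positions of `N ≥ n` beads. The power sum operator `pw k` moves one bead up by `k`, and `chi x g` is
the value at the configuration `x` of the state obtained from the ground state by the power sums of
the cycle lengths of `g`. The Euler identity (`euler`) and the Heisenberg relations (`heis`) show that
these virtual characters are orthonormal (`ip_chi`) and separate class functions
(`eq_zero_of_chi`), so that up to sign they are the irreducible characters (`irr_sym_iff`). Multiplication
by the sign character is complementation of the reflected configuration (`sign_chi`).

Write `p = 2 r + 1` and take `N = p n` beads. The basic set `BS` consists of the characters of the
configurations in which the beads on the middle runner `r` of the `p`-abacus cannot move down. It is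
sign-stable because reflection preserves the middle runner (`BS_sign`). On `p`-regular classes, the
Newton identities give relations (`newton`) that express every character through `BS`
(`chi_span`). For independence, a combination of `BS` is a state killed by all lowering operators of
the runner; the operator `Φ = exp (-D)` fixes such states and turns the power sums `p l` into their
parts on the runner (`Phi_pw`), which are orthogonal to such states. Hence a state of this kind that vanishes
on all `p`-regular classes is orthogonal to itself, so it is zero (`core_zero`).

**Split characters.** A self-dual irreducible `ψ = ε ψ` restricts to a sum of two irreducible halves
(`Spl`). Their difference `δ` changes sign under odd conjugations, and `|δ(g)|² ≥ |C(g)|`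
wherever `δ(g) ≠ 0` (`delta_lower`). This bound comes from pairing `δ` on the Young subgroup of the
orbits of `g` with a virtual character, the twisted trace of a Hodge star on alternating tensors
(`hodge_chr`), that is supported on the class of `g`. Since `δ` has norm `2`, it lives on the single
`S_n`-class of `g`, and `|δ(g)|²` is odd (`delta_supp`). Consequently `ψ(g)` is odd, while all other
self-dual irreducible characters are even at `g` (`Spl.odd`, `Spl.eq_zero`, `Spl.even`).

**Transfer.** Non-self-dual characters come in pairs `U`, `ε U` with equal values on `A_n`. Reducing
modulo `2` at the classes above shows that the halves of a self-dual member of the basic set differ on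
a `p`-regular class (`supp_mem`), that the halves of the other self-dual characters agree on all
`p`-regular classes (`supp_not_mem`), and that the latter have even coefficients at the self-dual members
(`a_even`). Spanning for `A_n` is then division by `2` (`Dat.spanning`), and independence follows by
induction of characters to `S_n` and evaluation at the special classes (`Dat.indep`).
-/

open scoped Classical

noncomputable section

/-- The set of irreducible complex characters of the group `G`. -/
def IrrChar (G : Type) [Group G] : Set (G → ℂ) :=
  {χ | ∃ V : FDRep ℂ G, CategoryTheory.Simple V ∧ χ = FDRep.character V}

/-- Truncation of a class function to the subset `C`: `φ^C`. -/
def truncCF {G : Type} (C : Set G) (φ : G → ℂ) : G → ℂ := fun g =>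
  if g ∈ C then φ g else 0

/-- The scalar product of class functions across the subset `C`:
`⟨α,β⟩_C = (1/|G|) · Σ_{g ∈ C} α(g) · conj(β(g))`. -/
def innerOn {G : Type} [Fintype G] (C : Set G) (α β : G → ℂ) : ℂ :=
  (Fintype.card G : ℂ)⁻¹ * ∑ g : G, if g ∈ C then α g * (starRingEnd ℂ) (β g) else 0

/-- `B` is a `C`-basic set of `b`: `B ⊆ b` and the truncations `χ^C` for `χ ∈ B` form a
`ℤ`-basis of the `ℤ`-submodule of class functions generated by the `χ^C`, `χ ∈ b`. -/
def IsBasicSetOf {G : Type} [Group G] (C : Set G) (b B : Set (G → ℂ)) : Prop :=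
  B ⊆ b ∧
  LinearIndependent ℤ (fun χ : B => truncCF C (χ : G → ℂ)) ∧
  Submodule.span ℤ (truncCF C '' B) = Submodule.span ℤ (truncCF C '' b)

/-- The set of `p`-regular elements of `G` (elements of order coprime to `p`). -/
def pRegular (p : ℕ) (G : Type) [Group G] : Set G :=
  {g | Nat.Coprime (orderOf g) p}

/-! ### Characters of finite groups -/

/-- The set of characters of all finite-dimensional complex representations of `G`. -/
def Chr (G : Type) [Group G] : Set (G → ℂ) := {χ | ∃ V : FDRep ℂ G, χ = V.character}

/-- The usual hermitian inner product of complex functions on a finite group. -/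
def ip {G : Type} [Fintype G] (a b : G → ℂ) : ℂ :=
  (Fintype.card G : ℂ)⁻¹ * ∑ g : G, a g * (starRingEnd ℂ) (b g)

lemma innerOn_univ {G : Type} [Fintype G] (a b : G → ℂ) : innerOn Set.univ a b = ip a b := by
  simp [innerOn, ip]

lemma Chr.of_rep {G : Type} [Group G] {W : Type} [AddCommGroup W] [Module ℂ W]
    [FiniteDimensional ℂ W] (ρ : Representation ℂ G W) : ρ.character ∈ Chr G :=
  ⟨FDRep.of ρ, rfl⟩

lemma IrrChar.subset_chr {G : Type} [Group G] : IrrChar G ⊆ Chr G := by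
  rintro χ ⟨V, -, rfl⟩
  exact ⟨V, rfl⟩

/-- The part of a representation cut out by a commuting idempotent is a representation. -/
lemma exists_rep_of_idem {G : Type} [Group G] {W : Type} [AddCommGroup W] [Module ℂ W]
    [FiniteDimensional ℂ W] (ρ : Representation ℂ G W) (e : W →ₗ[ℂ] W) (he : e ∘ₗ e = e)
    (hc : ∀ g, e ∘ₗ ρ g = ρ g ∘ₗ e) :
    ∃ σ : Representation ℂ G (LinearMap.range e),
      ∀ g, σ.character g = LinearMap.trace ℂ W (e ∘ₗ ρ g) := by
  have hst : ∀ g, ∀ v ∈ LinearMap.range e, ρ g v ∈ LinearMap.range e := by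
    rintro g _ ⟨v, rfl⟩
    exact ⟨ρ g v, LinearMap.congr_fun (hc g) v⟩
  let p : Subrepresentation ρ := ⟨LinearMap.range e, fun g v hv => hst g v hv⟩
  refine ⟨p.toRepresentation, fun g => ?_⟩
  have h1 : e ∘ₗ ρ g = (LinearMap.range e).subtype ∘ₗ (e.rangeRestrict ∘ₗ ρ g) := by
    ext v; simp
  rw [h1, LinearMap.trace_comp_comm']
  change LinearMap.trace ℂ _ _ = _
  congr 1
  ext ⟨v, hv⟩
  obtain ⟨w, rfl⟩ := hv
  have h2 := LinearMap.congr_fun (hc g) (e w)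
  have h3 := LinearMap.congr_fun he w
  simp only [LinearMap.comp_apply] at h2 h3
  simp [Subrepresentation.toRepresentation, p, h2, h3]

/-- Matrix version of `exists_rep_of_idem`. -/
lemma Chr.of_idem {G : Type} [Group G] {X : Type} [Fintype X] [DecidableEq X]
    (M : G →* Matrix X X ℂ) (e : Matrix X X ℂ) (he : e * e = e) (hc : ∀ g, e * M g = M g * e) :
    (fun g => (e * M g).trace) ∈ Chr G := by
  let ρ : Representation ℂ G (X → ℂ) :=
    (Matrix.toLinAlgEquiv' (R := ℂ) (n := X)).toRingEquiv.toMulEquiv.toMonoidHom.comp M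
  have hρ : ∀ g, ρ g = Matrix.toLin' (M g) := fun g => rfl
  obtain ⟨σ, hσ⟩ := exists_rep_of_idem ρ (Matrix.toLin' e)
    (by rw [← Matrix.toLin'_mul, he])
    (fun g => by rw [hρ, ← Matrix.toLin'_mul, ← Matrix.toLin'_mul, hc])
  convert Chr.of_rep σ using 1
  funext g
  rw [hσ, hρ, ← Matrix.toLin'_mul, Matrix.trace_toLin'_eq]

lemma Chr.exists_matrix {G : Type} [Group G] {χ : G → ℂ} (h : χ ∈ Chr G) :
    ∃ (d : ℕ) (M : G →* Matrix (Fin d) (Fin d) ℂ), ∀ g, χ g = (M g).trace := by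
  obtain ⟨V, rfl⟩ := h
  let b := Module.finBasis ℂ V
  refine ⟨_, (LinearMap.toMatrixAlgEquiv b).toRingEquiv.toMulEquiv.toMonoidHom.comp V.ρ,
    fun g => ?_⟩
  exact LinearMap.trace_eq_matrix_trace ℂ b (V.ρ g)

lemma Chr.of_matrix {G : Type} [Group G] {X : Type} [Fintype X] [DecidableEq X]
    (M : G →* Matrix X X ℂ) : (fun g => (M g).trace) ∈ Chr G := by
  simpa using Chr.of_idem M 1 (by simp) (by simp)

lemma Chr.comp {G H : Type} [Group G] [Group H] {χ : G → ℂ} (h : χ ∈ Chr G) (f : H →* G) :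
    (fun x => χ (f x)) ∈ Chr H := by
  obtain ⟨d, M, hM⟩ := Chr.exists_matrix h
  simpa [hM] using Chr.of_matrix (M.comp f)

lemma Chr.conj {G : Type} [Group G] {χ : G → ℂ} (h : χ ∈ Chr G) (x g : G) :
    χ (x * g * x⁻¹) = χ g := by
  obtain ⟨V, rfl⟩ := h
  simp

lemma Chr.one {G : Type} [Group G] {χ : G → ℂ} (h : χ ∈ Chr G) : ∃ d : ℕ, χ 1 = d := by
  obtain ⟨V, rfl⟩ := h
  exact ⟨_, FDRep.char_one V⟩

open scoped ComplexOrder in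
/-- Unitary trick: `H = Σ_g M(g)ᴴ M(g)` is an invertible invariant hermitian form. -/
lemma Chr.inv {G : Type} [Group G] [Fintype G] {χ : G → ℂ} (h : χ ∈ Chr G) (g : G) :
    χ g⁻¹ = (starRingEnd ℂ) (χ g) := by
  obtain ⟨d, M, hM⟩ := Chr.exists_matrix h
  let H : Matrix (Fin d) (Fin d) ℂ := ∑ x : G, (M x).conjTranspose * M x
  have hpd : H.PosDef := by
    have : H = (M 1).conjTranspose * M 1 +
        ∑ x ∈ Finset.univ.erase (1 : G), (M x).conjTranspose * M x := by
      exact (Finset.add_sum_erase _ (fun x => (M x).conjTranspose * M x)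
        (Finset.mem_univ (1 : G))).symm
    rw [this]
    refine Matrix.PosDef.add_posSemidef ?_ ?_
    · simpa using Matrix.PosDef.one
    · exact Matrix.posSemidef_sum _ fun x _ => Matrix.posSemidef_conjTranspose_mul_self _
  have hinv : (M g).conjTranspose * H * M g = H := by
    simp only [H, Finset.mul_sum, Finset.sum_mul]
    conv_rhs => rw [← Equiv.sum_comp (Equiv.mulRight g)]
    refine Finset.sum_congr rfl fun x _ => ?_
    simp [Matrix.mul_assoc]
  have hu : IsUnit H.det := by
    have := hpd.isUnit
    rwa [Matrix.isUnit_iff_isUnit_det] at this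
  have hgg : M g * M g⁻¹ = 1 := by rw [← map_mul]; simp
  have h2 : (M g).conjTranspose * H = H * M g⁻¹ := by
    calc (M g).conjTranspose * H = (M g).conjTranspose * H * M g * M g⁻¹ := by
          rw [Matrix.mul_assoc _ (M g), hgg, Matrix.mul_one]
      _ = _ := by rw [hinv]
  have h3 : M g⁻¹ = H⁻¹ * ((M g).conjTranspose * H) := by
    rw [h2, ← Matrix.mul_assoc, Matrix.nonsing_inv_mul _ hu, Matrix.one_mul]
  rw [hM, hM, h3, Matrix.trace_mul_comm, Matrix.mul_assoc, Matrix.mul_nonsing_inv _ hu,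
    Matrix.mul_one, Matrix.trace_conjTranspose]
  rfl

lemma Chr.isIntegral {G : Type} [Group G] [Fintype G] {χ : G → ℂ} (h : χ ∈ Chr G) (g : G) :
    IsIntegral ℤ (χ g) := by
  obtain ⟨d, M, hM⟩ := Chr.exists_matrix h
  rw [hM, Matrix.trace_eq_sum_roots_charpoly]
  refine IsIntegral.multiset_sum fun μ hμ => ?_
  have h1 : Module.End.HasEigenvalue (Matrix.toLin' (M g)) μ := by
    rw [Module.End.hasEigenvalue_iff_isRoot_charpoly, Matrix.charpoly_toLin']
    exact Polynomial.isRoot_of_mem_roots hμ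
  obtain ⟨v, hv⟩ := h1.exists_hasEigenvector
  have h2 : μ ^ (Fintype.card G) = 1 := by
    have h3 := hv.pow_apply (Fintype.card G)
    rw [← Matrix.toLin'_pow, ← map_pow, pow_card_eq_one, map_one, Matrix.toLin'_one] at h3
    have h4 : (μ ^ (Fintype.card G) - 1) • v = 0 := by
      rw [sub_smul, one_smul, ← h3]; simp
    rcases smul_eq_zero.1 h4 with h5 | h5
    · exact sub_eq_zero.1 h5
    · exact absurd h5 hv.2
  exact IsIntegral.of_pow Fintype.card_pos (h2 ▸ isIntegral_one)

lemma ip_chr {G : Type} [Group G] [Fintype G] {χ ψ : G → ℂ} (hψ : ψ ∈ Chr G) :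
    ip χ ψ = (Nat.card G : ℂ)⁻¹ * ∑ g, χ g * ψ g⁻¹ := by
  simp [ip, Chr.inv hψ]

lemma irr_iff {G : Type} [Group G] [Fintype G] {χ : G → ℂ} :
    χ ∈ IrrChar G ↔ χ ∈ Chr G ∧ ip χ χ = 1 := by
  constructor
  · intro h
    refine ⟨IrrChar.subset_chr h, ?_⟩
    rw [ip_chr (IrrChar.subset_chr h)]
    obtain ⟨V, hV, rfl⟩ := h
    rw [FDRep.simple_iff_char_is_norm_one] at hV
    rw [hV]
    simp
  · rintro ⟨h, h1⟩
    rw [ip_chr h] at h1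
    obtain ⟨V, rfl⟩ := h
    refine ⟨V, ?_, rfl⟩
    rw [FDRep.simple_iff_char_is_norm_one]
    rw [inv_mul_eq_one₀ (by simp)] at h1
    exact h1.symm

lemma irr_orth {G : Type} [Group G] [Fintype G] {χ ψ : G → ℂ} (hχ : χ ∈ IrrChar G)
    (hψ : ψ ∈ IrrChar G) : ip χ ψ = if χ = ψ then 1 else 0 := by
  split_ifs with h
  · subst h; exact (irr_iff.1 hχ).2
  · rw [ip_chr (IrrChar.subset_chr hψ)]
    obtain ⟨V, hV, rfl⟩ := hχ
    obtain ⟨W, hW, rfl⟩ := hψ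
    have := invertibleOfNonzero (NeZero.ne (Nat.card G : ℂ))
    rw [FDRep.char_orthonormal, if_neg]
    · rintro ⟨i⟩
      exact h (FDRep.char_iso i)

/-- Complete reducibility on the level of characters. -/
lemma Chr.mem_closure {G : Type} [Group G] [Fintype G] {χ : G → ℂ} (h : χ ∈ Chr G) :
    χ ∈ AddSubmonoid.closure (IrrChar G) := by
  have key : ∀ (d : ℕ) (W : Type) [AddCommGroup W] [Module ℂ W] [FiniteDimensional ℂ W]
      (ρ : Representation ℂ G W), Module.finrank ℂ W = d →
      ρ.character ∈ AddSubmonoid.closure (IrrChar G) := by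
    intro d
    induction d using Nat.strong_induction_on with
    | _ d ih =>
    intro W _ _ _ ρ hd
    have := invertibleOfNonzero (NeZero.ne (Nat.card G : ℂ))
    by_cases h0 : Subsingleton W
    · convert AddSubmonoid.zero_mem _ using 1
      funext g
      have : ρ g = 0 := by ext v; exact Subsingleton.elim _ _
      simp [Representation.character, this]
    rw [not_subsingleton_iff_nontrivial] at h0
    by_cases hirr : ρ.IsIrreducible
    · refine AddSubmonoid.subset_closure (irr_iff.2 ⟨Chr.of_rep ρ, ?_⟩)
      rw [ip_chr (Chr.of_rep ρ), Representation.char_orthonormal ρ ρ, if_pos]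
      exact ⟨Representation.Equiv.refl ρ⟩
    · have hnt : Nontrivial (Subrepresentation ρ) := by
        refine ⟨⊥, ⊤, fun hbt => ?_⟩
        have : (⊥ : Submodule ℂ W) = ⊤ := congrArg Subrepresentation.toSubmodule hbt
        exact bot_ne_top this
      have : ∃ p : Subrepresentation ρ, p ≠ ⊥ ∧ p ≠ ⊤ := by
        by_contra hcon
        push Not at hcon
        exact hirr ⟨fun p => or_iff_not_imp_left.2 (hcon p)⟩
      obtain ⟨p, hp0, hp1⟩ := this
      obtain ⟨q, hpq⟩ := exists_isCompl p
      have hc : IsCompl p.toSubmodule q.toSubmodule := by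
        constructor
        · rw [disjoint_iff]
          exact congrArg Subrepresentation.toSubmodule hpq.inf_eq_bot
        · rw [codisjoint_iff]
          exact congrArg Subrepresentation.toSubmodule hpq.sup_eq_top
      let e := Submodule.projection _ _ hc
      have he : e ∘ₗ e = e := by
        ext v; simp [e]
      have hcomm : ∀ g, e ∘ₗ ρ g = ρ g ∘ₗ e := by
        intro g
        ext v
        obtain ⟨a, ha, b, hb, rfl⟩ : ∃ a ∈ p.toSubmodule, ∃ b ∈ q.toSubmodule, a + b = v := by
          have : v ∈ p.toSubmodule ⊔ q.toSubmodule := by rw [hc.sup_eq_top]; trivial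
          exact Submodule.mem_sup.1 this
        have e1 : ∀ a ∈ p.toSubmodule, e a = a := fun a ha =>
          Submodule.projection_apply_of_mem_left hc ha
        have e2 : ∀ a ∈ q.toSubmodule, e a = 0 := fun a ha =>
          Submodule.projection_apply_of_mem_right hc ha
        simp [e1 _ ha, e2 _ hb, e1 _ (p.apply_mem_toSubmodule g ha),
          e2 _ (q.apply_mem_toSubmodule g hb)]
      obtain ⟨σ, hσ⟩ := exists_rep_of_idem ρ e he hcomm
      obtain ⟨τ, hτ⟩ := exists_rep_of_idem ρ (1 - e)
        (by ext v; have := LinearMap.congr_fun he v; simp at this; simp [this])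
        (fun g => by
          ext v; have := LinearMap.congr_fun (hcomm g) v; simp at this; simp [this])
      have hsum : ρ.character = σ.character + τ.character := by
        funext g
        rw [Pi.add_apply, hσ, hτ, ← map_add, ← LinearMap.add_comp]
        simp [Representation.character]
        rfl
      have hr : LinearMap.range e = p.toSubmodule := Submodule.range_projection hc
      have hk : LinearMap.ker e = q.toSubmodule := Submodule.ker_projection hc
      have hrk := LinearMap.finrank_range_add_finrank_ker e
      have hr2 : LinearMap.range (1 - e) ≤ LinearMap.ker e := by
        rintro _ ⟨v, rfl⟩
        have := LinearMap.congr_fun he v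
        simp at this
        simp [this]
      have hr3 := Submodule.finrank_mono hr2
      have hlt1 : Module.finrank ℂ (LinearMap.range e) < d := by
        rw [hr, ← hd]
        refine Submodule.finrank_lt fun h => hp1 ?_
        exact Subrepresentation.toSubmodule_injective h
      have hpos : 0 < Module.finrank ℂ (LinearMap.range e) := by
        rw [hr, Module.finrank_pos_iff]
        rw [Submodule.nontrivial_iff_ne_bot]
        intro h
        exact hp0 (Subrepresentation.toSubmodule_injective h)
      rw [hsum]
      exact add_mem (ih _ hlt1 _ σ rfl) (ih _ (by omega) _ τ rfl)
  obtain ⟨V, rfl⟩ := h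
  exact key _ V V.ρ rfl

/-! ### Virtual characters -/


/-- The group of virtual characters. -/
def VC (G : Type) [Group G] : Submodule ℤ (G → ℂ) := Submodule.span ℤ (IrrChar G)

section ip
variable {G : Type} [Fintype G]

lemma ip_add_left (a b c : G → ℂ) : ip (a + b) c = ip a c + ip b c := by
  simp [ip, add_mul, Finset.sum_add_distrib, mul_add]

lemma ip_add_right (a b c : G → ℂ) : ip a (b + c) = ip a b + ip a c := by
  simp [ip, mul_add, Finset.sum_add_distrib]

lemma ip_smul_left (z : ℂ) (a b : G → ℂ) : ip (z • a) b = z * ip a b := by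
  simp only [ip, Pi.smul_apply, smul_eq_mul, Finset.mul_sum]
  exact Finset.sum_congr rfl fun _ _ => by ring

lemma ip_smul_right (z : ℂ) (a b : G → ℂ) : ip a (z • b) = (starRingEnd ℂ) z * ip a b := by
  simp only [ip, Pi.smul_apply, smul_eq_mul, Finset.mul_sum, map_mul]
  exact Finset.sum_congr rfl fun _ _ => by ring

lemma ip_zsmul_left (z : ℤ) (a b : G → ℂ) : ip (z • a) b = z * ip a b := by
  rw [← ip_smul_left]; congr 1; funext g; simp

lemma ip_zsmul_right (z : ℤ) (a b : G → ℂ) : ip a (z • b) = z * ip a b := by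
  have := ip_smul_right (z : ℂ) a b
  simp only [map_intCast] at this
  rw [← this]; congr 1; funext g; simp

lemma ip_neg_left (a b : G → ℂ) : ip (-a) b = - ip a b := by
  simpa using ip_zsmul_left (-1) a b

lemma ip_neg_right (a b : G → ℂ) : ip a (-b) = - ip a b := by
  simpa using ip_zsmul_right (-1) a b

lemma ip_sub_left (a b c : G → ℂ) : ip (a - b) c = ip a c - ip b c := by
  rw [sub_eq_add_neg, ip_add_left, ip_neg_left, sub_eq_add_neg]

lemma ip_sub_right (a b c : G → ℂ) : ip a (b - c) = ip a b - ip a c := by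
  rw [sub_eq_add_neg, ip_add_right, ip_neg_right, sub_eq_add_neg]

@[simp] lemma ip_zero_left (b : G → ℂ) : ip 0 b = 0 := by simp [ip]

@[simp] lemma ip_zero_right (b : G → ℂ) : ip b 0 = 0 := by simp [ip]

lemma ip_sum_left {ι : Type*} (s : Finset ι) (f : ι → G → ℂ) (b : G → ℂ) :
    ip (∑ i ∈ s, f i) b = ∑ i ∈ s, ip (f i) b := by
  induction s using Finset.induction_on with
  | empty => simp
  | insert i s hi ih => rw [Finset.sum_insert hi, Finset.sum_insert hi, ip_add_left, ih]

lemma ip_conj (a b : G → ℂ) : (starRingEnd ℂ) (ip a b) = ip b a := by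
  simp [ip, mul_comm]

lemma ip_self (a : G → ℂ) :
    ip a a = (((Fintype.card G : ℝ)⁻¹ * ∑ g, ‖a g‖ ^ 2 : ℝ) : ℂ) := by
  simp [ip, Complex.mul_conj, Complex.normSq_eq_norm_sq]

lemma ip_self_nonneg (a : G → ℂ) : 0 ≤ (ip a a).re := by
  rw [ip_self, Complex.ofReal_re]; positivity

lemma eq_zero_of_ip_self (a : G → ℂ) (h : ip a a = 0) : a = 0 := by
  rw [ip_self, Complex.ofReal_eq_zero] at h
  by_cases hG : IsEmpty G
  · funext g; exact hG.elim g
  rw [not_isEmpty_iff] at hG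
  have hc : (Fintype.card G : ℝ)⁻¹ ≠ 0 := by
    have : 0 < Fintype.card G := Fintype.card_pos
    positivity
  have h2 := (mul_eq_zero.1 h).resolve_left hc
  rw [Finset.sum_eq_zero_iff_of_nonneg (fun _ _ => by positivity)] at h2
  funext g
  simpa using h2 g (Finset.mem_univ g)

end ip

section vc
variable {G : Type} [Group G]

lemma irr_mem_vc {a : G → ℂ} (h : a ∈ IrrChar G) : a ∈ VC G := Submodule.subset_span h

variable [Fintype G]

lemma chr_mem_vc {a : G → ℂ} (h : a ∈ Chr G) : a ∈ VC G := by
  have h1 := Chr.mem_closure h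
  have : AddSubmonoid.closure (IrrChar G) ≤ (VC G).toAddSubmonoid :=
    AddSubmonoid.closure_le.2 Submodule.subset_span
  exact this h1

lemma vc_ip_int {a b : G → ℂ} (ha : a ∈ VC G) (hb : b ∈ VC G) : ∃ z : ℤ, ip a b = z := by
  induction ha using Submodule.span_induction with
  | mem x hx =>
    induction hb using Submodule.span_induction with
    | mem y hy =>
      rw [irr_orth hx hy]
      split_ifs
      · exact ⟨1, by simp⟩
      · exact ⟨0, by simp⟩
    | zero => exact ⟨0, by simp⟩
    | add y z _ _ hy hz =>
      obtain ⟨u, hu⟩ := hy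
      obtain ⟨v, hv⟩ := hz
      exact ⟨u + v, by rw [ip_add_right, hu, hv]; simp⟩
    | smul c y _ hy =>
      obtain ⟨u, hu⟩ := hy
      exact ⟨c * u, by rw [ip_zsmul_right, hu]; simp⟩
  | zero => exact ⟨0, by simp⟩
  | add y z _ _ hy hz =>
    obtain ⟨u, hu⟩ := hy
    obtain ⟨v, hv⟩ := hz
    exact ⟨u + v, by rw [ip_add_left, hu, hv]; simp⟩
  | smul c y _ hy =>
    obtain ⟨u, hu⟩ := hy
    exact ⟨c * u, by rw [ip_zsmul_left, hu]; simp⟩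

lemma chr_ip_nat {a χ : G → ℂ} (ha : a ∈ Chr G) (hχ : χ ∈ IrrChar G) : ∃ z : ℕ, ip a χ = z := by
  have h := Chr.mem_closure ha
  induction h using AddSubmonoid.closure_induction with
  | mem x hx =>
    rw [irr_orth hx hχ]
    split_ifs
    · exact ⟨1, by simp⟩
    · exact ⟨0, by simp⟩
  | zero => exact ⟨0, by simp⟩
  | add y z hy' hz' hy hz =>
    have key : ∀ y ∈ AddSubmonoid.closure (IrrChar G), ∃ z : ℕ, ip y χ = z := by
      intro y hy
      induction hy using AddSubmonoid.closure_induction with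
      | mem x hx =>
        rw [irr_orth hx hχ]
        split_ifs
        · exact ⟨1, by simp⟩
        · exact ⟨0, by simp⟩
      | zero => exact ⟨0, by simp⟩
      | add y z _ _ hy hz =>
        obtain ⟨u, hu⟩ := hy
        obtain ⟨v, hv⟩ := hz
        exact ⟨u + v, by rw [ip_add_left, hu, hv]; simp⟩
    exact key _ (add_mem hy' hz')

lemma vc_exists_constituent {a : G → ℂ} (ha : a ∈ VC G) (h0 : a ≠ 0) :
    ∃ χ ∈ IrrChar G, ip a χ ≠ 0 := by
  by_contra hcon
  push Not at hcon
  refine h0 (eq_zero_of_ip_self a ?_)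
  have key : ∀ b ∈ VC G, ip a b = 0 := by
    intro b hb
    induction hb using Submodule.span_induction with
    | mem x hx => exact hcon x hx
    | zero => simp
    | add y z _ _ hy hz => rw [ip_add_right, hy, hz, add_zero]
    | smul c y _ hy => rw [ip_zsmul_right, hy, mul_zero]
  exact key a ha

/-- Splitting off the projection of a virtual character to an irreducible one. -/
lemma vc_split {a χ : G → ℂ} (hχ : χ ∈ IrrChar G) {c : ℤ} (hc : ip a χ = c) :
    ip (a - c • χ) (a - c • χ) = ip a a - (c : ℂ) ^ 2 := by
  have h2 : ip χ a = c := by rw [← ip_conj, hc]; simp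
  have h3 : ip χ χ = 1 := (irr_iff.1 hχ).2
  simp only [ip_sub_left, ip_sub_right, ip_zsmul_left, ip_zsmul_right, hc, h2, h3]
  ring

lemma vc_norm_one {a : G → ℂ} (ha : a ∈ VC G) (h1 : ip a a = 1) :
    a ∈ IrrChar G ∨ -a ∈ IrrChar G := by
  obtain ⟨χ, hχ, hne⟩ := vc_exists_constituent ha (by rintro rfl; simp at h1)
  obtain ⟨c, hc⟩ := vc_ip_int ha (irr_mem_vc hχ)
  have hs := vc_split hχ hc
  have hc0 : c ≠ 0 := by rintro rfl; simp at hc; exact hne hc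
  have hnn := ip_self_nonneg (a - c • χ)
  rw [hs, h1] at hnn
  have hle : c ^ 2 ≤ 1 := by
    have : ((1 : ℂ) - (c : ℂ) ^ 2).re = ((1 - c ^ 2 : ℤ) : ℝ) := by
      rw [← Complex.intCast_re]; push_cast; rfl
    rw [this] at hnn
    have : (0 : ℤ) ≤ 1 - c ^ 2 := by exact_mod_cast hnn
    linarith
  have hc1 : c = 1 ∨ c = -1 := by
    have h5 : c ≤ 1 := by nlinarith
    have h6 : -1 ≤ c := by nlinarith
    omega
  have hz : a - c • χ = 0 := by
    apply eq_zero_of_ip_self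
    rw [hs, h1]
    rcases hc1 with rfl | rfl <;> simp
  rw [sub_eq_zero] at hz
  rcases hc1 with rfl | rfl
  · left; rw [hz]; simpa using hχ
  · right; rw [hz]; simpa using hχ

lemma chr_norm_two {a : G → ℂ} (ha : a ∈ Chr G) (h2 : ip a a = 2) :
    ∃ χ ∈ IrrChar G, ∃ ψ ∈ IrrChar G, χ ≠ ψ ∧ a = χ + ψ := by
  have hav := chr_mem_vc ha
  obtain ⟨χ, hχ, hne⟩ := vc_exists_constituent hav (by rintro rfl; simp at h2)
  obtain ⟨c, hc⟩ := chr_ip_nat ha hχ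
  have hc' : ip a χ = ((c : ℤ) : ℂ) := by simpa using hc
  have hs := vc_split hχ hc'
  have hc0 : c ≠ 0 := by rintro rfl; simp at hc; exact hne hc
  have hnn := ip_self_nonneg (a - (c : ℤ) • χ)
  rw [hs, h2] at hnn
  have hle : (c : ℤ) ^ 2 ≤ 2 := by
    have : ((2 : ℂ) - ((c : ℤ) : ℂ) ^ 2).re = ((2 - (c : ℤ) ^ 2 : ℤ) : ℝ) := by
      rw [← Complex.intCast_re]; push_cast; rfl
    rw [this] at hnn
    have : (0 : ℤ) ≤ 2 - (c : ℤ) ^ 2 := by exact_mod_cast hnn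
    linarith
  have hc1 : c = 1 := by
    have : c < 2 := by
      by_contra h
      have : (2 : ℤ) ≤ c := by omega
      nlinarith
    omega
  subst hc1
  have hs1 : ip (a - χ) (a - χ) = 1 := by
    have := hs
    simp only [Nat.cast_one, one_smul, h2] at this
    rw [this]; norm_num
  have horth : ip (a - χ) χ = 0 := by
    rw [ip_sub_left, hc, (irr_iff.1 hχ).2]; simp
  rcases vc_norm_one (sub_mem hav (irr_mem_vc hχ)) hs1 with h | h
  · refine ⟨χ, hχ, a - χ, h, ?_, by abel⟩
    intro he
    rw [← he, (irr_iff.1 hχ).2] at horth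
    exact one_ne_zero horth
  · exfalso
    obtain ⟨d, hd⟩ := chr_ip_nat ha h
    have h5 : ip (-(a - χ)) χ = 0 := by rw [ip_neg_left, horth, neg_zero]
    have h6 : ip χ (-(a - χ)) = 0 := by rw [← ip_conj, h5]; simp
    have h7 : ip a (-(a - χ)) = -1 := by
      have h8 := (irr_iff.1 h).2
      have h9 : a = χ - (-(a - χ)) := by abel
      calc ip a (-(a - χ)) = ip (χ - (-(a - χ))) (-(a - χ)) := by rw [← h9]
        _ = -1 := by rw [ip_sub_left, h6, h8]; ring
    rw [h7] at hd
    have : ((-1 : ℤ) : ℂ) = ((d : ℤ) : ℂ) := by push_cast; exact hd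
    have := Int.cast_injective this
    omega

lemma irr_comp_aut {a : G → ℂ} (ha : a ∈ IrrChar G) (f : G ≃* G) :
    (fun x => a (f x)) ∈ IrrChar G := by
  refine irr_iff.2 ⟨Chr.comp (IrrChar.subset_chr ha) f.toMonoidHom, ?_⟩
  rw [← (irr_iff.1 ha).2, ip, ip]
  congr 1
  exact Equiv.sum_comp f.toEquiv (fun g => a g * (starRingEnd ℂ) (a g))

lemma irr_one_ne {a : G → ℂ} (ha : a ∈ IrrChar G) : ∃ d : ℕ, d ≠ 0 ∧ a 1 = d := by
  obtain ⟨V, hV, rfl⟩ := ha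
  refine ⟨_, ?_, FDRep.char_one V⟩
  intro h0
  have hirr := (irr_iff.1 (⟨V, hV, rfl⟩ : V.character ∈ IrrChar G)).2
  have : V.character = 0 := by
    funext g
    have h1 : Subsingleton V := Module.finrank_zero_iff.1 h0
    have : V.ρ g = 0 := by ext v; exact Subsingleton.elim _ _
    simp [FDRep.character, this]
  rw [this] at hirr
  simp at hirr

end vc

/-- Number of fixed points of a permutation action. -/
lemma Chr.of_action {G X : Type} [Group G] [Fintype X] (φ : G →* Equiv.Perm X) :
    (fun g => ((Finset.univ.filter fun x => φ g x = x).card : ℂ)) ∈ Chr G := by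
  let M : G →* Matrix X X ℂ :=
    { toFun := fun g => Matrix.of fun x y => if x = φ g y then 1 else 0
      map_one' := by
        ext x y
        simp [Matrix.one_apply]
      map_mul' := by
        intro g h
        ext x y
        simp [Matrix.mul_apply] }
  convert Chr.of_matrix M using 1
  funext g
  simp [M, Matrix.trace, Finset.sum_ite, eq_comm]

/-! ### Fock space: antisymmetric functions of bead positions -/

/-- States: complex functions on `N`-tuples of (integer) bead positions. -/
abbrev St (N : ℕ) := (Fin N → ℤ) → ℂ

/-- The runner of the `m`-abacus consisting of positions congruent to `r`. -/
def rn (m r : ℤ) : ℤ → Prop := fun u => u % m = r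

section defs
variable {N : ℕ}

/-- Move one bead sitting on `R` up by `s` (creation operator). -/
def up (R : ℤ → Prop) (s : ℤ) : Module.End ℂ (St N) where
  toFun F := fun x => ∑ i, if R (x i) then F (x - Pi.single i s) else 0
  map_add' F G := by
    funext x
    simp only [Pi.add_apply, ← Finset.sum_add_distrib]
    exact Finset.sum_congr rfl fun i _ => by split_ifs <;> simp
  map_smul' c F := by
    funext x
    simp [Finset.mul_sum]

/-- Move one bead on `R` down by `s`, to a nonnegative position (annihilation operator). -/
def lo (R : ℤ → Prop) (s : ℤ) : Module.End ℂ (St N) where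
  toFun F := fun x => ∑ i, if R (x i) ∧ 0 ≤ x i then F (x + Pi.single i s) else 0
  map_add' F G := by
    funext x
    simp only [Pi.add_apply, ← Finset.sum_add_distrib]
    exact Finset.sum_congr rfl fun i _ => by split_ifs <;> simp
  map_smul' c F := by
    funext x
    simp [Finset.mul_sum]

lemma up_apply (R : ℤ → Prop) (s : ℤ) (F : St N) (x : Fin N → ℤ) :
    up R s F x = ∑ i, if R (x i) then F (x - Pi.single i s) else 0 := rfl

lemma lo_apply (R : ℤ → Prop) (s : ℤ) (F : St N) (x : Fin N → ℤ) :
    lo R s F x = ∑ i, if R (x i) ∧ 0 ≤ x i then F (x + Pi.single i s) else 0 := rfl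

/-- Antisymmetry. -/
def Anti (F : St N) : Prop := ∀ (π : Equiv.Perm (Fin N)) (x : Fin N → ℤ),
  F (x ∘ π) = ((Equiv.Perm.sign π : ℤ) : ℂ) * F x

/-- Support in nonnegative positions. -/
def Pos (F : St N) : Prop := ∀ (x : Fin N → ℤ) (i : Fin N), x i < 0 → F x = 0

/-- The sum of the positions in the ground state `0, 1, …, N - 1`. -/
def vac (N : ℕ) : ℤ := ∑ i : Fin N, (i : ℤ)

/-- Homogeneity of degree `d` above the ground state. -/
def Hom (d : ℤ) (F : St N) : Prop := ∀ x : Fin N → ℤ, F x ≠ 0 → ∑ i, x i = vac N + d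

/-- The degree `d` part of fermionic Fock space. -/
structure Good (d : ℤ) (F : St N) : Prop where
  anti : Anti F
  pos : Pos F
  hom : Hom d F

lemma comp_sub_single (x : Fin N → ℤ) (π : Equiv.Perm (Fin N)) (i : Fin N) (s : ℤ) :
    x ∘ π - Pi.single i s = (x - Pi.single (π i) s) ∘ π := by
  funext j
  by_cases h : j = i
  · subst h; simp
  · simp [Pi.single_apply, h]

lemma comp_add_single (x : Fin N → ℤ) (π : Equiv.Perm (Fin N)) (i : Fin N) (s : ℤ) :
    x ∘ π + Pi.single i s = (x + Pi.single (π i) s) ∘ π := by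
  funext j
  by_cases h : j = i
  · subst h; simp
  · simp [Pi.single_apply, h]

lemma Anti.up {F : St N} (h : Anti F) (R : ℤ → Prop) (s : ℤ) : Anti (up R s F) := by
  intro π x
  rw [up_apply, up_apply, Finset.mul_sum]
  refine Fintype.sum_equiv π _ _ fun i => ?_
  rw [comp_sub_single, h]
  simp

lemma Anti.lo {F : St N} (h : Anti F) (R : ℤ → Prop) (s : ℤ) : Anti (lo R s F) := by
  intro π x
  rw [lo_apply, lo_apply, Finset.mul_sum]
  refine Fintype.sum_equiv π _ _ fun i => ?_
  rw [comp_add_single, h]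
  simp

lemma Pos.up {F : St N} (h : Pos F) (R : ℤ → Prop) {s : ℤ} (hs : 0 ≤ s) : Pos (up R s F) := by
  intro x l hl
  rw [up_apply]
  refine Finset.sum_eq_zero fun i _ => ?_
  rw [h _ l, ite_self]
  by_cases hi : l = i
  · subst hi; simp; linarith
  · simpa [Pi.single_apply, hi] using hl

lemma Pos.lo {F : St N} (h : Pos F) (R : ℤ → Prop) (s : ℤ) : Pos (lo R s F) := by
  intro x l hl
  rw [lo_apply]
  refine Finset.sum_eq_zero fun i _ => ?_
  split_ifs with hi
  · apply h _ l
    have : l ≠ i := by rintro rfl; linarith [hi.2]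
    simpa [Pi.single_apply, this] using hl
  · rfl

lemma Hom.up {F : St N} {d : ℤ} (h : Hom d F) (R : ℤ → Prop) (s : ℤ) :
    Hom (d + s) (up R s F) := by
  intro x hx
  rw [up_apply] at hx
  obtain ⟨i, -, hi⟩ := Finset.exists_ne_zero_of_sum_ne_zero hx
  have := h (x - Pi.single i s) (by intro h0; apply hi; rw [h0, ite_self])
  simp [Finset.sum_sub_distrib] at this
  linarith

lemma Hom.lo {F : St N} {d : ℤ} (h : Hom d F) (R : ℤ → Prop) (s : ℤ) :
    Hom (d - s) (lo R s F) := by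
  intro x hx
  rw [lo_apply] at hx
  obtain ⟨i, -, hi⟩ := Finset.exists_ne_zero_of_sum_ne_zero hx
  have := h (x + Pi.single i s) (by intro h0; apply hi; rw [h0, ite_self])
  simp [Finset.sum_add_distrib] at this
  linarith

lemma Good.up {F : St N} {d : ℤ} (h : Good d F) (R : ℤ → Prop) {s : ℤ} (hs : 0 ≤ s) :
    Good (d + s) (up R s F) := ⟨h.anti.up R s, h.pos.up R hs, h.hom.up R s⟩

lemma Good.lo {F : St N} {d : ℤ} (h : Good d F) (R : ℤ → Prop) (s : ℤ) :
    Good (d - s) (lo R s F) := ⟨h.anti.lo R s, h.pos.lo R s, h.hom.lo R s⟩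

lemma Good.add {F G : St N} {d : ℤ} (hF : Good d F) (hG : Good d G) : Good d (F + G) := by
  refine ⟨fun π x => ?_, fun x i hi => ?_, fun x hx => ?_⟩
  · rw [Pi.add_apply, Pi.add_apply, hF.anti, hG.anti]; ring
  · rw [Pi.add_apply, hF.pos x i hi, hG.pos x i hi, add_zero]
  · by_cases h : F x = 0
    · exact hG.hom x (by intro h'; apply hx; simp [h, h'])
    · exact hF.hom x h

lemma Good.smul {F : St N} {d : ℤ} (hF : Good d F) (c : ℂ) : Good d (c • F) := by
  refine ⟨fun π x => ?_, fun x i hi => ?_, fun x hx => ?_⟩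
  · simp only [Pi.smul_apply, smul_eq_mul]; rw [hF.anti]; ring
  · simp [hF.pos x i hi]
  · exact hF.hom x (by intro h'; apply hx; simp [h'])

lemma Good.zero {d : ℤ} : Good d (0 : St N) :=
  ⟨fun _ _ => by simp, fun _ _ _ => rfl, fun _ h => absurd rfl h⟩

lemma Good.sub {F G : St N} {d : ℤ} (hF : Good d F) (hG : Good d G) : Good d (F - G) := by
  have := hF.add (hG.smul (-1))
  rwa [neg_one_smul, ← sub_eq_add_neg] at this

lemma Good.sum {ι : Type*} {d : ℤ} (s : Finset ι) (F : ι → St N) (h : ∀ i ∈ s, Good d (F i)) :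
    Good d (∑ i ∈ s, F i) := by
  induction s using Finset.induction_on with
  | empty => simpa using Good.zero
  | insert i s hi ih =>
    rw [Finset.sum_insert hi]
    exact (h i (by simp)).add (ih fun j hj => h j (by simp [hj]))

lemma Anti.eq_zero {F : St N} (h : Anti F) {x : Fin N → ℤ} {i j : Fin N} (hij : i ≠ j)
    (hx : x i = x j) : F x = 0 := by
  have h1 := h (Equiv.swap i j) x
  have h2 : x ∘ Equiv.swap i j = x := by
    funext k
    simp only [Function.comp_apply, Equiv.swap_apply_def]
    split_ifs with h1 h2
    · rw [h1, hx]
    · rw [h2, hx]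
    · rfl
  rw [h2, Equiv.Perm.sign_swap hij] at h1
  push_cast at h1
  linear_combination (1 / 2 : ℂ) * h1

lemma Anti.injective {F : St N} (h : Anti F) {x : Fin N → ℤ} (hx : F x ≠ 0) :
    Function.Injective x := by
  intro i j hij
  by_contra hne
  exact hx (h.eq_zero hne hij)

/-- The energy of a configuration on one runner. -/
def En (m r : ℤ) (x : Fin N → ℤ) : ℤ :=
  (∑ i, if rn m r (x i) then x i / m else 0) -
    ((Finset.univ.filter fun i => rn m r (x i)).card : ℤ) *
      ((Finset.univ.filter fun i => rn m r (x i)).card - 1) / 2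

end defs

lemma sum_Icc_symm (G : ℤ → ℂ) (K : ℕ) :
    ∑ t ∈ Finset.Icc (-(K : ℤ)) K, G t = G 0 + ∑ k ∈ Finset.Icc 1 K, (G k + G (-k)) := by
  induction K with
  | zero => simp
  | succ K ih =>
    have : Finset.Icc (-((K + 1 : ℕ) : ℤ)) ((K + 1 : ℕ) : ℤ) =
        insert ((K + 1 : ℕ) : ℤ) (insert (-((K + 1 : ℕ) : ℤ)) (Finset.Icc (-(K : ℤ)) K)) := by
      ext t; simp; omega
    rw [this, Finset.sum_insert, Finset.sum_insert, ih, Finset.sum_Icc_succ_top (by omega)]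
    · ring
    · simp
    · simp; omega

/-- The contributions of a pair of beads on one runner. -/
lemma pair_sum (G : ℤ → ℂ) (a b : ℤ) (K : ℕ) (ha : 0 ≤ a) (hb : 0 ≤ b) (haK : a ≤ K) (hbK : b ≤ K)
    (hanti : ∀ t, G (a - b - t) = -G t) (hsupp : ∀ t, G t ≠ 0 → -b ≤ t ∧ t ≤ a) :
    ∑ k ∈ Finset.Icc 1 K, (G k + G (-k)) = - G 0 := by
  have h1 := sum_Icc_symm G K
  have h2 : ∑ t ∈ Finset.Icc (-(K : ℤ)) K, G t = ∑ t ∈ Finset.Icc (-b) a, G t := by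
    symm
    refine Finset.sum_subset (fun t ht => ?_) fun t _ ht => ?_
    · simp at ht ⊢; omega
    · by_contra h
      exact ht (by simpa using hsupp t h)
  have h3 : ∑ t ∈ Finset.Icc (-b) a, G t = ∑ t ∈ Finset.Icc (-b) a, - G t := by
    refine Finset.sum_nbij' (fun t => a - b - t) (fun t => a - b - t) ?_ ?_ ?_ ?_ ?_
    · intro t ht; simp at ht ⊢; omega
    · intro t ht; simp at ht ⊢; omega
    · intro t _; ring
    · intro t _; ring
    · intro t _; rw [hanti, neg_neg]
  rw [Finset.sum_neg_distrib] at h3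
  rw [h2] at h1
  linear_combination (1 / 2 : ℂ) * h3 - h1

lemma rn_sub_mul {m r u : ℤ} (k : ℤ) : rn m r (u - m * k) ↔ rn m r u := by
  simp [rn]

lemma rn_add_mul {m r u : ℤ} (k : ℤ) : rn m r (u + m * k) ↔ rn m r u := by
  simp [rn]

section euler
variable {N : ℕ}

/-- Euler identity: `Σ_k up_k lo_k` acts as multiplication by the energy. -/
lemma euler {m r : ℤ} (hm : 0 < m) {F : St N} (hA : Anti F) (hP : Pos F) (x : Fin N → ℤ) (K : ℕ)
    (hK : ∀ i, x i ≤ K) :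
    ∑ k ∈ Finset.Icc 1 K, up (rn m r) (m * k) (lo (rn m r) (m * k) F) x = En m r x * F x := by
  by_cases hneg : ∃ i, x i < 0
  · obtain ⟨i, hi⟩ := hneg
    rw [hP x i hi, mul_zero]
    exact Finset.sum_eq_zero fun k _ => (hP.lo _ _).up _ (by positivity) x i hi
  push Not at hneg
  let A : Fin N → Fin N → ℕ → ℂ := fun i j k =>
    if rn m r (x i) ∧ rn m r (x j) then
      (if i = j then (if m * k ≤ x i then F x else 0)
        else F (x - Pi.single i (m * k) + Pi.single j (m * k))) else 0
  have h1 : ∀ k ∈ Finset.Icc 1 K, up (rn m r) (m * k) (lo (rn m r) (m * k) F) x =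
      ∑ i, ∑ j, A i j k := by
    intro k _
    rw [up_apply]
    refine Finset.sum_congr rfl fun i _ => ?_
    rw [lo_apply]
    by_cases hi : rn m r (x i)
    · rw [if_pos hi]
      refine Finset.sum_congr rfl fun j _ => ?_
      by_cases hij : i = j
      · subst hij
        simp only [A, hi, and_self, if_true, Pi.sub_apply, Pi.single_eq_same, rn_sub_mul, true_and,
          sub_nonneg, sub_add_cancel]
      · have : ∀ s : ℤ, (x - Pi.single i s : Fin N → ℤ) j = x j := by
          intro s; simp [Pi.single_apply, Ne.symm hij]
        simp only [A, hi, this, hneg j, hij, if_false, and_true, true_and]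
    · rw [if_neg hi]
      simp [A, hi]
  rw [Finset.sum_congr rfl h1, Finset.sum_comm]
  have h2 : ∀ i, ∑ k ∈ Finset.Icc 1 K, ∑ j, A i j k = ∑ j, ∑ k ∈ Finset.Icc 1 K, A i j k :=
    fun i => Finset.sum_comm
  simp only [h2]
  let B : Fin N → Fin N → ℂ := fun i j => ∑ k ∈ Finset.Icc 1 K, A i j k
  have hBd : ∀ i, B i i = if rn m r (x i) then ((x i / m : ℤ) : ℂ) * F x else 0 := by
    intro i
    by_cases hi : rn m r (x i)
    · simp only [B, A, hi, and_self, if_true]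
      rw [← Finset.sum_filter, Finset.sum_const, nsmul_eq_mul]
      congr 1
      have : Finset.filter (fun k : ℕ => m * k ≤ x i) (Finset.Icc 1 K) =
          Finset.Icc 1 (x i / m).toNat := by
        ext k
        have h0 : 0 ≤ x i / m := Int.ediv_nonneg (hneg i) hm.le
        have h3 : x i / m ≤ x i := Int.ediv_le_self _ (hneg i)
        have h4 : m * k ≤ x i ↔ (k : ℤ) ≤ x i / m := by
          rw [Int.le_ediv_iff_mul_le hm, mul_comm]
        have := hK i
        simp only [Finset.mem_filter, Finset.mem_Icc, h4]
        omega
      rw [this, Nat.card_Icc]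
      have h0 : 0 ≤ x i / m := Int.ediv_nonneg (hneg i) hm.le
      have : (((x i / m).toNat + 1 - 1 : ℕ) : ℤ) = x i / m := by omega
      exact_mod_cast congrArg (Int.cast : ℤ → ℂ) this
    · simp [B, A, hi]
  have hBo : ∀ i j, i ≠ j → B i j + B j i =
      if rn m r (x i) ∧ rn m r (x j) then - F x else 0 := by
    intro i j hij
    by_cases hi : rn m r (x i) ∧ rn m r (x j)
    · rw [if_pos hi]
      simp only [B, A, hi, hi.symm, and_self, if_true, hij, hij.symm, if_false,
        ← Finset.sum_add_distrib]
      let G : ℤ → ℂ := fun t => F (x - Pi.single i (m * t) + Pi.single j (m * t))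
      have hxi : x i = m * (x i / m) + r := by
        have := Int.mul_ediv_add_emod (x i) m
        rw [hi.1] at this; linarith
      have hxj : x j = m * (x j / m) + r := by
        have := Int.mul_ediv_add_emod (x j) m
        rw [hi.2] at this; linarith
      have hr : 0 ≤ r ∧ r < m := by
        have h := hi.1
        rw [rn] at h
        rw [← h]
        exact ⟨Int.emod_nonneg _ hm.ne', Int.emod_lt_of_pos _ hm⟩
      have key := pair_sum G (x i / m) (x j / m) K (Int.ediv_nonneg (hneg i) hm.le)
        (Int.ediv_nonneg (hneg j) hm.le)
        ((Int.ediv_le_self _ (hneg i)).trans (hK i)) ((Int.ediv_le_self _ (hneg j)).trans (hK j))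
        ?_ ?_
      · have h0 : G 0 = F x := by simp [G]
        rw [← h0, ← key]
        refine Finset.sum_congr rfl fun k _ => ?_
        simp only [G]
        congr 2
        funext l
        simp [Pi.single_apply]
        split_ifs <;> ring
      · intro t
        simp only [G]
        have := hA (Equiv.swap i j) (x - Pi.single i (m * t) + Pi.single j (m * t))
        rw [Equiv.Perm.sign_swap hij] at this
        push_cast at this
        rw [neg_one_mul] at this
        rw [← this]
        congr 1
        funext l
        simp only [Function.comp_apply, Equiv.swap_apply_def, Pi.add_apply, Pi.sub_apply,
          Pi.single_apply]
        by_cases hl : l = i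
        · subst hl
          simp only [if_true, hij, hij.symm, if_false]
          linear_combination hxi - hxj
        · by_cases hl2 : l = j
          · subst hl2
            simp only [if_true, hij, hij.symm, if_false]
            linear_combination hxj - hxi
          · simp [hl, hl2]
      · intro t ht
        by_contra hcon
        apply ht
        rcases not_and_or.1 hcon with h | h
        · apply hP _ j
          simp [Pi.single_apply, hij.symm]
          push Not at h
          nlinarith
        · apply hP _ i
          simp [Pi.single_apply, hij]
          push Not at h
          nlinarith
    · rw [if_neg hi]
      have hi' : ¬ (rn m r (x j) ∧ rn m r (x i)) := fun h => hi h.symm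
      simp [B, A, hi, hi']
  let Rs := Finset.univ.filter fun i => rn m r (x i)
  have hsum : 2 * ∑ i, ∑ j, B i j = ∑ i, ∑ j, (B i j + B j i) := by
    simp only [Finset.sum_add_distrib]
    rw [Finset.sum_comm (f := fun i j => B j i)]
    ring
  have hsum2 : ∑ i, ∑ j, (B i j + B j i) =
      ∑ i, ∑ j, ((if rn m r (x i) ∧ rn m r (x j) then - F x else 0) +
        if i = j then 2 * B i i + (if rn m r (x i) then F x else 0) else 0) := by
    refine Finset.sum_congr rfl fun i _ => Finset.sum_congr rfl fun j _ => ?_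
    by_cases hij : i = j
    · subst hij
      by_cases hi : rn m r (x i)
      · simp [hi]; ring
      · simp [hi]; ring
    · rw [hBo i j hij, if_neg hij, add_zero]
  have hsum3 : ∑ i, ∑ j, (if rn m r (x i) ∧ rn m r (x j) then - F x else 0) =
      (Rs.card : ℂ) * Rs.card * (- F x) := by
    have e1 : ∀ i, ∑ j, (if rn m r (x i) ∧ rn m r (x j) then - F x else 0) =
        if rn m r (x i) then (Rs.card : ℂ) * (- F x) else 0 := by
      intro i
      by_cases hi : rn m r (x i)
      · simp only [hi, true_and, if_true]
        rw [← Finset.sum_filter, Finset.sum_const, nsmul_eq_mul]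
      · simp [hi]
    rw [Finset.sum_congr rfl fun i _ => e1 i, ← Finset.sum_filter, Finset.sum_const, nsmul_eq_mul]
    ring
  have hsum4 : ∑ i, B i i = (((∑ i, if rn m r (x i) then x i / m else 0 : ℤ)) : ℂ) * F x := by
    push_cast
    rw [Finset.sum_mul]
    refine Finset.sum_congr rfl fun i _ => ?_
    rw [hBd]; split_ifs <;> simp
  have hsum5 : ∑ i, (if rn m r (x i) then F x else 0) = (Rs.card : ℂ) * F x := by
    simp [← Finset.sum_filter, Rs]
  simp only [Finset.sum_add_distrib, hsum3, Finset.sum_ite_eq, Finset.mem_univ, if_true,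
    ← Finset.mul_sum, hsum4, hsum5] at hsum2
  simp only [Finset.sum_add_distrib] at hsum
  have hdiv : (((Rs.card : ℤ) * (Rs.card - 1) / 2 : ℤ) : ℂ) = (Rs.card : ℂ) * (Rs.card - 1) / 2 := by
    have h2 : (2 : ℤ) ∣ (Rs.card : ℤ) * (Rs.card - 1) := by
      have := Int.even_mul_pred_self (Rs.card : ℤ)
      exact this.two_dvd
    obtain ⟨c, hc⟩ := h2
    rw [hc, Int.mul_ediv_cancel_left _ two_ne_zero]
    have : ((Rs.card : ℂ) * (Rs.card - 1)) = 2 * c := by exact_mod_cast congrArg (Int.cast : ℤ → ℂ) hc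
    rw [this]; ring
  have hEn : ((En m r x : ℤ) : ℂ) = (((∑ i, if rn m r (x i) then x i / m else 0 : ℤ)) : ℂ) -
      (Rs.card : ℂ) * (Rs.card - 1) / 2 := by
    rw [← hdiv, ← Int.cast_sub]; rfl
  rw [hEn]
  change ∑ i, ∑ j, B i j = _
  linear_combination (1 / 2 : ℂ) * hsum + (1 / 2 : ℂ) * hsum2
end euler

/-! ### Heisenberg relations -/

section
variable {N : ℕ}

lemma vac_le_sum {x : Fin N → ℤ} (hx : Function.Injective x) (h0 : ∀ i, 0 ≤ x i) :
    vac N ≤ ∑ i, x i := by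
  have h := Finset.sum_range_le_sum (s := Finset.univ.image x) (c := 0) (by simpa using h0)
  rw [Finset.card_image_of_injective _ hx, Finset.sum_image (fun i _ j _ h => hx h)] at h
  rw [vac, Fin.sum_univ_eq_sum_range (fun i => (i : ℤ)) N]
  simpa using h

lemma vac_succ (N : ℕ) : vac (N + 1) = vac N + N := by
  simp [vac, Fin.sum_univ_castSucc]

/-- A configuration of degree `d` occupies all positions below `N - d`. -/
lemma fill {x : Fin N → ℤ} (hx : Function.Injective x) (h0 : ∀ i, 0 ≤ x i) {d : ℤ}
    (hd : ∑ i, x i = vac N + d) {v : ℤ} (hv0 : 0 ≤ v) (hv : v < N - d) : ∃ i, x i = v := by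
  by_contra hcon
  push Not at hcon
  have hinj : Function.Injective (Fin.cons v x : Fin (N + 1) → ℤ) := by
    rw [Fin.cons_injective_iff]
    exact ⟨by rintro ⟨i, hi⟩; exact hcon i hi, hx⟩
  have h := vac_le_sum hinj (by
    intro i
    refine Fin.cases ?_ (fun j => ?_) i
    · simpa using hv0
    · simpa using h0 j)
  rw [Fin.sum_cons, hd, vac_succ] at h
  linarith

lemma Good.eq_zero_of_neg {F : St N} {d : ℤ} (h : Good d F) (hd : d < 0) : F = 0 := by
  funext x
  by_contra hx
  have h1 := vac_le_sum (h.anti.injective hx) (fun i => by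
    by_contra hi
    exact hx (h.pos x i (by linarith)))
  have := h.hom x hx
  linarith

lemma Good.fill {F : St N} {d : ℤ} (h : Good d F) {x : Fin N → ℤ} (hx : F x ≠ 0) {v : ℤ}
    (hv0 : 0 ≤ v) (hv : v < N - d) : ∃ i, x i = v :=
  _root_.fill (h.anti.injective hx) (fun i => by
    by_contra hi
    exact hx (h.pos x i (by linarith))) (h.hom x hx) hv0 hv

/-- The commutator of `lo` and `up` before any assumption on the state. -/
lemma lo_up_comm (m r k l : ℤ) (hm : 0 < m) (hl : 0 ≤ l) (F : St N) (x : Fin N → ℤ) :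
    lo (rn m r) (m * k) (up (rn m r) (m * l) F) x - up (rn m r) (m * l) (lo (rn m r) (m * k) F) x
      = ∑ i, if rn m r (x i) ∧ 0 ≤ x i ∧ x i < m * l then F (x + Pi.single i (m * (k - l)))
        else 0 := by
  have h1 : lo (rn m r) (m * k) (up (rn m r) (m * l) F) x = ∑ i, ∑ j,
      if (rn m r (x i) ∧ 0 ≤ x i) ∧ rn m r (x j) then
        F (x + Pi.single i (m * k) - Pi.single j (m * l)) else 0 := by
    rw [lo_apply]
    refine Finset.sum_congr rfl fun i _ => ?_
    by_cases hi : rn m r (x i) ∧ 0 ≤ x i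
    · rw [if_pos hi, up_apply]
      refine Finset.sum_congr rfl fun j _ => ?_
      have : rn m r ((x + Pi.single i (m * k) : Fin N → ℤ) j) ↔ rn m r (x j) := by
        by_cases hij : j = i
        · subst hij; simp [rn_add_mul]
        · simp [hij]
      simp only [this, hi, true_and, and_self]
    · simp [hi]
  have h2 : up (rn m r) (m * l) (lo (rn m r) (m * k) F) x = ∑ i, ∑ j,
      if (rn m r (x i) ∧ 0 ≤ (x - Pi.single j (m * l) : Fin N → ℤ) i) ∧ rn m r (x j) then
        F (x + Pi.single i (m * k) - Pi.single j (m * l)) else 0 := by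
    rw [up_apply, Finset.sum_comm]
    refine Finset.sum_congr rfl fun j _ => ?_
    by_cases hj : rn m r (x j)
    · rw [if_pos hj, lo_apply]
      refine Finset.sum_congr rfl fun i _ => ?_
      have : rn m r ((x - Pi.single j (m * l) : Fin N → ℤ) i) ↔ rn m r (x i) := by
        by_cases hij : i = j
        · subst hij; simp [rn_sub_mul]
        · simp [hij]
      simp only [this, hj, and_true]
      rw [sub_add_eq_add_sub]
    · simp [hj]
  rw [h1, h2, ← Finset.sum_sub_distrib]
  refine Finset.sum_congr rfl fun i _ => ?_
  rw [← Finset.sum_sub_distrib, Finset.sum_eq_single i]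
  · have e : x + Pi.single i (m * k) - Pi.single i (m * l) = x + Pi.single i (m * (k - l)) := by
      rw [mul_sub, Pi.single_sub]; abel
    rw [e]
    simp only [Pi.sub_apply, Pi.single_eq_same]
    have hml : 0 ≤ m * l := by positivity
    by_cases hr : rn m r (x i)
    · by_cases h3 : 0 ≤ x i
      · by_cases h4 : x i < m * l
        · simp [hr, h3, h4]
        · simp [hr, h3, h4, not_lt.1 h4]
      · have : ¬ m * l ≤ x i := by intro h; linarith
        simp [hr, h3, this]
    · simp [hr]
  · intro j _ hj
    simp [Ne.symm hj]
  · simp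

lemma card_runner {m r : ℤ} (hm : 0 < m) (hr0 : 0 ≤ r) (hrm : r < m) (l : ℕ)
    {x : Fin N → ℤ} (hx : Function.Injective x)
    (hfill : ∀ v : ℤ, 0 ≤ v → v < m * l → ∃ i, x i = v) :
    (Finset.univ.filter fun i => rn m r (x i) ∧ 0 ≤ x i ∧ x i < m * l).card = l := by
  conv_rhs => rw [← Finset.card_range l]
  symm
  have hlt : ∀ a : ℕ, a < l → m * a + r < m * l := by
    intro a ha
    have : (a : ℤ) + 1 ≤ l := by exact_mod_cast ha
    nlinarith
  rcases Nat.eq_zero_or_pos l with rfl | hlpos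
  · rw [Finset.card_range, eq_comm, Finset.card_eq_zero, Finset.filter_eq_empty_iff]
    rintro i - ⟨-, h1, h2⟩
    simp at h2
    omega
  haveI : Nonempty (Fin N) := ⟨(hfill 0 le_rfl (by positivity)).choose⟩
  choose! f hf using hfill
  refine Finset.card_bij (fun a _ => f (m * a + r)) ?_ ?_ ?_
  · intro a ha
    have ha' := Finset.mem_range.1 ha
    have h1 := hf (m * a + r) (by positivity) (hlt a ha')
    simp only [Finset.mem_filter, Finset.mem_univ, true_and, h1]
    refine ⟨?_, by positivity, hlt a ha'⟩
    simp [rn, Int.emod_eq_of_lt hr0 hrm]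
  · intro a ha b hb hab
    have h1 := hf (m * a + r) (by positivity) (hlt a (Finset.mem_range.1 ha))
    have h2 := hf (m * b + r) (by positivity) (hlt b (Finset.mem_range.1 hb))
    rw [hab, h2] at h1
    have : m * (b : ℤ) = m * a := by linarith
    have := mul_left_cancel₀ hm.ne' this
    exact_mod_cast this.symm
  · intro i hi
    simp only [Finset.mem_filter, Finset.mem_univ, true_and] at hi
    have h0 : 0 ≤ x i / m := Int.ediv_nonneg hi.2.1 hm.le
    have h1 : x i / m < l := by
      rw [Int.ediv_lt_iff_lt_mul hm, mul_comm]; exact hi.2.2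
    have h3 : m * (x i / m) + r = x i := by
      have := Int.mul_ediv_add_emod (x i) m
      rw [hi.1] at this; exact this
    refine ⟨(x i / m).toNat, ?_, ?_⟩
    · simp; omega
    · apply hx
      have h2 : (((x i / m).toNat : ℕ) : ℤ) = x i / m := by omega
      rw [h2, h3, hf _ hi.2.1 hi.2.2]

/-- Heisenberg relations. -/
lemma heis {m r : ℤ} (hm : 0 < m) (hr0 : 0 ≤ r) (hrm : r < m) {F : St N} {d : ℤ} (hF : Good d F)
    (k l : ℕ) (hl : m * l ≤ N - d) :
    lo (rn m r) (m * k) (up (rn m r) (m * l) F) =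
      up (rn m r) (m * l) (lo (rn m r) (m * k) F) + (if k = l then (k : ℂ) else 0) • F := by
  funext x
  have hcomm := lo_up_comm m r k l hm (by positivity) F x
  rw [Pi.add_apply, ← sub_eq_iff_eq_add', hcomm]
  by_cases hkl : k = l
  · subst hkl
    simp only [sub_self, mul_zero, Pi.single_zero, add_zero, if_true, Pi.smul_apply, smul_eq_mul]
    rw [← Finset.sum_filter, Finset.sum_const, nsmul_eq_mul]
    by_cases hx : F x = 0
    · rw [hx, mul_zero, mul_zero]
    · rw [card_runner hm hr0 hrm k (hF.anti.injective hx)]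
      intro v hv0 hv
      exact hF.fill hx hv0 (by linarith)
  · simp only [hkl, if_false, zero_smul, Pi.zero_apply]
    by_cases hinj : Function.Injective x
    · refine Finset.sum_eq_zero fun i _ => ?_
      split_ifs with hi
      swap
      · rfl
      by_contra hne
      obtain ⟨j, hj⟩ := hF.fill hne hi.2.1 (v := x i) (by linarith [hi.2.2])
      by_cases hji : j = i
      · subst hji
        simp at hj
        rcases hj with hj | hj
        · omega
        · apply hkl; have : (k : ℤ) = l := by linarith
          exact_mod_cast this
      · simp [hji] at hj
        exact hji (hinj hj)
    · have hA : Anti (lo (rn m r) (m * k) (up (rn m r) (m * l) F) -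
          up (rn m r) (m * l) (lo (rn m r) (m * k) F)) := by
        intro π y
        rw [Pi.sub_apply, Pi.sub_apply, (hF.anti.up _ _).lo _ _ π y, (hF.anti.lo _ _).up _ _ π y]
        ring
      rw [← hcomm]
      by_contra hne
      exact hinj (hA.injective hne)

/-- The antisymmetric state supported on the permutations of `y`. -/
def st (y : Fin N → ℤ) : St N := fun x =>
  ∑ π : Equiv.Perm (Fin N), if x = y ∘ π then ((Equiv.Perm.sign π : ℤ) : ℂ) else 0

/-- The ground state positions. -/
def dl (N : ℕ) : Fin N → ℤ := fun i => (i : ℤ)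

lemma dl_injective : Function.Injective (dl N) := by
  intro i j h
  simpa [dl, Fin.ext_iff] using h

lemma sign_sq_cast {α : Type*} [Fintype α] [DecidableEq α] (π : Equiv.Perm α) :
    ((Equiv.Perm.sign π : ℤ) : ℂ) * ((Equiv.Perm.sign π : ℤ) : ℂ) = 1 := by
  rcases Int.units_eq_one_or (Equiv.Perm.sign π) with h | h <;> simp [h]

lemma st_anti (y : Fin N → ℤ) : Anti (st y) := by
  intro π x
  rw [st, st, Finset.mul_sum]
  symm
  refine Fintype.sum_equiv (Equiv.mulRight π) _ _ fun σ => ?_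
  have : x ∘ π = y ∘ (Equiv.mulRight π σ : Equiv.Perm (Fin N)) ↔ x = y ∘ σ := by
    constructor
    · intro h
      funext i
      have := congrFun h (π⁻¹ i)
      simpa using this
    · rintro rfl
      funext i; simp
  simp only [this, mul_ite, mul_zero]
  refine if_congr Iff.rfl ?_ rfl
  simp [mul_comm]

lemma st_perm_left (y x : Fin N → ℤ) (π : Equiv.Perm (Fin N)) :
    st (y ∘ π) x = ((Equiv.Perm.sign π : ℤ) : ℂ) * st y x := by
  rw [st, st, Finset.mul_sum]
  refine Fintype.sum_equiv (Equiv.mulLeft π) _ _ fun σ => ?_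
  have : y ∘ ⇑((Equiv.mulLeft π) σ) = (y ∘ π) ∘ σ := by funext i; simp
  rw [this]
  split_ifs
  · simp only [Equiv.coe_mulLeft, Equiv.Perm.sign_mul, Units.val_mul, Int.cast_mul, ← mul_assoc,
      sign_sq_cast, one_mul]
  · simp

lemma st_ne_zero {y x : Fin N → ℤ} (h : st y x ≠ 0) : ∃ π : Equiv.Perm (Fin N), x = y ∘ π := by
  obtain ⟨π, -, hπ⟩ := Finset.exists_ne_zero_of_sum_ne_zero h
  exact ⟨π, by by_contra h'; simp [h'] at hπ⟩

lemma st_good {y : Fin N → ℤ} (h0 : ∀ i, 0 ≤ y i) {d : ℤ} (hd : ∑ i, y i = vac N + d) :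
    Good d (st y) := by
  refine ⟨st_anti y, fun x i hi => ?_, fun x hx => ?_⟩
  · by_contra hx
    obtain ⟨π, rfl⟩ := st_ne_zero hx
    exact absurd (h0 (π i)) (not_le.2 hi)
  · obtain ⟨π, rfl⟩ := st_ne_zero hx
    rw [← hd]
    exact Equiv.sum_comp π y

lemma st_self {y : Fin N → ℤ} (hy : Function.Injective y) (π : Equiv.Perm (Fin N)) :
    st y (y ∘ π) = ((Equiv.Perm.sign π : ℤ) : ℂ) := by
  rw [st, Finset.sum_eq_single π]
  · simp
  · intro σ _ hσ
    rw [if_neg]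
    intro h
    apply hσ
    ext i
    exact congrArg Fin.val (hy (congrFun h i).symm)
  · simp

/-- The ground state. -/
def F0 (N : ℕ) : St N := st (dl N)

lemma F0_good : Good 0 (F0 N) := st_good (fun i => by simp [dl]) (by simp [vac, dl])

lemma exists_perm_of_vac {x : Fin N → ℤ} (hx : Function.Injective x) (h0 : ∀ i, 0 ≤ x i)
    (hs : ∑ i, x i = vac N) : ∃ π : Equiv.Perm (Fin N), x = dl N ∘ π := by
  have hf : ∀ j : Fin N, ∃ i, x i = j := fun j =>
    fill hx h0 (d := 0) (by simpa using hs) (by positivity) (by simp)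
  choose f hfx using hf
  have hinj : Function.Injective f := by
    intro a b hab
    have h1 := hfx a
    rw [hab, hfx b] at h1
    simpa [Fin.ext_iff] using h1.symm
  let e : Equiv.Perm (Fin N) := Equiv.ofBijective f (Finite.injective_iff_bijective.1 hinj)
  refine ⟨e⁻¹, ?_⟩
  funext i
  have h := hfx (e⁻¹ i)
  have h2 : f (e⁻¹ i) = i := e.apply_symm_apply i
  rw [h2] at h
  simpa [dl] using h

/-- A state of degree zero is a multiple of the ground state. -/
lemma Good.eq_F0 {F : St N} (h : Good 0 F) : F = F (dl N) • F0 N := by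
  funext x
  have key : ∀ G : St N, Good 0 G → G x ≠ 0 → ∃ π : Equiv.Perm (Fin N), x = dl N ∘ π := by
    intro G hG hx
    exact exists_perm_of_vac (hG.anti.injective hx) (fun i => by
      by_contra hi
      exact hx (hG.pos x i (by linarith))) (by simpa using hG.hom x hx)
  by_cases hx : ∃ π : Equiv.Perm (Fin N), x = dl N ∘ π
  · obtain ⟨π, rfl⟩ := hx
    rw [h.anti, Pi.smul_apply, F0, st_self dl_injective, smul_eq_mul, mul_comm]
  · have h1 : F x = 0 := by
      by_contra h1; exact hx (key F h h1)
    have h2 : F0 N x = 0 := by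
      by_contra h1; exact hx (key _ F0_good h1)
    simp [h1, h2]

end

/-! ### The pairing of states and the power sum states -/

section
variable {N : ℕ}

lemma up_comm {R R' : ℤ → Prop} {s s' : ℤ} (hR : ∀ u, R (u - s') ↔ R u)
    (hR' : ∀ u, R' (u - s) ↔ R' u) (F : St N) :
    up R s (up R' s' F) = up R' s' (up R s F) := by
  have key : ∀ (R R' : ℤ → Prop) (s s' : ℤ) (hR' : ∀ u, R' (u - s) ↔ R' u) (x : Fin N → ℤ),
      up R s (up R' s' F) x = ∑ i, ∑ j, if R (x i) ∧ R' (x j) then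
        F (x - Pi.single i s - Pi.single j s') else 0 := by
    intro R R' s s' hR' x
    rw [up_apply]
    refine Finset.sum_congr rfl fun i _ => ?_
    by_cases hi : R (x i)
    · rw [if_pos hi, up_apply]
      refine Finset.sum_congr rfl fun j _ => ?_
      have : R' ((x - Pi.single i s : Fin N → ℤ) j) ↔ R' (x j) := by
        by_cases hij : j = i
        · subst hij; simp [hR']
        · simp [hij]
      simp only [this, hi, true_and]
    · simp [hi]
  funext x
  rw [key R R' s s' hR' x, key R' R s' s hR x, Finset.sum_comm]
  refine Finset.sum_congr rfl fun i _ => Finset.sum_congr rfl fun j _ => ?_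
  rw [sub_right_comm]
  exact if_congr and_comm rfl rfl

/-- A configuration of degree `d` lives below `N + d`. -/
lemma Good.le_of_ne {F : St N} {d : ℤ} (h : Good d F) {x : Fin N → ℤ} (hx : F x ≠ 0) (i : Fin N) :
    0 ≤ x i ∧ x i < N + d := by
  have h0 : ∀ i, 0 ≤ x i := fun i => by
    by_contra hi
    exact hx (h.pos x i (by linarith))
  refine ⟨h0 i, ?_⟩
  obtain ⟨M, rfl⟩ : ∃ M, N = M + 1 := ⟨N - 1, by have := i.pos; omega⟩
  have h1 := vac_le_sum (x := fun j => x (i.succAbove j))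
    ((h.anti.injective hx).comp (Fin.succAbove_right_injective)) (fun j => h0 _)
  have h2 := h.hom x hx
  rw [Fin.sum_univ_succAbove x i, vac_succ] at h2
  push_cast
  linarith

lemma Good.finite {F : St N} {d : ℤ} (h : Good d F) : (Function.support F).Finite := by
  refine (Set.Finite.pi' (fun _ : Fin N => Set.finite_Icc (0 : ℤ) (N + d))).subset ?_
  intro x hx i
  have := h.le_of_ne hx i
  exact ⟨this.1, this.2.le⟩

/-- The bilinear pairing of states. -/
def pr (F G : St N) : ℂ := ∑ᶠ x, F x * G x

lemma pr_comm (F G : St N) : pr F G = pr G F := by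
  simp only [pr, mul_comm]

lemma supp_mul {F : St N} (G : St N) (h : (Function.support F).Finite) :
    (Function.support fun x => F x * G x).Finite :=
  h.subset (Function.support_mul_subset_left _ _)

lemma pr_sum {ι : Type*} (s : Finset ι) (F : ι → St N) (G : St N)
    (h : ∀ i ∈ s, (Function.support (F i)).Finite) :
    pr (∑ i ∈ s, F i) G = ∑ i ∈ s, pr (F i) G := by
  simp only [pr, Finset.sum_apply, Finset.sum_mul]
  exact finsum_sum_comm _ _ fun i hi => supp_mul G (h i hi)

lemma pr_add {F F' : St N} (G : St N) (h : (Function.support F).Finite)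
    (h' : (Function.support F').Finite) : pr (F + F') G = pr F G + pr F' G := by
  simp only [pr, Pi.add_apply, add_mul]
  exact finsum_add_distrib (supp_mul G h) (supp_mul G h')

lemma pr_smul (c : ℂ) (F G : St N) : pr (c • F) G = c * pr F G := by
  have h := (smul_finsum c fun x => F x * G x).symm
  simpa only [pr, Pi.smul_apply, smul_eq_mul, mul_assoc] using h

lemma pr_smul_right (c : ℂ) (F G : St N) : pr F (c • G) = c * pr F G := by
  rw [pr_comm, pr_smul, pr_comm]

lemma pr_zero (G : St N) : pr 0 G = 0 := by simp [pr]

lemma pr_zero_right (G : St N) : pr G 0 = 0 := by simp [pr]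

/-- Raising and lowering operators are adjoint. -/
lemma pr_up {R : ℤ → Prop} {s d d' : ℤ} (hR : ∀ u, R (u + s) ↔ R u) {F G : St N}
    (hF : Good d F) (hG : Good d' G) :
    pr (up R s F) G = pr F (lo R s G) := by
  have h1 : pr (up R s F) G =
      ∑ i, ∑ᶠ x : Fin N → ℤ, (if R (x i) then F (x - Pi.single i s) else 0) * G x := by
    simp only [pr, up_apply, Finset.sum_mul]
    exact finsum_sum_comm _ _ fun i _ =>
      hG.finite.subset (Function.support_mul_subset_right _ _)
  have h2 : pr F (lo R s G) =
      ∑ i, ∑ᶠ x : Fin N → ℤ, F x * (if R (x i) ∧ 0 ≤ x i then G (x + Pi.single i s) else 0) := by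
    simp only [pr, lo_apply, Finset.mul_sum]
    exact finsum_sum_comm _ _ fun i _ =>
      hF.finite.subset (Function.support_mul_subset_left _ _)
  rw [h1, h2]
  refine Finset.sum_congr rfl fun i _ => ?_
  rw [← finsum_comp_equiv (Equiv.addRight (Pi.single i s : Fin N → ℤ))]
  refine finsum_congr fun x => ?_
  simp only [Equiv.coe_addRight, Pi.add_apply, Pi.single_eq_same, hR, add_sub_cancel_right]
  by_cases h : 0 ≤ x i
  · simp [h]
  · simp [hF.pos x i (not_le.1 h)]

/-- Pairing with the antisymmetrised configuration `y` is evaluation. -/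
lemma pr_st (y : Fin N → ℤ) {G : St N} (hG : Anti G) : pr (st y) G = (N.factorial : ℂ) * G y := by
  have h1 : st y = ∑ π : Equiv.Perm (Fin N),
      fun x : Fin N → ℤ => if x = y ∘ π then ((Equiv.Perm.sign π : ℤ) : ℂ) else 0 := by
    funext x; simp [st]
  rw [h1, pr_sum]
  · have h2 : ∀ π : Equiv.Perm (Fin N), pr (fun x : Fin N → ℤ =>
        if x = y ∘ π then ((Equiv.Perm.sign π : ℤ) : ℂ) else 0) G = G y := by
      intro π
      rw [pr, finsum_eq_single _ (y ∘ π)]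
      · simp only [if_true]
        rw [hG, ← mul_assoc, sign_sq_cast, one_mul]
      · intro x hx; simp [hx]
    simp [h2, Fintype.card_perm]
  · intro π _
    refine (Set.finite_singleton (y ∘ π)).subset ?_
    intro x hx
    by_contra h
    simp at h
    simp [h] at hx

/-- The power sum operator. -/
def pw (k : ℕ) : Module.End ℂ (St N) := up (rn 1 0) k

/-- The adjoint of the power sum operator. -/
def lw (k : ℕ) : Module.End ℂ (St N) := lo (rn 1 0) k

lemma rn_one (u : ℤ) : rn 1 0 u := by simp [rn]

lemma pw_apply (k : ℕ) (F : St N) (x : Fin N → ℤ) :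
    pw k F x = ∑ i, F (x - Pi.single i (k : ℤ)) := by
  simp [pw, up_apply, rn_one]

lemma pw_comm (k l : ℕ) (F : St N) : pw k (pw l F) = pw l (pw k F) :=
  up_comm (by simp [rn_one]) (by simp [rn_one]) F

lemma Good.pw {F : St N} {d : ℤ} (h : Good d F) (k : ℕ) : Good (d + k) (pw k F) :=
  h.up _ (by positivity)

lemma Good.lw {F : St N} {d : ℤ} (h : Good d F) (k : ℕ) : Good (d - k) (lw k F) := h.lo _ _

lemma heis_one {F : St N} {d : ℤ} (hF : Good d F) (k l : ℕ) (hl : (l : ℤ) ≤ N - d) :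
    lw k (pw l F) = pw l (lw k F) + (if k = l then (k : ℂ) else 0) • F := by
  have := heis (m := 1) (r := 0) one_pos le_rfl one_pos hF k l (by simpa using hl)
  simpa [lw, pw] using this

instance : LeftCommutative (fun (k : ℕ) (F : St N) => pw k F) := ⟨fun k l F => pw_comm k l F⟩

/-- The power sum state attached to a multiset of natural numbers. -/
def Fm (N : ℕ) (μ : Multiset ℕ) : St N := μ.foldr (fun k F => pw k F) (F0 N)

@[simp] lemma Fm_zero : Fm N 0 = F0 N := rfl

@[simp] lemma Fm_cons (k : ℕ) (μ : Multiset ℕ) : Fm N (k ::ₘ μ) = pw k (Fm N μ) := by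
  simp [Fm]

lemma Fm_good (μ : Multiset ℕ) : Good (μ.sum : ℤ) (Fm N μ) := by
  induction μ using Multiset.induction_on with
  | empty => simpa using F0_good
  | cons k μ ih =>
    rw [Fm_cons, Multiset.sum_cons]
    have := ih.pw k
    rwa [Nat.cast_add, add_comm]

lemma lw_Fm (k : ℕ) (hk : 0 < k) (μ : Multiset ℕ) (hμ : μ.sum ≤ N) :
    lw k (Fm N μ) = ((k * μ.count k : ℕ) : ℂ) • Fm N (μ.erase k) := by
  induction μ using Multiset.induction_on with
  | empty =>
    simp only [Fm_zero, Multiset.count_zero, mul_zero, Nat.cast_zero, zero_smul]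
    exact (F0_good.lw k).eq_zero_of_neg (by omega)
  | cons l μ ih =>
    rw [Multiset.sum_cons] at hμ
    rw [Fm_cons, heis_one (Fm_good μ) k l (by omega), ih (by omega), map_smul]
    by_cases hkl : k = l
    · subst hkl
      simp only [if_true, Multiset.count_cons_self, Multiset.erase_cons_head]
      by_cases hc : k ∈ μ
      · rw [← Fm_cons, Multiset.cons_erase hc, ← add_smul]
        congr 1; push_cast; ring
      · rw [Multiset.count_eq_zero_of_notMem hc]; simp
    · simp only [hkl, if_false, zero_smul, add_zero]
      rw [Multiset.count_cons_of_ne hkl, Multiset.erase_cons_tail _ (Ne.symm hkl), Fm_cons]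

/-- The order of the centraliser of a permutation with cycle lengths `μ`. -/
def zm (μ : Multiset ℕ) : ℕ := μ.prod * ∏ k ∈ μ.toFinset, (μ.count k).factorial

lemma zm_cons (k : ℕ) (μ : Multiset ℕ) :
    zm (k ::ₘ μ) = k * (μ.count k + 1) * zm μ := by
  have key : ∏ l ∈ (k ::ₘ μ).toFinset, ((k ::ₘ μ).count l).factorial =
      (μ.count k + 1) * ∏ l ∈ μ.toFinset, (μ.count l).factorial := by
    have h1 : ∏ l ∈ μ.toFinset, (μ.count l).factorial =
        ∏ l ∈ (k ::ₘ μ).toFinset, (μ.count l).factorial := by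
      refine Finset.prod_subset (by simp) fun l _ hl => ?_
      simp at hl
      simp [Multiset.count_eq_zero_of_notMem hl]
    rw [h1, ← Finset.mul_prod_erase _ _ (show k ∈ (k ::ₘ μ).toFinset by simp),
      ← Finset.mul_prod_erase _ _ (show k ∈ (k ::ₘ μ).toFinset by simp), ← mul_assoc]
    congr 1
    · simp [Nat.factorial_succ]
    · refine Finset.prod_congr rfl fun l hl => ?_
      rw [Multiset.count_cons_of_ne (Finset.ne_of_mem_erase hl)]
  rw [zm, key, zm, Multiset.prod_cons]
  ring

/-- Orthogonality of the power sum states. -/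
lemma pr_Fm (μ : Multiset ℕ) (h0 : 0 ∉ μ) (ν : Multiset ℕ) (h0' : 0 ∉ ν) (hν : ν.sum ≤ N)
    (hs : ν.sum = μ.sum) :
    pr (Fm N μ) (Fm N ν) = if μ = ν then (N.factorial : ℂ) * zm μ else 0 := by
  induction μ using Multiset.induction_on generalizing ν with
  | empty =>
    have hν0 : ν = 0 := by
      rw [Multiset.sum_zero, Multiset.sum_eq_zero_iff] at hs
      refine Multiset.eq_zero_of_forall_notMem fun a ha => ?_
      have := hs a ha
      subst this
      exact h0' ha
    subst hν0
    simp only [Fm_zero, if_true]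
    rw [F0, pr_st _ (st_anti _)]
    have := st_self (dl_injective (N := N)) 1
    simp at this
    simp [this, zm]
  | cons k μ ih =>
    have hk : 0 < k := Nat.pos_of_ne_zero fun h => h0 (by simp [h])
    rw [Fm_cons, pw, pr_up (by simp [rn_one]) (Fm_good μ) (Fm_good ν)]
    rw [show lo (rn 1 0) (k : ℤ) (Fm N ν) = lw k (Fm N ν) from rfl, lw_Fm k hk ν hν, pr_smul_right]
    by_cases hc : k ∈ ν
    · have hs2 := Multiset.sum_erase hc
      rw [Multiset.sum_cons] at hs
      rw [ih (fun h => h0 (by simp [h])) (ν.erase k) (fun h => h0' (Multiset.mem_of_mem_erase h))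
        (by omega) (by omega)]
      have : k ::ₘ μ = ν ↔ μ = ν.erase k := by
        constructor
        · rintro rfl; simp
        · rintro rfl; exact Multiset.cons_erase hc
      by_cases h : μ = ν.erase k
      · have hν' : ν = k ::ₘ μ := (this.2 h).symm
        rw [if_pos h, if_pos (this.2 h), zm_cons, hν', Multiset.count_cons_self]
        push_cast; ring
      · rw [if_neg h, if_neg (fun h' => h (this.1 h')), mul_zero]
    · rw [Multiset.count_eq_zero_of_notMem hc, if_neg]
      · simp
      · rintro rfl; simp at hc

lemma En_one (x : Fin N → ℤ) : En 1 0 x = ∑ i, x i - vac N := by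
  have h : ∀ N : ℕ, (N : ℤ) * (N - 1) / 2 = vac N := by
    intro N
    have h2 : (N : ℤ) * (N - 1) = 2 * vac N := by
      induction N with
      | zero => simp [vac]
      | succ N ih => rw [vac_succ]; push_cast; linarith
    rw [h2]; simp
  simp [En, rn_one, h]

lemma euler_one {F : St N} {d : ℕ} (hF : Good (d : ℤ) F) :
    (d : ℂ) • F = ∑ k ∈ Finset.Icc 1 d, pw k (lw k F) := by
  funext x
  obtain ⟨K, hK, hKd⟩ : ∃ K : ℕ, (∀ i, x i ≤ K) ∧ d ≤ K := by
    refine ⟨(∑ i, (x i).toNat) + d, fun i => ?_, by omega⟩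
    have := Finset.single_le_sum (f := fun i => (x i).toNat) (fun _ _ => Nat.zero_le _)
      (Finset.mem_univ i)
    omega
  have h := euler (m := 1) (r := 0) one_pos hF.anti hF.pos x K hK
  rw [En_one] at h
  have h1 : ((∑ i, x i - vac N : ℤ) : ℂ) * F x = d * F x := by
    by_cases hx : F x = 0
    · simp [hx]
    · rw [hF.hom x hx]; simp
  rw [h1] at h
  rw [Pi.smul_apply, smul_eq_mul, ← h, Finset.sum_apply]
  symm
  simp only [one_mul]
  refine Finset.sum_subset (Finset.Icc_subset_Icc_right hKd) fun k hk hk' => ?_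
  simp at hk hk'
  have : lw k F = 0 := (hF.lw k).eq_zero_of_neg (by have := hk' hk.1; omega)
  change pw k (lw k F) x = 0
  simp [this]

/-- The power sum states span. -/
lemma good_mem_span (d : ℕ) : ∀ F : St N, Good (d : ℤ) F →
    F ∈ Submodule.span ℂ (Fm N '' {μ | 0 ∉ μ ∧ μ.sum = d}) := by
  induction d using Nat.strong_induction_on with
  | _ d ih =>
  intro F hF
  rcases Nat.eq_zero_or_pos d with rfl | hd
  · have hF' : Good 0 F := by simpa using hF
    rw [hF'.eq_F0]
    exact Submodule.smul_mem _ _ (Submodule.subset_span ⟨0, by simp, rfl⟩)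
  · have h1 := euler_one hF
    have h2 : F = (d : ℂ)⁻¹ • ∑ k ∈ Finset.Icc 1 d, pw k (lw k F) := by
      rw [← h1, smul_smul, inv_mul_cancel₀ (by exact_mod_cast hd.ne'), one_smul]
    rw [h2]
    refine Submodule.smul_mem _ _ (Submodule.sum_mem _ fun k hk => ?_)
    simp at hk
    have h3 := ih (d - k) (by omega) (lw k F) (by
      have := hF.lw k
      rwa [← Nat.cast_sub hk.2] at this)
    refine Submodule.span_induction (p := fun G _ => pw k G ∈ _) ?_ ?_ ?_ ?_ h3
    · rintro _ ⟨μ, ⟨h0, hs⟩, rfl⟩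
      rw [← Fm_cons]
      refine Submodule.subset_span ⟨_, ⟨?_, ?_⟩, rfl⟩
      · simp only [Multiset.mem_cons, not_or]
        exact ⟨by omega, h0⟩
      · rw [Multiset.sum_cons, hs]; omega
    · simp
    · intro a b _ _ ha hb
      rw [map_add]; exact Submodule.add_mem _ ha hb
    · intro c a _ ha
      rw [map_smul]; exact Submodule.smul_mem _ _ ha

end

/-! ### Cycle types, and virtual characters from bead positions -/

section typ
variable {n : ℕ}

/-- The multiset of all cycle lengths of a permutation, fixed points included. -/
def typ (g : Equiv.Perm (Fin n)) : Multiset ℕ := g.partition.parts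

lemma typ_sum (g : Equiv.Perm (Fin n)) : (typ g).sum = n := by
  simpa [typ] using g.partition.parts_sum

lemma typ_pos (g : Equiv.Perm (Fin n)) : 0 ∉ typ g := fun h =>
  absurd (g.partition.parts_pos h) (lt_irrefl 0)

lemma typ_eq_iff {g h : Equiv.Perm (Fin n)} : typ g = typ h ↔ IsConj g h := by
  rw [Equiv.Perm.partition_eq_of_isConj, Nat.Partition.ext_iff]; rfl

lemma typ_conj (g h : Equiv.Perm (Fin n)) : typ (h * g * h⁻¹) = typ g :=
  typ_eq_iff.2 (isConj_iff.2 ⟨h, rfl⟩).symm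

lemma typ_surj (μ : Multiset ℕ) (h0 : 0 ∉ μ) (hs : μ.sum = n) :
    ∃ g : Equiv.Perm (Fin n), typ g = μ := by
  have hsplit : μ.filter (fun k => 2 ≤ k) + μ.filter (fun k => ¬ 2 ≤ k) = μ :=
    Multiset.filter_add_not _ _
  have hone : μ.filter (fun k => ¬ 2 ≤ k) =
      Multiset.replicate (μ.filter (fun k => ¬ 2 ≤ k)).card 1 := by
    rw [Multiset.eq_replicate]
    refine ⟨rfl, fun b hb => ?_⟩
    rw [Multiset.mem_filter] at hb
    have : b ≠ 0 := by rintro rfl; exact h0 hb.1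
    omega
  have hsum : (μ.filter (fun k => 2 ≤ k)).sum + (μ.filter (fun k => ¬ 2 ≤ k)).card = n := by
    have h1 := congrArg Multiset.sum hsplit
    rw [Multiset.sum_add, hs] at h1
    have h2 := congrArg Multiset.sum hone
    rw [Multiset.sum_replicate, smul_eq_mul, mul_one] at h2
    rw [← h2]
    exact h1
  obtain ⟨g, hg⟩ := (Equiv.Perm.exists_with_cycleType_iff (α := Fin n)
    (m := μ.filter (fun k => 2 ≤ k))).2 ⟨by rw [Fintype.card_fin]; omega,
      fun a ha => (Multiset.mem_filter.1 ha).2⟩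
  refine ⟨g, ?_⟩
  rw [typ, Equiv.Perm.parts_partition, hg, ← Equiv.Perm.sum_cycleType, hg, Fintype.card_fin]
  conv_rhs => rw [← hsplit, hone]
  congr 2
  omega

lemma zm_typ (g : Equiv.Perm (Fin n)) :
    zm (typ g) = Nat.card (Subgroup.centralizer {g}) := by
  rw [Equiv.Perm.nat_card_centralizer, typ, Equiv.Perm.parts_partition, ← Equiv.Perm.sum_cycleType]
  have h1 : 1 ∉ g.cycleType := fun h => absurd (Equiv.Perm.two_le_of_mem_cycleType h) (by norm_num)
  have key : ∀ (μ : Multiset ℕ) (h : 1 ∉ μ) (a : ℕ), zm (μ + Multiset.replicate a 1) =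
      a.factorial * μ.prod * ∏ k ∈ μ.toFinset, (μ.count k).factorial := by
    intro μ h a
    induction a with
    | zero => simp [zm]
    | succ a ih =>
      rw [Multiset.replicate_succ, Multiset.add_cons, zm_cons, ih, Multiset.count_add,
        Multiset.count_eq_zero_of_notMem h, Multiset.count_replicate_self, Nat.factorial_succ]
      ring
  exact key _ h1 _

lemma card_class (g : Equiv.Perm (Fin n)) :
    (Finset.univ.filter fun h : Equiv.Perm (Fin n) => IsConj g h).card * zm (typ g)
      = n.factorial := by
  have h := Equiv.Perm.card_isConj_mul_eq g
  rw [← Equiv.Perm.nat_card_centralizer, ← zm_typ, Fintype.card_fin] at h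
  rw [← h, Nat.card_eq_fintype_card, Fintype.card_subtype]
  rfl

/-- The orbits of a permutation. -/
abbrev Orb (g : Equiv.Perm (Fin n)) : Type := Quotient (Equiv.Perm.SameCycle.setoid g)

/-- The length of an orbit. -/
def olen (g : Equiv.Perm (Fin n)) (o : Orb g) : ℕ :=
  (Finset.univ.filter fun a : Fin n => (Quotient.mk _ a : Orb g) = o).card

lemma mk_eq_iff (g : Equiv.Perm (Fin n)) (a b : Fin n) :
    (Quotient.mk _ a : Orb g) = Quotient.mk _ b ↔ g.SameCycle a b := Quotient.eq

lemma sum_olen (g : Equiv.Perm (Fin n)) : ∑ o, olen g o = n := by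
  have := Finset.card_eq_sum_card_fiberwise (s := Finset.univ) (t := Finset.univ)
    (f := fun a : Fin n => (Quotient.mk _ a : Orb g)) (by intro x _; simp)
  simp at this
  exact this.symm

lemma support_cycleOf_mk (g : Equiv.Perm (Fin n)) (a : Fin n) (ha : g a ≠ a) :
    (g.cycleOf a).support.card = olen g (Quotient.mk _ a) := by
  rw [olen]
  congr 1
  ext b
  rw [Equiv.Perm.mem_support_cycleOf_iff' ha, Finset.mem_filter, mk_eq_iff]
  simp [Equiv.Perm.sameCycle_comm]

lemma olen_fixed (g : Equiv.Perm (Fin n)) (a : Fin n) (ha : g a = a) :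
    olen g (Quotient.mk _ a) = 1 := by
  rw [olen, Finset.card_eq_one]
  refine ⟨a, ?_⟩
  ext b
  simp only [mk_eq_iff, Finset.mem_filter, Finset.mem_univ, true_and, Finset.mem_singleton]
  constructor
  · intro h
    have := (Equiv.Perm.SameCycle.eq_of_right h ha)
    exact this
  · rintro rfl; exact Equiv.Perm.SameCycle.refl _ _

lemma typ_eq_orb (g : Equiv.Perm (Fin n)) : typ g = Finset.univ.val.map (olen g) := by
  let P : Orb g → Prop := fun o => g o.out ≠ o.out
  have hsplit := Multiset.filter_add_not P (Finset.univ : Finset (Orb g)).val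
  have hout : ∀ o : Orb g, (Quotient.mk _ o.out : Orb g) = o := fun o => Quotient.out_eq o
  have h1 : ((Finset.univ : Finset (Orb g)).val.filter P).map (olen g) = g.cycleType := by
    rw [Equiv.Perm.cycleType_def]
    refine Multiset.map_eq_map_of_bij_of_nodup _ _ (Multiset.Nodup.filter _ Finset.univ.nodup)
      g.cycleFactorsFinset.nodup (fun o _ => g.cycleOf o.out) ?_ ?_ ?_ ?_
    · intro o ho
      have ho' := (Multiset.mem_filter.1 ho).2
      change _ ∈ g.cycleFactorsFinset
      rw [Equiv.Perm.cycleOf_mem_cycleFactorsFinset_iff, Equiv.Perm.mem_support]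
      exact ho'
    · intro o ho o' ho' h
      have ha := (Multiset.mem_filter.1 ho).2
      have ha' := (Multiset.mem_filter.1 ho').2
      rw [← hout o, ← hout o', mk_eq_iff]
      have : o'.out ∈ (g.cycleOf o.out).support := by
        rw [h, Equiv.Perm.mem_support_cycleOf_iff' ha']
      rwa [Equiv.Perm.mem_support_cycleOf_iff' ha] at this
    · intro c hc
      have hc' : c ∈ g.cycleFactorsFinset := hc
      have hcyc := (Equiv.Perm.mem_cycleFactorsFinset_iff.1 hc').1
      obtain ⟨a, ha⟩ := hcyc.nonempty_support
      have hca := Equiv.Perm.cycle_is_cycleOf ha hc'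
      have hga : g a ≠ a := Equiv.Perm.mem_support.1
        (Equiv.Perm.mem_cycleFactorsFinset_support_le hc' ha)
      have hsc : g.SameCycle (Quotient.mk _ a : Orb g).out a := by
        rw [← mk_eq_iff, hout]
      have hne : g (Quotient.mk _ a : Orb g).out ≠ (Quotient.mk _ a : Orb g).out := by
        intro h; exact hga ((hsc.apply_eq_self_iff).1 h)
      refine ⟨Quotient.mk _ a, Multiset.mem_filter.2 ⟨Finset.mem_univ_val _, hne⟩, ?_⟩
      rw [hca]
      exact hsc.symm.cycleOf_eq.symm
    · intro o ho
      have ho' := (Multiset.mem_filter.1 ho).2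
      simp only [Function.comp_apply]
      rw [support_cycleOf_mk g _ ho', hout]
  have h2 : ((Finset.univ : Finset (Orb g)).val.filter fun o => ¬ P o).map (olen g) =
      Multiset.replicate ((Finset.univ : Finset (Orb g)).val.filter fun o => ¬ P o).card 1 := by
    rw [Multiset.eq_replicate]
    refine ⟨by simp, fun b hb => ?_⟩
    obtain ⟨o, ho, rfl⟩ := Multiset.mem_map.1 hb
    have := (Multiset.mem_filter.1 ho).2
    simp only [P, not_not] at this
    rw [← hout o]
    exact olen_fixed g _ this
  have h3 : (Finset.univ.val.map (olen g)) = g.cycleType +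
      Multiset.replicate ((Finset.univ : Finset (Orb g)).val.filter fun o => ¬ P o).card 1 := by
    rw [← h1, ← h2, ← Multiset.map_add, hsplit]
  have h4 := congrArg Multiset.sum h3
  have h5 : (Finset.univ.val.map (olen g)).sum = n := sum_olen g
  rw [h5, Multiset.sum_add, Multiset.sum_replicate, smul_eq_mul, mul_one,
    Equiv.Perm.sum_cycleType] at h4
  rw [h3, typ, Equiv.Perm.parts_partition, Fintype.card_fin]
  congr 2
  omega

end typ

section chi
variable {N n : ℕ}

lemma Fm_ofFn : ∀ (m : ℕ) (w : Fin m → ℕ) (x : Fin N → ℤ),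
    Fm N (List.ofFn w : List ℕ) x =
      ∑ c : Fin m → Fin N, F0 N (x - ∑ i, Pi.single (c i) (w i : ℤ)) := by
  intro m
  induction m with
  | zero => intro w x; simp
  | succ m ih =>
    intro w x
    rw [List.ofFn_succ, ← Multiset.cons_coe, Fm_cons, pw_apply]
    simp only [ih]
    rw [← Fintype.sum_prod_type']
    refine Fintype.sum_equiv (Fin.consEquiv fun _ => Fin N) _ _ ?_
    rintro ⟨i, c⟩
    simp [Fin.sum_univ_succ, Fin.consEquiv, sub_sub]

lemma Fm_map {ι : Type} [Fintype ι] [DecidableEq ι] (w : ι → ℕ) (x : Fin N → ℤ) :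
    Fm N (Finset.univ.val.map w) x =
      ∑ c : ι → Fin N, F0 N (x - ∑ i, Pi.single (c i) (w i : ℤ)) := by
  let e := Fintype.equivFin ι
  have h : Finset.univ.val.map w = (List.ofFn (w ∘ e.symm) : List ℕ) := by
    rw [← Fin.univ_val_map, ← Multiset.map_map]
    congr 1
    have := Finset.map_univ_equiv e.symm
    rw [← this]
    rfl
  rw [h, Fm_ofFn]
  refine Fintype.sum_equiv (Equiv.arrowCongr e.symm (Equiv.refl _)) _ _ fun c => ?_
  congr 2
  refine Fintype.sum_equiv e.symm _ _ fun i => ?_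
  simp [Equiv.arrowCongr]

/-- The virtual character attached to the configuration `x`. -/
def chi (x : Fin N → ℤ) : Equiv.Perm (Fin n) → ℂ := fun g => Fm N (typ g) x

/-- The content of a colouring. -/
def cont (c : Fin n → Fin N) : Fin N → ℤ := ∑ a, Pi.single (c a) 1

lemma chi_eq_sum (x : Fin N → ℤ) (g : Equiv.Perm (Fin n)) :
    chi x g = ∑ c : Fin n → Fin N, if c ∘ g = c then F0 N (x - cont c) else 0 := by
  rw [chi, typ_eq_orb, Fm_map, ← Finset.sum_filter]
  have hinv : ∀ c : Fin n → Fin N, c ∘ g = c → ∀ a b, g.SameCycle a b → c a = c b := by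
    intro c hc a b hab
    obtain ⟨k, rfl⟩ := Equiv.Perm.SameCycle.exists_pow_eq' hab |>.imp fun k h => h.2
    induction k with
    | zero => simp
    | succ k ih =>
      rw [pow_succ', Equiv.Perm.mul_apply]
      have h2 := congrFun hc ((g ^ k) a)
      simp only [Function.comp_apply] at h2
      rw [h2]
      exact ih ⟨k, by simp⟩
  refine Finset.sum_bij (fun (c : Orb g → Fin N) _ => fun a => c (Quotient.mk _ a)) ?_ ?_ ?_ ?_
  · intro c _
    simp only [Finset.mem_filter, Finset.mem_univ, true_and]
    funext a
    simp only [Function.comp_apply]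
    congr 1
    rw [mk_eq_iff]
    exact (Equiv.Perm.SameCycle.refl g a).apply_left
  · intro c _ c' _ h
    funext o
    induction o using Quotient.inductionOn with
    | _ a => exact congrFun h a
  · intro c hc
    have hc' := (Finset.mem_filter.1 hc).2
    refine ⟨Quotient.lift c fun a b h => hinv c hc' a b h, Finset.mem_univ _, ?_⟩
    rfl
  · intro c _
    congr 2
    rw [cont, ← Finset.sum_fiberwise (s := Finset.univ)
      (g := fun a : Fin n => (Quotient.mk _ a : Orb g))]
    refine Finset.sum_congr rfl fun o _ => ?_
    rw [Finset.sum_congr rfl (g := fun _ => Pi.single (c o) (1 : ℤ))]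
    · rw [Finset.sum_const, olen, ← Pi.single_smul]
      simp
    · intro a ha
      rw [(Finset.mem_filter.1 ha).2]

lemma cont_comp (c : Fin n → Fin N) (g : Equiv.Perm (Fin n)) : cont (c ∘ g) = cont c :=
  Equiv.sum_comp g fun a => (Pi.single (c a) 1 : Fin N → ℤ)

/-- `chi x` is an alternating sum of permutation characters on words of given content. -/
lemma chi_mem_vc (x : Fin N → ℤ) : chi x ∈ VC (Equiv.Perm (Fin n)) := by
  have h : chi x = ∑ π : Equiv.Perm (Fin N), (Equiv.Perm.sign π : ℤ) •
      fun g : Equiv.Perm (Fin n) =>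
        ((Finset.univ.filter fun c : {c : Fin n → Fin N // x - cont c = dl N ∘ π} =>
          c.1 ∘ ⇑(g⁻¹ : Equiv.Perm (Fin n)) = c.1).card : ℂ) := by
    funext g
    rw [chi_eq_sum]
    simp only [F0, st]
    simp only [Finset.sum_apply, Pi.smul_apply, zsmul_eq_mul]
    have : ∀ c : Fin n → Fin N, (if c ∘ g = c then ∑ π : Equiv.Perm (Fin N),
        (if x - cont c = dl N ∘ π then ((Equiv.Perm.sign π : ℤ) : ℂ) else 0) else 0) =
        ∑ π : Equiv.Perm (Fin N), ((Equiv.Perm.sign π : ℤ) : ℂ) *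
          (if x - cont c = dl N ∘ π ∧ c ∘ g = c then 1 else 0) := by
      intro c
      by_cases hc : c ∘ g = c <;> simp [hc]
    simp only [this]
    rw [Finset.sum_comm]
    refine Finset.sum_congr rfl fun π _ => ?_
    rw [← Finset.mul_sum]
    congr 1
    rw [Finset.sum_boole]
    congr 1
    symm
    refine Finset.card_bij (fun c _ => c.1) ?_ ?_ ?_
    · intro c hc
      simp only [Finset.mem_filter, Finset.mem_univ, true_and] at hc ⊢
      refine ⟨c.2, ?_⟩
      funext a
      have := congrFun hc (g a)
      simpa using this.symm
    · intro c _ c' _ h; exact Subtype.ext h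
    · intro c hc
      simp only [Finset.mem_filter, Finset.mem_univ, true_and] at hc
      refine ⟨⟨c, hc.1⟩, ?_, rfl⟩
      simp only [Finset.mem_filter, Finset.mem_univ, true_and]
      funext a
      have := congrFun hc.2 (g⁻¹ a)
      simpa using this.symm
  rw [h]
  refine Submodule.sum_mem _ fun π _ => Submodule.smul_mem _ _ (chr_mem_vc ?_)
  let φ : Equiv.Perm (Fin n) →* Equiv.Perm {c : Fin n → Fin N // x - cont c = dl N ∘ π} :=
    { toFun := fun g =>
        { toFun := fun c => ⟨c.1 ∘ ⇑(g⁻¹ : Equiv.Perm (Fin n)), by rw [cont_comp]; exact c.2⟩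
          invFun := fun c => ⟨c.1 ∘ g, by rw [cont_comp]; exact c.2⟩
          left_inv := fun c => Subtype.ext (by funext a; simp)
          right_inv := fun c => Subtype.ext (by funext a; simp) }
      map_one' := by ext c a; simp
      map_mul' := fun g h => by ext c a; simp }
  have := Chr.of_action φ
  convert this using 4 with g
  ext c
  simp only [Finset.mem_filter, Finset.mem_univ, true_and, Subtype.ext_iff]
  rfl

end chi

/-! ### The irreducible characters of the symmetric group -/

section irr
variable {N n : ℕ}

/-- Bead configurations: `N` beads at distinct nonnegative positions, of degree `n`. -/
structure Cf (n : ℕ) (x : Fin N → ℤ) : Prop where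
  inj : Function.Injective x
  nonneg : ∀ i, 0 ≤ x i
  sum : ∑ i, x i = vac N + n

lemma Cf.good {x : Fin N → ℤ} (h : Cf n x) : Good (n : ℤ) (st x) := st_good h.nonneg h.sum

lemma Good.cf {F : St N} (hF : Good (n : ℤ) F) {x : Fin N → ℤ} (hx : F x ≠ 0) : Cf n x :=
  ⟨hF.anti.injective hx, fun i => (hF.le_of_ne hx i).1, hF.hom x hx⟩

/-- Integer valued states. -/
def IntV (F : St N) : Prop := ∀ x, ∃ z : ℤ, F x = z

lemma IntV.sum {ι : Type*} (s : Finset ι) (F : ι → ℂ) (h : ∀ i ∈ s, ∃ z : ℤ, F i = z) :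
    ∃ z : ℤ, ∑ i ∈ s, F i = z := by
  choose! f hf using h
  exact ⟨∑ i ∈ s, f i, by rw [Finset.sum_congr rfl hf]; push_cast; rfl⟩

lemma st_int (y : Fin N → ℤ) : IntV (st y) := fun x =>
  IntV.sum _ _ fun π _ => by
    split_ifs
    · exact ⟨_, rfl⟩
    · exact ⟨0, by simp⟩

lemma IntV.up {F : St N} (h : IntV F) (R : ℤ → Prop) (s : ℤ) : IntV (up R s F) := fun x => by
  rw [up_apply]
  refine IntV.sum _ _ fun i _ => ?_
  split_ifs
  · exact h _
  · exact ⟨0, by simp⟩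

lemma Fm_int (μ : Multiset ℕ) : IntV (Fm N μ) := by
  induction μ using Multiset.induction_on with
  | empty => rw [Fm_zero]; exact st_int _
  | cons k μ ih => rw [Fm_cons]; exact ih.up _ _

lemma chi_int (x : Fin N → ℤ) (g : Equiv.Perm (Fin n)) : ∃ z : ℤ, chi x g = z := Fm_int _ _

lemma chi_conj (x : Fin N → ℤ) (g : Equiv.Perm (Fin n)) :
    (starRingEnd ℂ) (chi x g) = chi x g := by
  obtain ⟨z, hz⟩ := chi_int x g
  rw [hz]; simp

lemma Fm_typ_good (g : Equiv.Perm (Fin n)) : Good (n : ℤ) (Fm N (typ g)) := by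
  have := Fm_good (N := N) (typ g)
  rwa [typ_sum] at this

/-- The class function attached to a state. -/
def cf (n : ℕ) (F : St N) (g : Equiv.Perm (Fin n)) : ℂ :=
  (N.factorial : ℂ)⁻¹ * pr F (Fm N (typ g))

lemma cf_st (x : Fin N → ℤ) (g : Equiv.Perm (Fin n)) : cf n (st x) g = chi x g := by
  rw [cf, pr_st _ (Fm_typ_good g).anti, ← mul_assoc, inv_mul_cancel₀, one_mul]
  · rfl
  · exact_mod_cast N.factorial_ne_zero

lemma cf_add {F G : St N} (hF : Good (n : ℤ) F) (hG : Good (n : ℤ) G) :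
    cf n (F + G) = cf n F + cf n G := by
  funext g
  rw [cf, pr_add _ hF.finite hG.finite]
  simp [cf, mul_add]

lemma cf_smul (c : ℂ) (F : St N) : cf n (c • F) = c • cf n F := by
  funext g
  simp only [cf, pr_smul, Pi.smul_apply, smul_eq_mul]; ring

lemma sum_class (hnN : n ≤ N) (φ : Equiv.Perm (Fin n) → ℂ) (hφ : ∀ g h, IsConj g h → φ g = φ h)
    (g0 : Equiv.Perm (Fin n)) :
    ∑ g, φ g * pr (Fm N (typ g)) (Fm N (typ g0)) = n.factorial * N.factorial * φ g0 := by
  have h1 : ∀ g, φ g * pr (Fm N (typ g)) (Fm N (typ g0)) =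
      if IsConj g0 g then φ g0 * ((N.factorial : ℂ) * zm (typ g0)) else 0 := by
    intro g
    rw [pr_Fm _ (typ_pos g) _ (typ_pos g0) (by rw [typ_sum]; exact hnN) (by simp [typ_sum])]
    by_cases h : IsConj g0 g
    · rw [if_pos h, hφ _ _ h, if_pos (typ_eq_iff.2 h.symm), typ_eq_iff.2 h]
    · rw [if_neg h, if_neg (fun h' => h (typ_eq_iff.1 h').symm), mul_zero]
  simp only [h1]
  rw [← Finset.sum_filter, Finset.sum_const, nsmul_eq_mul, ← card_class g0]
  push_cast; ring

/-- Fourier expansion of a state in the power sum states. -/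
lemma expand (hnN : n ≤ N) {F : St N} (hF : Good (n : ℤ) F) :
    F = (n.factorial : ℂ)⁻¹ • ∑ g : Equiv.Perm (Fin n), cf n F g • Fm N (typ g) := by
  have hn0 : (n.factorial : ℂ) ≠ 0 := by exact_mod_cast n.factorial_ne_zero
  have hN0 : (N.factorial : ℂ) ≠ 0 := by exact_mod_cast N.factorial_ne_zero
  have h := good_mem_span n F hF
  suffices Good (n : ℤ) F ∧
    F = (n.factorial : ℂ)⁻¹ • ∑ g : Equiv.Perm (Fin n), cf n F g • Fm N (typ g) from this.2
  clear hF
  induction h using Submodule.span_induction with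
  | mem F hF =>
    obtain ⟨μ, ⟨h0, hs⟩, rfl⟩ := hF
    obtain ⟨g0, rfl⟩ := typ_surj μ h0 hs
    refine ⟨Fm_typ_good g0, ?_⟩
    funext x
    simp only [Pi.smul_apply, Finset.sum_apply, smul_eq_mul, cf]
    rw [eq_inv_mul_iff_mul_eq₀ hn0]
    have := sum_class hnN (fun g => Fm N (typ g) x) (fun g h hgh => by rw [typ_eq_iff.2 hgh]) g0
    apply mul_left_cancel₀ hN0
    rw [← mul_assoc, mul_comm (N.factorial : ℂ), ← this, Finset.mul_sum]
    refine Finset.sum_congr rfl fun g _ => ?_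
    rw [pr_comm]
    field_simp
  | zero => exact ⟨Good.zero, by simp [cf, pr_zero]⟩
  | add F G _ _ h1 h2 =>
    refine ⟨h1.1.add h2.1, ?_⟩
    rw [cf_add h1.1 h2.1]
    simp only [Pi.add_apply, add_smul, Finset.sum_add_distrib, smul_add]
    rw [← h1.2, ← h2.2]
  | smul c F _ h1 =>
    refine ⟨h1.1.smul c, ?_⟩
    rw [cf_smul]
    simp only [Pi.smul_apply, smul_assoc, ← Finset.smul_sum]
    rw [smul_comm, ← h1.2]

lemma ip_chi (hnN : n ≤ N) {x y : Fin N → ℤ} (hy : Cf n y) :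
    ip (chi (n := n) x) (chi y) = st y x := by
  have := congrFun (expand hnN hy.good) x
  rw [this]
  simp only [Pi.smul_apply, Finset.sum_apply, smul_eq_mul, cf_st, ip, chi_conj, Fintype.card_perm,
    Fintype.card_fin]
  congr 1
  exact Finset.sum_congr rfl fun g _ => mul_comm _ _

lemma chi_irr (hnN : n ≤ N) {x : Fin N → ℤ} (hx : Cf n x) :
    chi (n := n) x ∈ IrrChar _ ∨ - chi (n := n) x ∈ IrrChar _ := by
  refine vc_norm_one (chi_mem_vc x) ?_
  rw [ip_chi hnN hx]
  simpa using st_self hx.inj 1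

lemma eq_zero_of_chi (hnN : n ≤ N) (φ : Equiv.Perm (Fin n) → ℂ)
    (hφ : ∀ g h, IsConj g h → φ g = φ h) (h : ∀ x : Fin N → ℤ, Cf n x → ∑ g, φ g * chi x g = 0) :
    φ = 0 := by
  have h0 : ∑ g, φ g • Fm N (typ g) = 0 := by
    funext x
    by_cases hx : Cf n x
    · simpa [chi] using h x hx
    · simp only [Finset.sum_apply, Pi.smul_apply, Pi.zero_apply]
      refine Finset.sum_eq_zero fun g _ => ?_
      by_contra hne
      exact hx ((Fm_typ_good g).cf (right_ne_zero_of_mul hne))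
  funext g0
  have h1 := sum_class hnN φ hφ g0
  have h2 : pr (∑ g, φ g • Fm N (typ g)) (Fm N (typ g0)) = 0 := by rw [h0, pr_zero]
  rw [pr_sum _ _ _ fun g _ => ((Fm_typ_good g).smul _).finite] at h2
  simp only [pr_smul] at h2
  rw [h2] at h1
  have hn0 : (n.factorial : ℂ) ≠ 0 := by exact_mod_cast n.factorial_ne_zero
  have hN0 : (N.factorial : ℂ) ≠ 0 := by exact_mod_cast N.factorial_ne_zero
  simpa [hn0, hN0] using h1.symm

lemma Chr.isConj {G : Type} [Group G] [Fintype G] {χ : G → ℂ} (h : χ ∈ Chr G) {a b : G} (hab : IsConj a b) :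
    χ a = χ b := by
  obtain ⟨c, rfl⟩ := isConj_iff.1 hab
  exact (Chr.conj h c a).symm

lemma irr_sym_iff (hnN : n ≤ N) {ψ : Equiv.Perm (Fin n) → ℂ} (hψ : ψ ∈ IrrChar _) :
    ∃ x : Fin N → ℤ, Cf n x ∧ (ψ = chi x ∨ ψ = - chi x) := by
  by_contra hcon
  push Not at hcon
  have : ψ = 0 := by
    refine eq_zero_of_chi hnN ψ (fun g h hgh => Chr.isConj (IrrChar.subset_chr hψ) hgh) ?_
    intro x hx
    have h1 := hcon x hx
    have h2 : ip ψ (chi x) = 0 := by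
      rcases chi_irr hnN hx with h | h
      · rw [irr_orth hψ h, if_neg h1.1]
      · have := irr_orth hψ h
        rw [if_neg h1.2, ip_neg_right, neg_eq_zero] at this
        exact this
    have hc : ((Fintype.card (Equiv.Perm (Fin n)) : ℂ))⁻¹ ≠ 0 :=
      inv_ne_zero (by exact_mod_cast Fintype.card_ne_zero)
    simp only [ip, chi_conj] at h2
    exact (mul_eq_zero.1 h2).resolve_left hc
  have h1 := (irr_iff.1 hψ).2
  rw [this] at h1
  simp at h1

lemma irr_sym_int {ψ : Equiv.Perm (Fin n) → ℂ} (hψ : ψ ∈ IrrChar _) (g : Equiv.Perm (Fin n)) :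
    ∃ z : ℤ, ψ g = z := by
  obtain ⟨x, -, h | h⟩ := irr_sym_iff (N := n) le_rfl hψ
  · rw [h]; exact chi_int x g
  · obtain ⟨z, hz⟩ := chi_int x g
    exact ⟨-z, by simp [h, hz]⟩

end irr

/-! ### Multiplication by the sign character -/

section sign
variable {N n : ℕ}

/-- The Hodge pairing kernel: the ground state with `N + N` beads, evaluated at `x` together with
the reflection of `y`. -/
def hk (N : ℕ) (y x : Fin N → ℤ) : ℂ :=
  F0 (N + N) (Fin.append x fun i => 2 * (N : ℤ) - 1 - y i)

lemma F0_int_perm (M : ℕ) {z : Fin M → ℤ} (h : F0 M z ≠ 0) : ∃ π : Equiv.Perm (Fin M), z = dl M ∘ π :=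
  st_ne_zero h

lemma append_comp {M : ℕ} (x : Fin N → ℤ) (y : Fin M → ℤ) (σ : Equiv.Perm (Fin N)) (τ : Equiv.Perm (Fin M)) :
    Fin.append (x ∘ σ) (y ∘ τ) =
      Fin.append x y ∘ (finSumFinEquiv.permCongr (Equiv.Perm.sumCongr σ τ)) := by
  funext i
  induction i using Fin.addCases <;> simp [Equiv.permCongr_apply]

lemma sign_append {M : ℕ} (σ : Equiv.Perm (Fin N)) (τ : Equiv.Perm (Fin M)) :
    Equiv.Perm.sign (finSumFinEquiv.permCongr (Equiv.Perm.sumCongr σ τ)) =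
      Equiv.Perm.sign σ * Equiv.Perm.sign τ := by
  rw [Equiv.Perm.sign_permCongr, Equiv.Perm.sign_sumCongr]

lemma hk_anti (y : Fin N → ℤ) : Anti (hk N y) := by
  intro π x
  have := append_comp x (fun i => 2 * (N : ℤ) - 1 - y i) π 1
  simp only [Equiv.Perm.coe_one, Function.comp_id] at this
  rw [hk, this, F0_good.anti, sign_append]
  simp [hk]

lemma hk_anti_left (y x : Fin N → ℤ) (π : Equiv.Perm (Fin N)) :
    hk N (y ∘ π) x = ((Equiv.Perm.sign π : ℤ) : ℂ) * hk N y x := by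
  have := append_comp x (fun i => 2 * (N : ℤ) - 1 - y i) 1 π
  simp only [Equiv.Perm.coe_one, Function.comp_id] at this
  rw [hk]
  change F0 (N + N) (Fin.append x ((fun i => 2 * (N : ℤ) - 1 - y i) ∘ π)) = _
  rw [this, F0_good.anti, sign_append]
  simp [hk]

lemma vac_two (N : ℕ) : vac (N + N) = N * (2 * N - 1) := by
  induction N with
  | zero => simp [vac]
  | succ N ih =>
    have : N + 1 + (N + 1) = (N + N) + 1 + 1 := by ring
    rw [this, vac_succ, vac_succ, ih]; push_cast; ring

lemma hk_bounds {y x : Fin N → ℤ} (h : hk N y x ≠ 0) :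
    (∀ i, 0 ≤ x i) ∧ (∀ i, 0 ≤ y i ∧ y i < 2 * N) ∧ ∑ i, x i = ∑ i, y i := by
  have hb := fun i => F0_good.le_of_ne h i
  have hs := F0_good.hom _ h
  refine ⟨fun i => by simpa using (hb (Fin.castAdd N i)).1, fun i => ?_, ?_⟩
  · have := hb (Fin.natAdd N i)
    simp only [Fin.append_right] at this
    push_cast at this
    constructor <;> linarith
  · rw [Fin.sum_univ_add] at hs
    simp only [Fin.append_left, Fin.append_right, Finset.sum_sub_distrib, Finset.sum_const,
      Finset.card_univ, Fintype.card_fin, vac_two, nsmul_eq_mul] at hs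
    linarith

lemma hk_good (y : Fin N → ℤ) : Good (∑ i, y i - vac N) (hk N y) := by
  refine ⟨hk_anti y, fun x i hi => ?_, fun x hx => ?_⟩
  · by_contra h
    exact absurd ((hk_bounds h).1 i) (not_le.2 hi)
  · rw [(hk_bounds hx).2.2]; ring

/-- The Hodge star. -/
def hs (F : St N) : St N := fun y => pr F (hk N y)

lemma hs_good {F : St N} {d : ℤ} (hF : Good d F) : Good d (hs F) := by
  have key : ∀ y, hs F y ≠ 0 → ∃ x, F x ≠ 0 ∧ hk N y x ≠ 0 := by
    intro y hy
    by_contra hcon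
    push Not at hcon
    apply hy
    rw [hs, pr]
    rw [finsum_eq_zero_of_forall_eq_zero]
    intro x
    by_cases hx : F x = 0
    · simp [hx]
    · simp [hcon x hx]
  refine ⟨fun π y => ?_, fun y i hi => ?_, fun y hy => ?_⟩
  · rw [hs, hs, ← pr_smul_right]
    congr 1
    funext x
    exact hk_anti_left y x π
  · by_contra h
    obtain ⟨x, -, hx⟩ := key y h
    exact absurd ((hk_bounds hx).2.1 i).1 (not_le.2 hi)
  · obtain ⟨x, h1, hx⟩ := key y hy
    rw [← (hk_bounds hx).2.2, hF.hom x h1]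

lemma lw_hk {k : ℕ} (hk0 : 0 < k) {y : Fin N → ℤ} (hy : ∀ i, y i < 2 * N) :
    lw k (hk N y) = - ∑ j, hk N (y - Pi.single j (k : ℤ)) := by
  funext x
  have h0 : lw k (F0 (N + N)) = 0 := (F0_good.lw k).eq_zero_of_neg (by omega)
  have h1 := congrFun h0 (Fin.append x fun i => 2 * (N : ℤ) - 1 - y i)
  rw [lw, lo_apply, Fin.sum_univ_add] at h1
  simp only [rn_one, true_and, Fin.append_left, Fin.append_right, Pi.zero_apply] at h1
  have e1 : ∀ i, Fin.append x (fun i => 2 * (N : ℤ) - 1 - y i) + Pi.single (Fin.castAdd N i) (k : ℤ)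
      = Fin.append (x + Pi.single i (k : ℤ)) fun i => 2 * (N : ℤ) - 1 - y i := by
    intro i
    funext j
    induction j using Fin.addCases with
    | left j => simp [Pi.single_apply]
    | right j =>
      simp only [Pi.add_apply, Fin.append_right, Pi.single_apply, add_eq_left, ite_eq_right_iff]
      intro h
      simp [Fin.ext_iff] at h
      omega
  have e2 : ∀ i, Fin.append x (fun i => 2 * (N : ℤ) - 1 - y i) + Pi.single (Fin.natAdd N i) (k : ℤ)
      = Fin.append x fun j => 2 * (N : ℤ) - 1 - (y - Pi.single i (k : ℤ) : Fin N → ℤ) j := by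
    intro i
    funext j
    induction j using Fin.addCases with
    | left j =>
      simp only [Pi.add_apply, Fin.append_left, Pi.single_apply, add_eq_left, ite_eq_right_iff]
      intro h
      simp [Fin.ext_iff] at h
      omega
    | right j =>
      simp only [Pi.add_apply, Fin.append_right, Pi.single_apply, Pi.sub_apply, Fin.natAdd_inj]
      ring
  simp only [e1, e2] at h1
  rw [lw, lo_apply]
  simp only [rn_one, true_and, Pi.neg_apply, Finset.sum_apply]
  rw [← add_eq_zero_iff_eq_neg]
  refine Eq.trans ?_ h1
  congr 1
  refine Finset.sum_congr rfl fun j _ => ?_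
  rw [if_pos (by have := hy j; omega)]
  rfl

/-- The Hodge star anticommutes with the power sums, because their adjoints annihilate the ground
state `F0` of `N + N` beads. -/
lemma hs_pw {F : St N} {d k : ℕ} (hF : Good (d : ℤ) F) (hk0 : 0 < k) (hd : d + k ≤ N) :
    hs (pw k F) = - pw k (hs F) := by
  funext y
  by_cases hy : ∀ i, y i < 2 * N
  · change pr (up (rn 1 0) k F) (hk N y) = _
    rw [pr_up (fun u => by simp [rn_one]) hF (hk_good y)]
    change pr F (lw k (hk N y)) = _
    rw [lw_hk hk0 hy, pr_comm, ← neg_one_smul ℂ, pr_smul, pr_sum _ _ _ fun j _ => (hk_good _).finite,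
      Pi.neg_apply, pw, up_apply, neg_one_mul]
    congr 1
    refine Finset.sum_congr rfl fun j _ => ?_
    rw [if_pos (rn_one _), pr_comm]; rfl
  · have h1 : hs (pw k F) y = 0 := by
      by_contra h
      refine hy fun i => ?_
      have := ((hs_good (hF.pw k)).le_of_ne h i).2
      omega
    have h2 : pw k (hs F) y = 0 := by
      by_contra h
      refine hy fun i => ?_
      have := (((hs_good hF).pw k).le_of_ne h i).2
      omega
    simp [h1, h2]

lemma hs_Fm (μ : Multiset ℕ) (h0 : 0 ∉ μ) (hμ : μ.sum ≤ N) :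
    hs (Fm N μ) = ((-1) ^ Multiset.card μ * hs (F0 N) (dl N)) • Fm N μ := by
  induction μ using Multiset.induction_on with
  | empty => simpa [Fm_zero] using (hs_good F0_good).eq_F0
  | cons k μ ih =>
    simp only [Multiset.mem_cons, not_or, Multiset.sum_cons] at h0 hμ
    rw [Fm_cons, hs_pw (Fm_good μ) (by omega) (by omega), ih h0.2 (by omega), map_smul,
      Multiset.card_cons, pow_succ, ← neg_smul]
    congr 1; ring

/-- There is a configuration complementary to the reflection of `y`. -/
lemma exists_dual {y : Fin N → ℤ} (hinj : Function.Injective y) (hb : ∀ i, 0 ≤ y i ∧ y i < 2 * N) :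
    ∃ x : Fin N → ℤ, Function.Injective x ∧
      ∀ u : ℤ, (∃ i, x i = u) ↔ (0 ≤ u ∧ u < 2 * N) ∧ ¬ ∃ j, y j = 2 * N - 1 - u := by
  let S : Finset ℤ := Finset.Ico 0 (2 * (N : ℤ)) \ (Finset.univ.image fun j => 2 * (N : ℤ) - 1 - y j)
  have hS : S.card = N := by
    rw [Finset.card_sdiff_of_subset, Finset.card_image_of_injective, Int.card_Ico]
    · simp; omega
    · intro a b h
      apply hinj
      simp only at h; omega
    · intro u hu
      simp only [Finset.mem_image, Finset.mem_univ, true_and] at hu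
      obtain ⟨j, rfl⟩ := hu
      have := hb j
      simp only [Finset.mem_Ico]
      omega
  refine ⟨S.orderEmbOfFin hS, (S.orderEmbOfFin hS).injective, fun u => ?_⟩
  have hr := Finset.range_orderEmbOfFin S hS
  have : (∃ i, S.orderEmbOfFin hS i = u) ↔ u ∈ S := by
    rw [← Finset.mem_coe, ← hr]; rfl
  rw [this]
  simp only [S, Finset.mem_sdiff, Finset.mem_Ico, Finset.mem_image, Finset.mem_univ, true_and]
  refine and_congr Iff.rfl (not_congr (exists_congr fun j => ?_))
  constructor <;> intro h <;> omega

lemma sign_typ (g : Equiv.Perm (Fin n)) :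
    ((Equiv.Perm.sign g : ℤ) : ℂ) = (-1) ^ n * (-1) ^ Multiset.card (typ g) := by
  rw [typ, Equiv.Perm.parts_partition, Equiv.Perm.sign_of_cycleType]
  simp only [Multiset.card_add, Multiset.card_replicate, Fintype.card_fin]
  have h : g.cycleType.sum ≤ n := by
    rw [Equiv.Perm.sum_cycleType]
    exact (Finset.card_le_univ _).trans (by simp)
  have h2 := Equiv.Perm.sum_cycleType g
  push_cast
  rw [← pow_add, neg_one_pow_congr (n := n + (Multiset.card g.cycleType + (n - g.support.card)))]
  rw [← h2]
  constructor <;> intro h' <;> (rw [Nat.even_iff] at *; omega)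

lemma hk_eq_st {x y : Fin N → ℤ} (hx : Function.Injective x)
    (h : ∀ u : ℤ, (∃ i, x i = u) ↔ (0 ≤ u ∧ u < 2 * N) ∧ ¬ ∃ j, y j = 2 * N - 1 - u) :
    hk N y = hk N y x • st x := by
  funext x'
  by_cases hx' : hk N y x' = 0
  · rw [hx']
    by_contra hne
    have hne := Ne.symm hne
    simp only [Pi.smul_apply, smul_eq_mul] at hne
    obtain ⟨π, rfl⟩ := st_ne_zero (right_ne_zero_of_mul hne)
    rw [hk_anti] at hx'
    rcases mul_eq_zero.1 hx' with h1 | h1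
    · have := sign_sq_cast π
      rw [h1] at this; simp at this
    · exact hne (by rw [h1]; simp)
  · have hinj := (F0_good.anti).injective hx'
    have hb := fun i => F0_good.le_of_ne hx' i
    have : ∀ i, ∃ j, x j = x' i := by
      intro i
      rw [h]
      refine ⟨?_, ?_⟩
      · have := hb (Fin.castAdd N i)
        simp only [Fin.append_left] at this
        push_cast at this; omega
      · rintro ⟨j, hj⟩
        have := @hinj (Fin.castAdd N i) (Fin.natAdd N j) (by rw [Fin.append_left, Fin.append_right, hj]; ring)
        simp [Fin.ext_iff] at this
        omega
    choose f hf using this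
    have hx'inj := (hk_anti y).injective hx'
    have hfi : Function.Injective f := by
      intro a b hab
      apply hx'inj
      rw [← hf, ← hf, hab]
    let π := Equiv.ofBijective f (Finite.injective_iff_bijective.1 hfi)
    have e : x' = x ∘ π := by funext i; exact (hf i).symm
    rw [e, hk_anti, Pi.smul_apply, st_self hx, smul_eq_mul, mul_comm]

lemma Chr.sign_mul {ψ : Equiv.Perm (Fin n) → ℂ} (h : ψ ∈ Chr (Equiv.Perm (Fin n))) :
    (fun g => ((Equiv.Perm.sign g : ℤ) : ℂ) * ψ g) ∈ Chr (Equiv.Perm (Fin n)) := by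
  obtain ⟨m, M, hM⟩ := Chr.exists_matrix h
  let M' : Equiv.Perm (Fin n) →* Matrix (Fin m) (Fin m) ℂ :=
    { toFun := fun g => ((Equiv.Perm.sign g : ℤ) : ℂ) • M g
      map_one' := by simp
      map_mul' := fun g h => by
        simp only [map_mul, Units.val_mul, Int.cast_mul, smul_mul_smul_comm] }
  have := Chr.of_matrix M'
  simpa [M', hM] using this

lemma sign_irr {ψ : Equiv.Perm (Fin n) → ℂ} (h : ψ ∈ IrrChar (Equiv.Perm (Fin n))) :
    (fun g => ((Equiv.Perm.sign g : ℤ) : ℂ) * ψ g) ∈ IrrChar (Equiv.Perm (Fin n)) := by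
  rw [irr_iff] at h ⊢
  refine ⟨Chr.sign_mul h.1, ?_⟩
  rw [← h.2, ip, ip]
  congr 1
  refine Finset.sum_congr rfl fun g _ => ?_
  have h1 := sign_sq_cast g
  simp only [map_mul, map_intCast]
  linear_combination (ψ g * (starRingEnd ℂ) (ψ g)) * h1

lemma hs_vac_ne : hs (F0 N) (dl N) ≠ 0 := by
  rw [hs, F0, pr_st _ (hk_anti _)]
  refine mul_ne_zero (by exact_mod_cast N.factorial_ne_zero) ?_
  have : ∀ i, 0 ≤ Fin.append (dl N) (fun i => 2 * (N : ℤ) - 1 - dl N i) i := by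
    intro i
    induction i using Fin.addCases with
    | left i => simp [dl]
    | right i => rw [Fin.append_right, dl]; have := i.2; omega
  have hinj : Function.Injective (Fin.append (dl N) (fun i => 2 * (N : ℤ) - 1 - dl N i)) := by
    rw [Fin.append_injective_iff]
    refine ⟨dl_injective, fun i j h => dl_injective ?_, fun i j => ?_⟩
    · simp only at h; omega
    · simp only [dl]; omega
  obtain ⟨π, hπ⟩ := exists_perm_of_vac hinj this (by
    rw [Fin.sum_univ_add, vac_two]
    simp only [Fin.append_left, Fin.append_right, Finset.sum_sub_distrib, Finset.sum_const,
      Finset.card_univ, Fintype.card_fin, nsmul_eq_mul]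
    ring)
  rw [hk, hπ, F0, st_self dl_injective]
  intro h
  have := sign_sq_cast π
  rw [h] at this; simp at this

/-- Multiplication by the sign character: the configuration is replaced by the complement of its
reflection. -/
lemma sign_chi (hnN : n ≤ N) {y : Fin N → ℤ} (hy : Cf n y) :
    ∃ x : Fin N → ℤ, Cf n x ∧
      (∀ u : ℤ, (∃ i, x i = u) ↔ (0 ≤ u ∧ u < 2 * N) ∧ ¬ ∃ j, y j = 2 * N - 1 - u) ∧
      ∃ K : ℂ, ∀ g : Equiv.Perm (Fin n), ((Equiv.Perm.sign g : ℤ) : ℂ) * chi y g = K * chi x g := by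
  have hyb : ∀ i, 0 ≤ y i ∧ y i < 2 * N := fun i => by
    have := hy.good.le_of_ne (x := y) (by
      have := st_self hy.inj 1
      simp only [Equiv.Perm.coe_one, Function.comp_id] at this
      rw [this]; simp) i
    omega
  obtain ⟨x, hx, hxy⟩ := exists_dual hy.inj hyb
  have key : ∀ g : Equiv.Perm (Fin n), ((Equiv.Perm.sign g : ℤ) : ℂ) * chi y g =
      ((-1) ^ n * (hs (F0 N) (dl N))⁻¹ * hk N y x * N.factorial) * chi x g := by
    intro g
    have h1 := congrFun (hs_Fm (N := N) (typ g) (typ_pos g) (by rw [typ_sum]; exact hnN)) y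
    rw [hs, hk_eq_st hx hxy, pr_smul_right, pr_comm, pr_st _ (Fm_typ_good g).anti,
      Pi.smul_apply, smul_eq_mul] at h1
    rw [sign_typ]
    change _ * Fm N (typ g) y = _ * Fm N (typ g) x
    have h2 := hs_vac_ne (N := N)
    field_simp
    linear_combination -h1
  have hne : hk N y x ≠ 0 := by
    intro h0
    have h1 : chi (n := n) y = 0 := by
      funext g
      have := key g
      rw [h0] at this
      have h2 := sign_sq_cast g
      simp only [mul_zero, zero_mul] at this
      rcases mul_eq_zero.1 this with h | h
      · rw [h] at h2; simp at h2
      · exact h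
    have h2 := ip_chi (x := y) hnN hy
    have h3 := st_self hy.inj 1
    simp only [Equiv.Perm.coe_one, Function.comp_id] at h3
    rw [h1, h3] at h2
    simp at h2
  exact ⟨x, ⟨hx, (hk_bounds hne).1, by rw [(hk_bounds hne).2.2, hy.sum]⟩, hxy, _, key⟩

/-- The configurations in which no bead of the runner `r` can be moved down by `p`. -/
def Dc (p r : ℤ) (x : Fin N → ℤ) : Prop :=
  ∀ i, x i % p = r → p ≤ x i → ∃ j, x j = x i - p

lemma Dc.dual {p r : ℤ} (hp : p = 2 * r + 1) (hr : 0 ≤ r) (hN : p ∣ 2 * N) {x y : Fin N → ℤ}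
    (hy : Dc p r y)
    (hxy : ∀ u : ℤ, (∃ i, x i = u) ↔ (0 ≤ u ∧ u < 2 * N) ∧ ¬ ∃ j, y j = 2 * N - 1 - u) :
    Dc p r x := by
  intro i hi hpi
  have h1 := (hxy (x i)).1 ⟨i, rfl⟩
  rw [hxy]
  refine ⟨by omega, ?_⟩
  rintro ⟨j, hj⟩
  obtain ⟨k, hk⟩ := hy j (by
    rw [hj]
    obtain ⟨c, hc⟩ := hN
    have e : (2 * (N : ℤ) - 1 - (x i - p)) = r + p * (c - x i / p) := by
      have := Int.emod_add_mul_ediv (x i) p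
      rw [hi] at this
      rw [hc, mul_sub]
      linarith
    rw [e, Int.add_mul_emod_self_left]
    exact Int.emod_eq_of_lt hr (by omega)) (by omega)
  exact h1.2 ⟨k, by rw [hk, hj]; ring⟩

/-- The sign-stable set of irreducible characters attached to `Dc`. -/
def BS (N n : ℕ) (p r : ℤ) : Set (Equiv.Perm (Fin n) → ℂ) :=
  {ψ | ψ ∈ IrrChar (Equiv.Perm (Fin n)) ∧
    ∃ x : Fin N → ℤ, Cf n x ∧ Dc p r x ∧ (ψ = chi x ∨ ψ = - chi x)}

lemma BS_sign (hnN : n ≤ N) {p r : ℤ} (hp : p = 2 * r + 1) (hr : 0 ≤ r) (hN : p ∣ 2 * N)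
    {ψ : Equiv.Perm (Fin n) → ℂ} (hψ : ψ ∈ BS N n p r) :
    (fun g => ((Equiv.Perm.sign g : ℤ) : ℂ) * ψ g) ∈ BS N n p r := by
  obtain ⟨h1, y, hy, hd, hyψ⟩ := hψ
  obtain ⟨x, hx, hxy, K, hK⟩ := sign_chi hnN hy
  have hs := sign_irr h1
  refine ⟨hs, x, hx, hd.dual hp hr hN hxy, ?_⟩
  have : ∃ K : ℂ, (fun g => ((Equiv.Perm.sign g : ℤ) : ℂ) * ψ g) = K • chi x := by
    rcases hyψ with h | h
    · exact ⟨K, by funext g; simp [h, hK]⟩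
    · exact ⟨-K, by funext g; simp [h, hK]⟩
  obtain ⟨K, hK⟩ := this
  have hn := (irr_iff.1 hs).2
  by_contra hcon
  push Not at hcon
  have h0 : ip (fun g => ((Equiv.Perm.sign g : ℤ) : ℂ) * ψ g) (chi x) = 0 := by
    rcases chi_irr hnN hx with h | h
    · rw [irr_orth hs h, if_neg hcon.1]
    · have := irr_orth hs h
      rwa [if_neg hcon.2, ip_neg_right, neg_eq_zero] at this
  nth_rewrite 2 [hK] at hn
  rw [ip_smul_right, h0] at hn
  simp at hn

end sign

/-! ### Spanning modulo `p`-singular classes -/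

section span
variable {N n : ℕ}

/-- Translation of bead positions, as an action of the group algebra of `ℤ ^ N`. -/
def shf (N : ℕ) : Multiplicative (Fin N → ℤ) →* Module.End ℂ (St N) where
  toFun v := LinearMap.funLeft ℂ ℂ (fun x => x + v.toAdd)
  map_one' := by ext F x; simp [LinearMap.funLeft_apply]
  map_mul' u v := by
    ext F x
    simp [LinearMap.funLeft_apply, add_assoc]

/-- The indicator vector of a set of beads, scaled by `p`. -/
def ind (p : ℤ) (S : Finset (Fin N)) : Fin N → ℤ := ∑ i ∈ S, Pi.single i p

lemma ind_apply (p : ℤ) (S : Finset (Fin N)) (i : Fin N) :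
    ind p S i = if i ∈ S then p else 0 := by
  simp [ind, Finset.sum_apply, Pi.single_apply]

lemma newton_aux {A : Type} [CommRing A] [Algebra ℂ A] (ρ : A →ₐ[ℂ] Module.End ℂ (St N))
    {p : ℕ} (X : Fin N → A) (hX : ∀ i F x, ρ (X i) F x = F (x + Pi.single i (p : ℤ)))
    {G : St N} (hG : ∀ j, 0 < j → lw (p * j) G = 0) {y : Fin N → ℤ}
    (hy : ∀ i, 0 ≤ y i) {l : ℕ} (hl : 0 < l) :
    ∑ S ∈ Finset.powersetCard l Finset.univ, G (y + ind p S) = 0 := by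
  have hE : ∀ k F x, ρ (MvPolynomial.aeval X (MvPolynomial.esymm (Fin N) ℂ k)) F x =
      ∑ S ∈ Finset.powersetCard k Finset.univ, F (x + ind p S) := by
    intro k F x
    simp only [MvPolynomial.esymm, map_sum, map_prod, MvPolynomial.aeval_X]
    rw [LinearMap.sum_apply, Finset.sum_apply]
    refine Finset.sum_congr rfl fun S hS => ?_
    clear hS
    induction S using Finset.induction_on generalizing x with
    | empty => simp [ind]
    | insert i S hi ih =>
      rw [Finset.prod_insert hi, map_mul, Module.End.mul_apply, hX, ih, ind, ind,
        Finset.sum_insert hi, add_assoc]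
  have hP : ∀ k F x, ρ (MvPolynomial.aeval X (MvPolynomial.psum (Fin N) ℂ k)) F x =
      ∑ i, F (x + Pi.single i ((p * k : ℕ) : ℤ)) := by
    intro k F x
    simp only [MvPolynomial.psum, map_sum, map_pow, MvPolynomial.aeval_X]
    rw [LinearMap.sum_apply, Finset.sum_apply]
    refine Finset.sum_congr rfl fun i _ => ?_
    induction k generalizing x with
    | zero => simp
    | succ k ih =>
      rw [pow_succ', Module.End.mul_apply, hX, ih, add_assoc, ← Pi.single_add]
      congr 3; push_cast; ring
  have hN := congrArg (fun a => ρ (MvPolynomial.aeval X a) G y)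
    (MvPolynomial.mul_esymm_eq_sum (Fin N) ℂ l)
  have hl0 : (l : ℂ) ≠ 0 := by exact_mod_cast hl.ne'
  have e1 : (l : MvPolynomial (Fin N) ℂ) * MvPolynomial.esymm (Fin N) ℂ l =
      (l : ℂ) • MvPolynomial.esymm (Fin N) ℂ l := by
    rw [Algebra.smul_def, map_natCast]
  have e2 : ∀ (e : ℕ) (a : MvPolynomial (Fin N) ℂ), (-1) ^ e * a = ((-1) ^ e : ℂ) • a := by
    intro e a
    rw [Algebra.smul_def, map_pow, map_neg, map_one]
  simp only [e1, e2, map_smul, map_sum, smul_mul_assoc, map_mul, LinearMap.smul_apply,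
    Pi.smul_apply, LinearMap.sum_apply, Finset.sum_apply, Module.End.mul_apply, hE, hP] at hN
  rw [smul_eq_mul] at hN
  refine (mul_eq_zero.1 (hN.trans ?_)).resolve_left hl0
  rw [Finset.sum_eq_zero, smul_zero]
  · intro a ha
    have ha1 := (Finset.mem_filter.1 ha).2
    have ha2 := Finset.HasAntidiagonal.mem_antidiagonal.1 (Finset.mem_filter.1 ha).1
    rw [Finset.sum_eq_zero, smul_zero]
    intro S _
    have h := congrFun (hG a.2 (by omega)) (y + ind p S)
    rw [lw, lo_apply] at h
    rw [Pi.zero_apply] at h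
    rw [← h]
    refine Finset.sum_congr rfl fun i _ => ?_
    rw [if_pos]
    refine ⟨rn_one _, ?_⟩
    rw [Pi.add_apply, ind_apply]
    have := hy i
    split_ifs <;> positivity

/-- If all power sums in the translations by `p` kill `G`, so do the elementary symmetric
functions. -/
lemma newton {p : ℕ} {G : St N} (hG : ∀ j, 0 < j → lw (p * j) G = 0) {y : Fin N → ℤ}
    (hy : ∀ i, 0 ≤ y i) {l : ℕ} (hl : 0 < l) :
    ∑ S ∈ Finset.powersetCard l Finset.univ, G (y + ind p S) = 0 := by
  refine newton_aux (AddMonoidAlgebra.lift ℂ _ _ (shf N))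
    (fun i => AddMonoidAlgebra.of ℂ (Fin N → ℤ) (Multiplicative.ofAdd (Pi.single i (p : ℤ))))
    (fun i F x => ?_) hG hy hl
  rw [AddMonoidAlgebra.lift_of]
  rfl

lemma preg_iff {p : ℕ} (hp : p.Prime) (g : Equiv.Perm (Fin n)) :
    g ∈ pRegular p (Equiv.Perm (Fin n)) ↔ ∀ k ∈ typ g, ¬ p ∣ k := by
  have h1 : g ∈ pRegular p (Equiv.Perm (Fin n)) ↔ ¬ p ∣ orderOf g := by
    rw [← hp.coprime_iff_not_dvd, Nat.coprime_comm]; rfl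
  rw [h1, ← Equiv.Perm.lcm_cycleType, typ, Equiv.Perm.parts_partition]
  constructor
  · intro h k hk hpk
    rcases Multiset.mem_add.1 hk with hk | hk
    · exact h (hpk.trans (Multiset.dvd_lcm hk))
    · rw [Multiset.eq_of_mem_replicate hk] at hpk
      exact hp.one_lt.ne' (Nat.dvd_one.1 hpk)
  · intro h hd
    have h2 : g.cycleType.lcm ∣ g.cycleType.prod :=
      Multiset.lcm_dvd.2 fun b hb => Multiset.dvd_prod hb
    obtain ⟨k, hk, hpk⟩ := (Nat.Prime.prime hp).exists_mem_multiset_dvd (hd.trans h2)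
    exact h k (Multiset.mem_add.2 (Or.inl hk)) hpk

lemma lw_preg {p : ℕ} (hp : p.Prime) (hnN : n ≤ N) {g : Equiv.Perm (Fin n)}
    (hg : g ∈ pRegular p (Equiv.Perm (Fin n))) (j : ℕ) (hj : 0 < j) :
    lw (p * j) (Fm N (typ g)) = 0 := by
  rw [lw_Fm _ (Nat.mul_pos hp.pos hj) _ (by rw [typ_sum]; exact hnN),
    Multiset.count_eq_zero_of_notMem]
  · simp
  · intro h
    exact (preg_iff hp g).1 hg _ h (Dvd.intro _ rfl)

lemma sum_top_lt {ι : Type} [DecidableEq ι] (w : ι → ℤ) (t : ℤ) (S S0 : Finset ι)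
    (h1 : ∀ j ∈ S0, t ≤ w j)
    (h2 : ∀ j, j ∉ S0 → w j < t) (hc : S.card = S0.card) (hne : S ≠ S0) :
    ∑ j ∈ S, w j < ∑ j ∈ S0, w j := by
  have hcard : (S \ S0).card = (S0 \ S).card := by
    have e1 := Finset.card_sdiff_add_card_inter S S0
    have e2 := Finset.card_sdiff_add_card_inter S0 S
    rw [Finset.inter_comm] at e2
    omega
  have hne2 : (S \ S0).Nonempty := by
    rw [Finset.sdiff_nonempty]
    intro h
    exact hne (Finset.eq_of_subset_of_card_le h hc.ge)
  rw [← Finset.sum_inter_add_sum_sdiff S S0 w, ← Finset.sum_inter_add_sum_sdiff S0 S w,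
    Finset.inter_comm]
  refine add_lt_add_right ?_ _
  calc ∑ j ∈ S \ S0, w j < ∑ j ∈ S \ S0, t :=
        Finset.sum_lt_sum_of_nonempty hne2 fun j hj => h2 j (Finset.mem_sdiff.1 hj).2
    _ = ∑ j ∈ S0 \ S, t := by simp [hcard]
    _ ≤ _ := Finset.sum_le_sum fun j hj => h1 j (Finset.mem_sdiff.1 hj).1

lemma chi_eq_zero {x : Fin N → ℤ} (h : ¬ Cf n x) : chi (n := n) x = 0 := by
  funext g
  by_contra hne
  exact h ((Fm_typ_good g).cf hne)

lemma truncCF_sum {G ι : Type} (C : Set G) (s : Finset ι) (φ : ι → G → ℂ) :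
    truncCF C (∑ i ∈ s, φ i) = ∑ i ∈ s, truncCF C (φ i) := by
  funext g
  by_cases h : g ∈ C <;> simp [truncCF, h]

lemma truncCF_neg {G : Type} (C : Set G) (φ : G → ℂ) :
    truncCF C (-φ) = - truncCF C φ := by
  funext g
  by_cases h : g ∈ C <;> simp [truncCF, h]

/-- Straightening: on `p`-regular classes every `chi x` is an integer combination of the members
of `BS`. -/
lemma chi_span {p : ℕ} (hp : p.Prime) (hnN : n ≤ N) {r : ℤ} :
    ∀ (m : ℕ) (x : Fin N → ℤ), (∑ i, if x i % p = r then x i ^ 2 else 0) < (m : ℤ) →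
    truncCF (pRegular p (Equiv.Perm (Fin n))) (chi x) ∈
      Submodule.span ℤ (truncCF (pRegular p (Equiv.Perm (Fin n))) '' BS N n p r) := by
  intro m
  induction m with
  | zero =>
    intro x hx
    exact absurd hx (not_lt.2 (by push_cast; exact Finset.sum_nonneg fun i _ => by split_ifs <;> positivity))
  | succ m ih =>
    intro x hm
    have hpp : (0 : ℤ) < p := by exact_mod_cast hp.pos
    by_cases hx : Cf n x
    swap
    · rw [chi_eq_zero hx]
      convert Submodule.zero_mem _
      funext g; simp [truncCF]
    by_cases hd : Dc p r x
    · rcases chi_irr hnN hx with h | h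
      · exact Submodule.subset_span ⟨_, ⟨h, x, hx, hd, Or.inl rfl⟩, rfl⟩
      · rw [← neg_neg (chi x), truncCF_neg]
        exact Submodule.neg_mem _ (Submodule.subset_span ⟨_, ⟨h, x, hx, hd, Or.inr rfl⟩, rfl⟩)
    unfold Dc at hd
    push Not at hd
    obtain ⟨i, hir, hip, hi⟩ := hd
    let S0 := Finset.univ.filter fun j => x j % p = r ∧ x i ≤ x j
    let y : Fin N → ℤ := x - ind p S0
    have hmem : ∀ j, j ∈ S0 ↔ x j % p = r ∧ x i ≤ x j := fun j => by simp [S0]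
    have hy1 : ∀ j, j ∈ S0 → y j = x j - p := fun j hj => by simp [y, ind_apply, hj]
    have hy2 : ∀ j, j ∉ S0 → y j = x j := fun j hj => by simp [y, ind_apply, hj]
    have hy0 : ∀ j, 0 ≤ y j := fun j => by
      by_cases hj : j ∈ S0
      · rw [hy1 j hj]; have := ((hmem j).1 hj).2; omega
      · rw [hy2 j hj]; exact hx.nonneg j
    have hymod : ∀ j, y j % p = x j % p := fun j => by
      by_cases hj : j ∈ S0
      · rw [hy1 j hj]; simp
      · rw [hy2 j hj]
    have hS0 : 0 < S0.card := Finset.card_pos.2 ⟨i, (hmem i).2 ⟨hir, le_rfl⟩⟩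
    have hxy : y + ind p S0 = x := by simp [y]
    let T := (Finset.powersetCard S0.card (Finset.univ : Finset (Fin N))).erase S0
    have key : truncCF (pRegular p (Equiv.Perm (Fin n))) (chi x) =
        truncCF (pRegular p (Equiv.Perm (Fin n))) (- ∑ S ∈ T, chi (y + ind p S)) := by
      funext g
      by_cases hg : g ∈ pRegular p (Equiv.Perm (Fin n))
      · simp only [truncCF, hg, if_true]
        have := newton (lw_preg hp hnN hg) hy0 hS0
        rw [← Finset.add_sum_erase _ _ (Finset.mem_powersetCard.2 ⟨Finset.subset_univ S0, rfl⟩),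
          hxy] at this
        rw [Pi.neg_apply, Finset.sum_apply]
        exact eq_neg_of_add_eq_zero_left this
      · simp [truncCF, hg]
    rw [key, truncCF_neg, truncCF_sum]
    refine Submodule.neg_mem _ (Submodule.sum_mem _ fun S hS => ih _ ?_)
    obtain ⟨hne, hS⟩ := Finset.mem_erase.1 hS
    have hcard := (Finset.mem_powersetCard.1 hS).2
    let w : Fin N → ℤ := fun j => if x j % p = r then 2 * p * y j + p ^ 2 else 0
    have hf : ∀ S' : Finset (Fin N), (∑ j, if (y + ind p S') j % p = r then (y + ind p S') j ^ 2 else 0)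
        = (∑ j, if x j % p = r then y j ^ 2 else 0) + ∑ j ∈ S', w j := by
      intro S'
      have e : ∑ j ∈ S', w j = ∑ j, if j ∈ S' then w j else 0 := by simp
      rw [e, ← Finset.sum_add_distrib]
      refine Finset.sum_congr rfl fun j _ => ?_
      have e2 : (y + ind p S') j % p = x j % p := by
        rw [Pi.add_apply, ind_apply, ← hymod]
        split_ifs <;> simp
      rw [e2, Pi.add_apply, ind_apply]
      simp only [w]
      split_ifs <;> ring
    have hlt := sum_top_lt w (2 * p * (x i - p) + p ^ 2) S S0 ?_ ?_ hcard hne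
    · rw [hf]
      have := hf S0
      rw [hxy] at this
      rw [this] at hm
      push_cast at hm
      omega
    · intro j hj
      have h1 := (hmem j).1 hj
      simp only [w, h1.1, if_true, hy1 j hj]
      nlinarith [h1.2]
    · intro j hj
      simp only [w, hy2 j hj]
      split_ifs with hjr
      · have h1 : x j < x i := by
          by_contra h
          exact hj ((hmem j).2 ⟨hjr, by omega⟩)
        have h2 := hi j
        have h3 : (p : ℤ) ∣ x i - x j := by
          apply Int.dvd_of_emod_eq_zero
          rw [Int.sub_emod, hir, hjr]; simp
        have h4 := Int.le_of_dvd (by omega) h3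
        have h5 : x j < x i - p := by omega
        nlinarith
      · nlinarith

end span

/-! ### Independence modulo `p`-singular classes -/

section indep
variable {N n : ℕ}

/-- The complement of the runner `r`. -/
def nr (p r : ℤ) : ℤ → Prop := fun u => ¬ rn p r u

lemma pw_split (p : ℕ) (r : ℤ) (l : ℕ) (F : St N) :
    pw (p * l) F = up (rn p r) (p * l) F + up (nr p r) (p * l) F := by
  funext x
  rw [pw_apply, Pi.add_apply, up_apply, up_apply, ← Finset.sum_add_distrib]
  refine Finset.sum_congr rfl fun i _ => ?_
  push_cast
  by_cases h : rn p r (x i) <;> simp [nr, h]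

lemma nr_sub {p r u : ℤ} (k : ℤ) : nr p r (u - p * k) ↔ nr p r u := not_congr (rn_sub_mul k)

lemma nr_add {p r u : ℤ} (k : ℤ) : nr p r (u + p * k) ↔ nr p r u := not_congr (rn_add_mul k)

lemma lo_nr_comm {p r : ℤ} (k l : ℤ) (F : St N) :
    lo (rn p r) (p * k) (up (nr p r) (p * l) F) = up (nr p r) (p * l) (lo (rn p r) (p * k) F) := by
  funext x
  rw [lo_apply, up_apply]
  have e1 : ∀ i, (if rn p r (x i) ∧ 0 ≤ x i then up (nr p r) (p * l) F (x + Pi.single i (p * k)) else 0)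
      = ∑ j, if (rn p r (x i) ∧ 0 ≤ x i) ∧ nr p r (x j) then
          F (x + Pi.single i (p * k) - Pi.single j (p * l)) else 0 := by
    intro i
    by_cases h : rn p r (x i) ∧ 0 ≤ x i
    · rw [if_pos h, up_apply]
      refine Finset.sum_congr rfl fun j _ => ?_
      by_cases hij : j = i
      · subst hij
        rw [if_neg, if_neg]
        · exact fun h' => h'.2 h.1
        · simp only [Pi.add_apply, Pi.single_eq_same, nr_add]
          exact fun h' => h' h.1
      · simp only [Pi.add_apply, Pi.single_apply, hij, if_false, add_zero]
        simp [h]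
    · rw [if_neg h]; simp [h]
  have e2 : ∀ j, (if nr p r (x j) then lo (rn p r) (p * k) F (x - Pi.single j (p * l)) else 0)
      = ∑ i, if (rn p r (x i) ∧ 0 ≤ x i) ∧ nr p r (x j) then
          F (x + Pi.single i (p * k) - Pi.single j (p * l)) else 0 := by
    intro j
    by_cases h : nr p r (x j)
    · rw [if_pos h, lo_apply]
      refine Finset.sum_congr rfl fun i _ => ?_
      by_cases hij : i = j
      · subst hij
        rw [if_neg, if_neg]
        · exact fun h' => h'.2 h'.1.1
        · simp only [Pi.sub_apply, Pi.single_eq_same, rn_sub_mul]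
          exact fun h' => h h'.1
      · simp only [Pi.sub_apply, Pi.single_apply, hij, if_false, sub_zero, h, and_true]
        rw [sub_add_eq_add_sub]
    · rw [if_neg h]; simp [h]
  simp only [e1, e2]
  exact Finset.sum_comm

/-- The operator `D = Σ_k q_k lo_k / k`, moving beads down on the runner and compensating outside. -/
def Dop (N : ℕ) (p r : ℤ) (n : ℕ) : Module.End ℂ (St N) :=
  ∑ k ∈ Finset.Icc 1 n, (k : ℂ)⁻¹ • (up (nr p r) (p * k) * lo (rn p r) (p * k))

lemma Dop_apply (p r : ℤ) (F : St N) : Dop N p r n F =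
    ∑ k ∈ Finset.Icc 1 n, (k : ℂ)⁻¹ • up (nr p r) (p * k) (lo (rn p r) (p * k) F) := by
  simp [Dop, LinearMap.sum_apply]

lemma Dop_good {p r : ℤ} (hp : 0 < p) {F : St N} {d : ℤ} (hF : Good d F) : Good d (Dop N p r n F) := by
  rw [Dop_apply]
  refine Good.sum _ _ fun k _ => Good.smul ?_ _
  have := (hF.lo (rn p r) (p * k)).up (nr p r) (s := p * k) (by positivity)
  rwa [sub_add_cancel] at this

lemma Dop_pow_good {p r : ℤ} (hp : 0 < p) {F : St N} {d : ℤ} (hF : Good d F) (e : ℕ) :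
    Good d ((Dop N p r n ^ e) F) := by
  induction e with
  | zero => simpa using hF
  | succ e ih => rw [pow_succ', Module.End.mul_apply]; exact Dop_good hp ih

/-- Total position on the runner. -/
def gs (p r : ℤ) (x : Fin N → ℤ) : ℤ := ∑ i, if rn p r (x i) then x i else 0

lemma Dop_gs {p r : ℤ} (hp : 0 < p) {F : St N} {x : Fin N → ℤ} (h : Dop N p r n F x ≠ 0) :
    ∃ x', F x' ≠ 0 ∧ gs p r x + 1 ≤ gs p r x' := by
  rw [Dop_apply, Finset.sum_apply] at h
  obtain ⟨k, hk, h⟩ := Finset.exists_ne_zero_of_sum_ne_zero h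
  have h := right_ne_zero_of_mul h
  rw [up_apply] at h
  obtain ⟨i, -, h⟩ := Finset.exists_ne_zero_of_sum_ne_zero h
  have hi : nr p r (x i) := by by_contra h'; simp [h'] at h
  rw [if_pos hi, lo_apply] at h
  obtain ⟨j, -, h⟩ := Finset.exists_ne_zero_of_sum_ne_zero h
  set x1 := x - Pi.single i (p * k) with hx1
  have hj : rn p r (x1 j) ∧ 0 ≤ x1 j := by by_contra h'; simp [h'] at h
  rw [if_pos hj] at h
  refine ⟨_, h, ?_⟩
  have e1 : gs p r x = gs p r x1 := by
    refine Finset.sum_congr rfl fun a _ => ?_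
    by_cases ha : a = i
    · subst ha
      have : ¬ rn p r (x1 a) := by
        rw [hx1]; simp only [Pi.sub_apply, Pi.single_eq_same, rn_sub_mul]; exact hi
      rw [if_neg hi, if_neg this]
    · simp [hx1, Pi.single_apply, ha]
  rw [e1, Int.add_one_le_iff]
  have hk1 := (Finset.mem_Icc.1 hk).1
  have hpos : 0 < p * (k : ℤ) := by positivity
  refine Finset.sum_lt_sum (fun a _ => ?_) ⟨j, Finset.mem_univ _, ?_⟩
  · by_cases ha : a = j
    · subst ha
      simp only [Pi.add_apply, Pi.single_eq_same, rn_add_mul]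
      split_ifs <;> omega
    · simp [Pi.single_apply, ha]
  · simp only [Pi.add_apply, Pi.single_eq_same, rn_add_mul, hj.1, if_true]
    omega

lemma Dop_nil {p r : ℤ} (hp : 0 < p) {F : St N} {d : ℤ} (hF : Good d F) :
    ∃ K : ℕ, ∀ e, K ≤ e → (Dop N p r n ^ e) F = 0 := by
  have key : ∀ (e : ℕ) x, (Dop N p r n ^ e) F x ≠ 0 → gs p r x + e ≤ vac N + d := by
    intro e
    induction e with
    | zero =>
      intro x hx
      simp only [pow_zero, Module.End.one_apply] at hx
      rw [← hF.hom x hx, gs]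
      push_cast
      rw [add_zero]
      refine Finset.sum_le_sum fun i _ => ?_
      have := (hF.le_of_ne hx i).1
      split_ifs <;> omega
    | succ e ih =>
      intro x hx
      rw [pow_succ', Module.End.mul_apply] at hx
      obtain ⟨x', h1, h2⟩ := Dop_gs hp hx
      have := ih x' h1
      push_cast; omega
  refine ⟨(vac N + d + 1).toNat, fun e he => ?_⟩
  funext x
  by_contra hx
  have h1 := key e x hx
  have h2 : 0 ≤ gs p r x := Finset.sum_nonneg fun i _ => by
    have := ((Dop_pow_good hp hF e).le_of_ne hx i).1
    split_ifs <;> omega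
  omega

lemma Dop_nr {p r : ℤ} (l : ℤ) (F : St N) :
    Dop N p r n (up (nr p r) (p * l) F) = up (nr p r) (p * l) (Dop N p r n F) := by
  rw [Dop_apply, Dop_apply, map_sum]
  refine Finset.sum_congr rfl fun k _ => ?_
  rw [map_smul, lo_nr_comm, up_comm (fun u => nr_sub l) (fun u => nr_sub k)]

lemma Dop_up {p r : ℤ} (hp : 0 < p) (hr0 : 0 ≤ r) (hrp : r < p) {F : St N} {d : ℤ} (hF : Good d F)
    {l : ℕ} (hl0 : 0 < l) (hln : l ≤ n) (hl : p * l ≤ N - d) :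
    Dop N p r n (up (rn p r) (p * l) F) =
      up (rn p r) (p * l) (Dop N p r n F) + up (nr p r) (p * l) F := by
  rw [Dop_apply, Dop_apply, map_sum]
  have : ∀ k ∈ Finset.Icc 1 n, (k : ℂ)⁻¹ • up (nr p r) (p * k) (lo (rn p r) (p * k)
      (up (rn p r) (p * l) F)) = up (rn p r) (p * l) ((k : ℂ)⁻¹ • up (nr p r) (p * k) (lo (rn p r) (p * k) F))
      + if k = l then up (nr p r) (p * l) F else 0 := by
    intro k hk
    have hk0 : (k : ℂ) ≠ 0 := by
      have := (Finset.mem_Icc.1 hk).1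
      exact_mod_cast (by omega : k ≠ 0)
    rw [heis hp hr0 hrp hF k l hl, map_add, map_smul, smul_add, map_smul,
      up_comm (fun u => nr_sub l) (fun u => rn_sub_mul k)]
    congr 1
    split_ifs with h
    · subst h
      rw [smul_smul, inv_mul_cancel₀ hk0, one_smul]
    · simp
  rw [Finset.sum_congr rfl this, Finset.sum_add_distrib]
  congr 1
  rw [Finset.sum_ite_eq' , if_pos (Finset.mem_Icc.2 ⟨hl0, hln⟩)]

lemma Dop_pow_nr {p r : ℤ} (l : ℤ) (F : St N) (e : ℕ) :
    (Dop N p r n ^ e) (up (nr p r) (p * l) F) = up (nr p r) (p * l) ((Dop N p r n ^ e) F) := by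
  induction e with
  | zero => simp
  | succ e ih => rw [pow_succ', Module.End.mul_apply, ih, Dop_nr, Module.End.mul_apply]

lemma Dop_pow_up {p r : ℤ} (hp : 0 < p) (hr0 : 0 ≤ r) (hrp : r < p) {F : St N} {d : ℤ} (hF : Good d F)
    {l : ℕ} (hl0 : 0 < l) (hln : l ≤ n) (hl : p * l ≤ N - d) (e : ℕ) :
    (Dop N p r n ^ (e + 1)) (up (rn p r) (p * l) F) =
      up (rn p r) (p * l) ((Dop N p r n ^ (e + 1)) F) +
        ((e + 1 : ℕ) : ℂ) • up (nr p r) (p * l) ((Dop N p r n ^ e) F) := by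
  induction e with
  | zero => simpa using Dop_up hp hr0 hrp hF hl0 hln hl
  | succ e ih =>
    rw [pow_succ', Module.End.mul_apply, ih, map_add, map_smul,
      Dop_up hp hr0 hrp (Dop_pow_good hp hF _) hl0 hln hl, Dop_nr,
      ← Module.End.mul_apply (Dop N p r n), ← Module.End.mul_apply (Dop N p r n), ← pow_succ',
      ← pow_succ', add_assoc]
    congr 1
    push_cast
    module

/-- A truncated exponential of `-D`. -/
def Phi (N : ℕ) (p r : ℤ) (n K : ℕ) : Module.End ℂ (St N) :=
  ∑ e ∈ Finset.range K, ((-1 : ℂ) ^ e * (e.factorial : ℂ)⁻¹) • Dop N p r n ^ e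

lemma Phi_succ (p r : ℤ) (K : ℕ) (F : St N) : Phi N p r n (K + 1) F =
    Phi N p r n K F + ((-1 : ℂ) ^ K * (K.factorial : ℂ)⁻¹) • (Dop N p r n ^ K) F := by
  simp [Phi, Finset.sum_range_succ]

/-- Up to an error term of high order in the nilpotent operator `D`, the operator `Φ` intertwines the
power sum `p l` with its part on the runner: `[D, up_l] = q_l` for `q_l` the part off the runner. -/
lemma Phi_pw {p : ℕ} {r : ℤ} (hp : 0 < p) (hr0 : 0 ≤ r) (hrp : r < p) {F : St N} {d : ℤ} (hF : Good d F)
    {l : ℕ} (hl0 : 0 < l) (hln : l ≤ n) (hl : (p : ℤ) * l ≤ N - d) (K : ℕ) :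
    Phi N p r n (K + 1) (pw (p * l) F) = up (rn p r) (p * l) (Phi N p r n (K + 1) F) +
      ((-1 : ℂ) ^ K * (K.factorial : ℂ)⁻¹) • up (nr p r) (p * l) ((Dop N p r n ^ K) F) := by
  have hp' : (0 : ℤ) < p := by exact_mod_cast hp
  induction K with
  | zero => simp [Phi, pw_split p r]
  | succ K ih =>
    rw [Phi_succ, ih, Phi_succ _ _ (K + 1), map_add, map_smul, pw_split p r, map_add,
      Dop_pow_up hp' hr0 hrp hF hl0 hln hl, Dop_pow_nr]
    have h1 : ((-1 : ℂ) ^ (K + 1) * ((K + 1).factorial : ℂ)⁻¹) * ((K + 1 : ℕ) : ℂ) =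
        - ((-1 : ℂ) ^ K * (K.factorial : ℂ)⁻¹) := by
      have h2 : ((K + 1 : ℕ) : ℂ) ≠ 0 := by exact_mod_cast K.succ_ne_zero
      have h3 : (K.factorial : ℂ) ≠ 0 := by exact_mod_cast K.factorial_ne_zero
      rw [Nat.factorial_succ, Nat.cast_mul, pow_succ]
      field_simp
    simp only [smul_add, smul_smul, h1]
    module

/-- Vanishing under all lowering operators of the runner `r`. -/
def Core (p r : ℤ) (F : St N) : Prop := ∀ k : ℕ, 0 < k → lo (rn p r) (p * k) F = 0

lemma Core.sum {p r : ℤ} {ι : Type*} (s : Finset ι) (c : ι → ℂ) (F : ι → St N)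
    (h : ∀ i ∈ s, Core p r (F i)) : Core p r (∑ i ∈ s, c i • F i) := by
  intro k hk
  rw [map_sum]
  exact Finset.sum_eq_zero fun i hi => by rw [map_smul, h i hi k hk, smul_zero]

lemma Core.Phi {p r : ℤ} {F : St N} (h : Core p r F) (K : ℕ) : Phi N p r n (K + 1) F = F := by
  have hD : Dop N p r n F = 0 := by
    rw [Dop_apply]
    exact Finset.sum_eq_zero fun k hk => by
      rw [h k (Finset.mem_Icc.1 hk).1, map_zero, smul_zero]
  induction K with
  | zero => simp [_root_.Phi]
  | succ K ih => rw [Phi_succ, ih, pow_succ (Dop N p r n), Module.End.mul_apply, hD, map_zero, smul_zero, add_zero]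

lemma Dc.core {p r : ℤ} (hp : 0 < p) {x : Fin N → ℤ} (hx : Cf n x) (h : Dc p r x) : Core p r (st x) := by
  intro k hk
  have it : ∀ k : ℕ, ∀ i, x i % p = r → p * k ≤ x i → ∃ j, x j = x i - p * k := by
    intro k
    induction k with
    | zero => exact fun i _ _ => ⟨i, by simp⟩
    | succ k ih =>
      intro i hi hk
      push_cast at hk
      obtain ⟨j, hj⟩ := ih i hi (by linarith)
      obtain ⟨j', hj'⟩ := h j (by rw [hj]; simpa using hi) (by rw [hj]; linarith)
      exact ⟨j', by rw [hj', hj]; push_cast; ring⟩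
  funext y
  by_contra hy
  have hinj := ((st_anti x).lo (rn p r) (p * k)).injective hy
  change lo (rn p r) (p * k) (st x) y ≠ 0 at hy
  rw [lo_apply] at hy
  obtain ⟨i, -, hne⟩ := Finset.exists_ne_zero_of_sum_ne_zero hy
  have hi : rn p r (y i) ∧ 0 ≤ y i := by by_contra h'; simp [h'] at hne
  rw [if_pos hi] at hne
  obtain ⟨π, hπ⟩ := st_ne_zero hne
  have hyi : y i + p * k = x (π i) := by simpa using congrFun hπ i
  obtain ⟨j, hj⟩ := it k (π i) (by rw [← hyi]; simpa [rn] using hi.1) (by rw [← hyi]; linarith [hi.2])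
  -- the bead moved down lands on a position occupied by another bead
  have hjy : y (π.symm j) + (Pi.single i (p * k) : Fin N → ℤ) (π.symm j) = y i := by
    have := congrFun hπ (π.symm j)
    simp only [Pi.add_apply, Function.comp_apply, Equiv.apply_symm_apply] at this
    rw [this, hj, ← hyi]; ring
  have hpk : 0 < p * (k : ℤ) := by positivity
  by_cases hji : π.symm j = i
  · rw [hji] at hjy; simp at hjy; omega
  · rw [Pi.single_eq_of_ne hji, add_zero] at hjy
    exact hji (hinj hjy)

lemma Good.star {F : St N} {d : ℤ} (h : Good d F) : Good d (fun x => (starRingEnd ℂ) (F x)) := by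
  refine ⟨fun π x => ?_, fun x i hi => ?_, fun x hx => ?_⟩
  · simp only [h.anti π x, map_mul, map_intCast]
  · simp [h.pos x i hi]
  · exact h.hom x (by intro h'; apply hx; simp [h'])

lemma Core.star {p r : ℤ} {F : St N} (h : Core p r F) : Core p r (fun x => (starRingEnd ℂ) (F x)) := by
  intro k hk
  funext x
  have := congrArg (starRingEnd ℂ) (congrFun (h k hk) x)
  rw [lo_apply, map_sum] at this
  rw [lo_apply]
  simpa [apply_ite (starRingEnd ℂ)] using this

lemma pr_star {F : St N} {d : ℤ} (h : Good d F) (h0 : pr F (fun x => (starRingEnd ℂ) (F x)) = 0) :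
    F = 0 := by
  have hf : (Function.support fun x => F x * (starRingEnd ℂ) (F x)).Finite := supp_mul _ h.finite
  rw [pr, finsum_eq_sum _ hf] at h0
  simp only [Complex.mul_conj] at h0
  rw [← Complex.ofReal_sum, Complex.ofReal_eq_zero,
    Finset.sum_eq_zero_iff_of_nonneg (fun x _ => Complex.normSq_nonneg _)] at h0
  funext x
  by_contra hx
  have hx' : F x ≠ 0 := hx
  have := h0 x (by simpa using hx')
  exact hx (by simpa using this)

/-- A vector killed by all lowering operators of a runner is determined by its `p`-regular values. -/
lemma core_zero {p : ℕ} (hp : p.Prime) {r : ℤ} (hr0 : 0 ≤ r) (hrp : r < p) (hnN : n ≤ N) {F : St N}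
    (hF : Good (n : ℤ) F) (hc : Core p r F)
    (h0 : ∀ g ∈ pRegular p (Equiv.Perm (Fin n)), cf n F g = 0) : F = 0 := by
  have hp0 : (0 : ℤ) < p := by exact_mod_cast hp.pos
  set Fb : St N := fun x => (starRingEnd ℂ) (F x) with hFb
  -- for each `g` there is a uniform bound on the nilpotency needed
  have key : ∀ g : Equiv.Perm (Fin n), g ∉ pRegular p (Equiv.Perm (Fin n)) →
      ∃ K : ℕ, ∀ e, K ≤ e → pr (Phi N p r n (e + 1) (Fm N (typ g))) Fb = 0 := by
    intro g hg
    rw [preg_iff hp] at hg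
    push Not at hg
    obtain ⟨k, hk, l, rfl⟩ := hg
    have hl0 : 0 < l := by
      rcases Nat.eq_zero_or_pos l with h | h
      · subst h; exact absurd hk (by simpa using typ_pos g)
      · exact h
    have hsum : p * l + ((typ g).erase (p * l)).sum = n := by
      rw [← Multiset.sum_cons, Multiset.cons_erase hk, typ_sum]
    have hln : l ≤ n := by
      have := Nat.le_mul_of_pos_left l hp.pos
      omega
    have hG : Good (((typ g).erase (p * l)).sum : ℤ) (Fm N ((typ g).erase (p * l))) := by
      exact_mod_cast Fm_good _
    obtain ⟨K, hK⟩ := Dop_nil (n := n) (r := r) hp0 hG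
    refine ⟨K, fun e he => ?_⟩
    rw [← Multiset.cons_erase hk, Fm_cons, Phi_pw hp.pos hr0 hrp hG hl0 hln (by
      zify at hsum hnN; push_cast; push_cast at hsum; linarith), hK e he, map_zero, smul_zero, add_zero]
    have hG' : Good (((typ g).erase (p * l)).sum : ℤ) (Phi N p r n (e + 1) (Fm N ((typ g).erase (p * l)))) := by
      rw [Phi, LinearMap.sum_apply]
      exact Good.sum _ _ fun j _ => Good.smul (Dop_pow_good hp0 hG j) _
    rw [pr_up (fun u => rn_add_mul _) hG' hF.star, hc.star l hl0, pr_zero_right]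
  choose! Kf hKf using key
  set K := Finset.univ.sup Kf
  have hK : ∀ g, Kf g ≤ K := fun g => Finset.le_sup (Finset.mem_univ g)
  refine pr_star hF ?_
  have e1 : F = (n.factorial : ℂ)⁻¹ • ∑ g : Equiv.Perm (Fin n), cf n F g • Phi N p r n (K + 1) (Fm N (typ g)) := by
    conv_lhs => rw [← hc.Phi (n := n) K, expand hnN hF]
    rw [map_smul, map_sum]
    simp only [map_smul]
  change pr F Fb = 0
  have hfin : ∀ g : Equiv.Perm (Fin n), Good (n : ℤ) (Phi N p r n (K + 1) (Fm N (typ g))) := by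
    intro g
    rw [Phi, LinearMap.sum_apply]
    exact Good.sum _ _ fun j _ => Good.smul (Dop_pow_good hp0 (Fm_typ_good g) j) _
  rw [e1, pr_smul, pr_sum _ _ _ fun g _ => ((hfin g).smul _).finite]
  rw [Finset.sum_eq_zero, mul_zero]
  intro g _
  rw [pr_smul]
  by_cases hg : g ∈ pRegular p (Equiv.Perm (Fin n))
  · rw [h0 g hg, zero_mul]
  · rw [hKf g hg K (hK g), mul_zero]

/-- Irreducible characters are linearly independent. -/
lemma irr_indep {G : Type} [Group G] [Fintype G] {ι : Type*} (s : Finset ι) (χ : ι → G → ℂ)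
    (hχ : ∀ i ∈ s, χ i ∈ IrrChar G) (hinj : ∀ i ∈ s, ∀ j ∈ s, χ i = χ j → i = j) (c : ι → ℂ)
    (h : ∑ i ∈ s, c i • χ i = 0) : ∀ i ∈ s, c i = 0 := by
  intro j hj
  have h1 : ip (∑ i ∈ s, c i • χ i) (χ j) = c j := by
    rw [ip_sum_left, Finset.sum_eq_single j]
    · rw [ip_smul_left, irr_orth (hχ j hj) (hχ j hj), if_pos rfl, mul_one]
    · intro i hi hij
      rw [ip_smul_left, irr_orth (hχ i hi) (hχ j hj), if_neg fun h => hij (hinj i hi j hj h), mul_zero]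
    · exact fun h => absurd hj h
  rw [← h1, h, ip_zero_left]

lemma cf_sum {ι : Type*} (s : Finset ι) (F : ι → St N) (hF : ∀ i ∈ s, Good (n : ℤ) (F i)) :
    cf n (∑ i ∈ s, F i) = ∑ i ∈ s, cf n (F i) := by
  funext g
  rw [cf, pr_sum _ _ _ fun i hi => (hF i hi).finite, Finset.mul_sum, Finset.sum_apply]
  rfl

theorem BS_basic {p : ℕ} (hp : p.Prime) {r : ℤ} (hr0 : 0 ≤ r) (hrp : r < p) (hnN : n ≤ N) :
    IsBasicSetOf (pRegular p (Equiv.Perm (Fin n))) (IrrChar (Equiv.Perm (Fin n))) (BS N n p r) := by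
  refine ⟨fun ψ h => h.1, ?_, le_antisymm (Submodule.span_mono (Set.image_mono fun ψ h => h.1)) ?_⟩
  · rw [linearIndependent_iff']
    intro s c hc
    have hx : ∀ ψ : BS N n p r, ∃ (x : Fin N → ℤ) (e : ℂ), Cf n x ∧ Dc p r x ∧ ψ.1 = e • chi x := by
      rintro ⟨ψ, -, x, h1, h2, h3 | h3⟩
      · exact ⟨x, 1, h1, h2, by simpa using h3⟩
      · exact ⟨x, -1, h1, h2, by simpa using h3⟩
    choose x e h1 h2 h3 using hx
    set F : St N := ∑ ψ ∈ s, ((c ψ : ℂ) * e ψ) • st (x ψ) with hFdef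
    have hF : Good (n : ℤ) F := Good.sum _ _ fun ψ _ => (h1 ψ).good.smul _
    have hcf : cf n F = ∑ ψ ∈ s, (c ψ : ℂ) • ψ.1 := by
      rw [hFdef, cf_sum _ _ fun ψ _ => (h1 ψ).good.smul _]
      refine Finset.sum_congr rfl fun ψ _ => ?_
      rw [cf_smul, h3, smul_smul]
      congr 1
      funext g
      exact cf_st _ _
    have hF0 : F = 0 := by
      refine core_zero hp hr0 hrp hnN hF (Core.sum _ _ _ fun ψ _ =>
        (h2 ψ).core (by exact_mod_cast hp.pos) (h1 ψ)) fun g hg => ?_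
      have := congrFun hc g
      simp only [Finset.sum_apply, Pi.smul_apply, truncCF, if_pos hg] at this
      rw [hcf]
      simpa [Finset.sum_apply] using this
    have h0 : ∑ ψ ∈ s, (c ψ : ℂ) • ψ.1 = 0 := by
      rw [← hcf, hF0]; funext g; simp [cf, pr_zero]
    intro ψ hψ
    have := irr_indep s (fun ψ => ψ.1) (fun ψ _ => ψ.2.1) (fun i _ j _ h => Subtype.ext h) _ h0 ψ hψ
    exact_mod_cast this
  · rw [Submodule.span_le]
    rintro _ ⟨ψ, hψ, rfl⟩
    obtain ⟨x, -, h⟩ := irr_sym_iff hnN hψ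
    have := chi_span (N := N) hp hnN (r := r) (∑ i, if x i % p = r then x i ^ 2 else 0 : ℤ).toNat.succ x (by
      have := Int.self_le_toNat (∑ i, if x i % p = r then x i ^ 2 else 0 : ℤ)
      push_cast; omega)
    rcases h with h | h
    · rw [h]; exact this
    · rw [h, truncCF_neg]; exact Submodule.neg_mem _ this

/-- The symmetric group has a sign-stable `p`-basic set for odd `p`. -/
theorem exists_basic_sym (p n : ℕ) (hp : p.Prime) (hodd : Odd p) :
    ∃ B : Set (Equiv.Perm (Fin n) → ℂ),
      IsBasicSetOf (pRegular p (Equiv.Perm (Fin n))) (IrrChar (Equiv.Perm (Fin n))) B ∧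
      (∀ χ ∈ B, (fun g => ((Equiv.Perm.sign g : ℤ) : ℂ) * χ g) ∈ B) := by
  obtain ⟨k, hk⟩ := hodd
  have hnN : n ≤ p * n := Nat.le_mul_of_pos_left n hp.pos
  refine ⟨BS (p * n) n p k, BS_basic hp (by positivity) (by omega) hnN, fun χ hχ => ?_⟩
  exact BS_sign hnN (by omega) (by positivity) (by push_cast; exact ⟨2 * n, by ring⟩) hχ

end indep

/-! ### A Hodge-type operator on tuples -/

section dt
variable {T α : Type} [Fintype T] [DecidableEq T] [Fintype α] [DecidableEq α] (e0 : T ≃ α)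

/-- The sign of an enumeration `τ` of `α` relative to the reference enumeration `e0`. -/
def sg (τ : T ≃ α) : ℂ := ((Equiv.Perm.sign (τ.trans e0.symm) : ℤ) : ℂ)

/-- The determinant of the family of vectors `V` in the basis enumerated by `e0`. -/
def dt (V : T → α → ℂ) : ℂ := Matrix.det (Matrix.of fun a b => V a (e0 b))

lemma dt_eq (V : T → α → ℂ) : dt e0 V = ∑ τ : T ≃ α, sg e0 τ * ∏ t, V t (τ t) := by
  rw [dt, ← Matrix.det_transpose, Matrix.det_apply']
  refine Fintype.sum_equiv ((Equiv.refl T).equivCongr e0) _ _ fun σ => ?_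
  simp only [sg, Matrix.transpose_apply, Matrix.of_apply]
  congr 3
  congr 1
  ext t
  simp [Equiv.equivCongr]

lemma sg_sq (τ : T ≃ α) : sg e0 τ * sg e0 τ = 1 := sign_sq_cast _

lemma sg_left (σ : Equiv.Perm T) (τ : T ≃ α) :
    sg e0 (σ.trans τ) = ((Equiv.Perm.sign σ : ℤ) : ℂ) * sg e0 τ := by
  have : (σ.trans τ).trans e0.symm = (τ.trans e0.symm : Equiv.Perm T) * σ := by
    ext t; simp
  rw [sg, this, Equiv.Perm.sign_mul, sg]
  push_cast; ring

lemma sg_right (z : Equiv.Perm α) (τ : T ≃ α) :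
    sg e0 (τ.trans z) = ((Equiv.Perm.sign z : ℤ) : ℂ) * sg e0 τ := by
  have : (τ.trans z).trans e0.symm = ((e0.trans z).trans e0.symm : Equiv.Perm T) * (τ.trans e0.symm) := by
    ext t; simp
  rw [sg, this, Equiv.Perm.sign_mul, sg]
  have h2 : Equiv.Perm.sign ((e0.trans z).trans e0.symm) = Equiv.Perm.sign z := by
    simpa using Equiv.Perm.sign_symm_trans_trans z e0.symm
  rw [h2]
  push_cast; ring

lemma dt_perm (σ : Equiv.Perm T) (V : T → α → ℂ) :
    dt e0 (V ∘ σ) = ((Equiv.Perm.sign σ : ℤ) : ℂ) * dt e0 V := by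
  rw [dt, dt, ← Matrix.det_permute]
  rfl

lemma dt_right (z : Equiv.Perm α) (V : T → α → ℂ) :
    dt e0 (fun t x => V t (z x)) = ((Equiv.Perm.sign z : ℤ) : ℂ) * dt e0 V := by
  rw [dt_eq, dt_eq, Finset.mul_sum]
  refine Fintype.sum_equiv ((Equiv.refl T).equivCongr z) _ _ fun τ => ?_
  have : ((Equiv.refl T).equivCongr z) τ = τ.trans z := by ext; simp
  rw [this, sg_right, ← mul_assoc, ← mul_assoc, sign_sq_cast, one_mul]
  rfl

/-- The indicator vectors of the entries of a tuple. -/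
def Ev {κ α : Type} [DecidableEq α] (i : κ → α) : κ → α → ℂ := fun k x => if x = i k then 1 else 0

end dt

section cb
variable {L κ α : Type} [Fintype L] [DecidableEq L] [Fintype κ] [DecidableEq κ]
  [Fintype α] [DecidableEq α] (e0 : L ⊕ κ ≃ α)

lemma prod_Ev {κ α : Type} [Fintype κ] [DecidableEq α] (i j : κ → α) : ∏ k, Ev i k (j k) = if i = j then 1 else 0 := by
  simp only [Ev]
  rw [Finset.prod_ite_zero]
  simp [funext_iff, eq_comm]

lemma dt_block (τ : L ⊕ κ ≃ α) (X : L → α → ℂ) :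
    dt e0 (Sum.elim X (Ev fun k => τ (Sum.inr k))) =
      sg e0 τ * Matrix.det (Matrix.of fun l l' => X l (τ (Sum.inl l'))) := by
  have h : dt e0 (Sum.elim X (Ev fun k => τ (Sum.inr k))) = sg e0 τ *
      dt τ (Sum.elim X (Ev fun k => τ (Sum.inr k))) := by
    rw [dt_eq, dt_eq, Finset.mul_sum]
    refine Finset.sum_congr rfl fun σ _ => ?_
    rw [← mul_assoc]
    congr 1
    have : (σ.trans e0.symm : Equiv.Perm (L ⊕ κ)) = (τ.trans e0.symm) * (σ.trans τ.symm) := by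
      ext t; simp
    rw [sg, this, Equiv.Perm.sign_mul]
    push_cast
    rfl
  rw [h, dt]
  congr 1
  have : (Matrix.of fun a b => Sum.elim X (Ev fun k => τ (Sum.inr k)) a (τ b)) =
      Matrix.fromBlocks (Matrix.of fun l l' => X l (τ (Sum.inl l')))
        (Matrix.of fun l k => X l (τ (Sum.inr k))) 0 1 := by
    ext a b
    rcases a with a | a <;> rcases b with b | b <;> simp [Ev, Matrix.one_apply, eq_comm]
  rw [this, Matrix.det_fromBlocks_zero₂₁, Matrix.det_one, mul_one]

lemma sum_ext {L κ α : Type} [Fintype L] [DecidableEq L] [Fintype κ] [DecidableEq κ]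
    [Fintype α] [DecidableEq α] (e0 : L ⊕ κ ≃ α)
    (F : (L → α) → ℂ) (hF : ∀ j, ¬ Function.Injective j → F j = 0) :
    ∑ τ : L ⊕ κ ≃ α, F (fun l => τ (Sum.inl l)) = ((Fintype.card κ).factorial : ℂ) * ∑ j, F j := by
  have hcard := Fintype.card_congr e0
  rw [Fintype.card_sum] at hcard
  have e1 : ∑ τ : L ⊕ κ ≃ α, F (fun l => τ (Sum.inl l)) =
      ∑ τ : L ⊕ κ ↪ α, F (fun l => τ (Sum.inl l)) := by
    refine Fintype.sum_bijective (fun τ : L ⊕ κ ≃ α => τ.toEmbedding) ⟨fun a b h => ?_, fun τ => ?_⟩ _ _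
      fun τ => rfl
    · ext t; exact DFunLike.congr_fun h t
    · refine ⟨Equiv.ofBijective τ ((Fintype.bijective_iff_injective_and_card _).2
        ⟨τ.injective, by rw [Fintype.card_sum, hcard]⟩), ?_⟩
      ext t; rfl
  have e3 := Fintype.sum_equiv Equiv.sumEmbeddingEquivSigmaEmbeddingRestricted
    (fun τ : L ⊕ κ ↪ α => F (fun l => τ (Sum.inl l)))
    (fun s : (Σ f : L ↪ α, κ ↪ ↥(Set.range f)ᶜ) => F s.1) (fun τ => rfl)
  rw [e1, e3, Fintype.sum_sigma]
  have e2 : ∀ f : L ↪ α, ∑ _x : κ ↪ ↥(Set.range f)ᶜ, F f = ((Fintype.card κ).factorial : ℂ) * F f := by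
    intro f
    rw [Finset.sum_const, Finset.card_univ, Fintype.card_embedding_eq, Fintype.card_compl_set,
      Set.card_range_of_injective f.injective, ← hcard, Nat.add_sub_cancel_left, Nat.descFactorial_self,
      nsmul_eq_mul]
  simp only [e2]
  rw [← Finset.mul_sum]
  congr 1
  refine Finset.sum_nbij (fun f : L ↪ α => (f : L → α)) ?_ ?_ ?_ ?_ |>.trans
    (Finset.sum_filter_of_ne (s := Finset.univ) (p := Function.Injective) (f := F) fun j _ h => by
      by_contra h'; exact h (hF j h'))
  · intro f _; simpa using f.injective
  · intro f _ g _ h; exact DFunLike.coe_injective h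
  · intro j hj
    exact ⟨⟨j, by simpa using hj⟩, by simp, rfl⟩
  · intro f _; rfl

lemma sum_prod_det (X Y : L → α → ℂ) :
    ∑ j : L → α, (∏ l, Y l (j l)) * Matrix.det (Matrix.of fun l l' => X l (j l')) =
      Matrix.det (Matrix.of fun l l' => ∑ x, X l x * Y l' x) := by
  simp only [Matrix.det_apply', Finset.mul_sum, Matrix.of_apply]
  rw [Finset.sum_comm]
  refine Finset.sum_congr rfl fun σ _ => ?_
  rw [Finset.prod_univ_sum, Finset.mul_sum, Fintype.piFinset_univ]
  refine Finset.sum_congr rfl fun j _ => ?_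
  rw [Finset.prod_mul_distrib]
  ring

/-- A form of the Cauchy–Binet formula. -/
lemma cauchy_binet (X Y : L → α → ℂ) :
    ∑ i : κ → α, dt e0 (Sum.elim X (Ev i)) * dt e0 (Sum.elim Y (Ev i)) =
      ((Fintype.card κ).factorial : ℂ) * Matrix.det (Matrix.of fun l l' => ∑ x, X l x * Y l' x) := by
  have e1 : ∑ i : κ → α, dt e0 (Sum.elim X (Ev i)) * dt e0 (Sum.elim Y (Ev i)) =
      ∑ τ : L ⊕ κ ≃ α, (fun j : L → α => (∏ l, Y l (j l)) * Matrix.det (Matrix.of fun l l' => X l (j l')))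
        (fun l => τ (Sum.inl l)) := by
    simp only [dt_eq e0 (Sum.elim Y _), Finset.mul_sum]
    rw [Finset.sum_comm]
    refine Finset.sum_congr rfl fun τ _ => ?_
    simp only [Fintype.prod_sum_type, Sum.elim_inl, Sum.elim_inr, prod_Ev]
    rw [Finset.sum_eq_single (fun k => τ (Sum.inr k))]
    · rw [if_pos rfl, dt_block]
      linear_combination (∏ l, Y l (τ (Sum.inl l))) *
        Matrix.det (Matrix.of fun l l' => X l (τ (Sum.inl l'))) * sg_sq e0 τ
    · intro i _ hi
      rw [if_neg hi]; simp
    · simp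
  rw [e1]
  refine (sum_ext e0 (fun j : L → α => (∏ l, Y l (j l)) *
    Matrix.det (Matrix.of fun l l' => X l (j l'))) ?_).trans ?_
  rotate_left
  · congr 1
    exact sum_prod_det X Y
  · intro j hj
    simp only [Function.Injective] at hj
    push Not at hj
    obtain ⟨a, b, hab, hne⟩ := hj
    rw [Matrix.det_zero_of_column_eq hne (fun l => by simp [hab]), mul_zero]

end cb

/-! ### The Hodge-type operator attached to a set partition -/


section hodge
variable {κ m α : Type} [Fintype κ] [DecidableEq κ] [Fintype m] [DecidableEq m]
  [Fintype α] [DecidableEq α] (q : α → m) (e0 : (κ ⊕ m) ⊕ κ ≃ α)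

/-- The indicator vectors of the fibres of `q`. -/
def Uv : m → α → ℂ := fun o x => if q x = o then 1 else 0

/-- The matrix of the Hodge-type operator: the determinant of the indicator vectors of the
entries of `i`, of the fibres of `q`, and of the entries of `i'`. -/
def HA : Matrix (κ → α) (κ → α) ℂ :=
  Matrix.of fun i i' => dt e0 (Sum.elim (Sum.elim (Ev i) (Uv q)) (Ev i'))

/-- The permutation of the index type exchanging the two copies of `κ`. -/
def swp (κ m : Type) : Equiv.Perm ((κ ⊕ m) ⊕ κ) where
  toFun := Sum.elim (Sum.elim (fun k => Sum.inr k) (fun o => Sum.inl (Sum.inr o)))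
    (fun k => Sum.inl (Sum.inl k))
  invFun := Sum.elim (Sum.elim (fun k => Sum.inr k) (fun o => Sum.inl (Sum.inr o)))
    (fun k => Sum.inl (Sum.inl k))
  left_inv := by rintro ((a | a) | a) <;> rfl
  right_inv := by rintro ((a | a) | a) <;> rfl

lemma HA_swap (i i' : κ → α) :
    HA q e0 i i' = ((Equiv.Perm.sign (swp κ m) : ℤ) : ℂ) * HA q e0 i' i := by
  simp only [HA, Matrix.of_apply]
  rw [← dt_perm]
  congr 1
  funext t
  rcases t with (a | a) | a <;> rfl

lemma HA_conj (i i' : κ → α) : (starRingEnd ℂ) (HA q e0 i i') = HA q e0 i i' := by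
  simp only [HA, Matrix.of_apply, dt]
  rw [RingHom.map_det]
  congr 1
  ext a b
  rcases a with (a | a) | a <;> simp [Ev, Uv] <;> split_ifs <;> simp

lemma HA_star : (HA q e0).conjTranspose = ((Equiv.Perm.sign (swp κ m) : ℤ) : ℂ) • HA q e0 := by
  ext i i'
  rw [Matrix.conjTranspose_apply, Matrix.smul_apply, smul_eq_mul, ← HA_swap]
  exact HA_conj q e0 i' i

/-- The size of a fibre of `q`. -/
def fb (o : m) : ℂ := ((Finset.univ.filter fun x => q x = o).card : ℂ)

/-- The orthogonal projection away from the functions constant on the fibres of `q`. -/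
def Rp (x y : α) : ℂ := (if x = y then 1 else 0) - (if q x = q y then (fb q (q x))⁻¹ else 0)

/-- The operator induced by the projection `Rp` on alternating tensors. -/
def HP (κ : Type) [Fintype κ] [DecidableEq κ] : Matrix (κ → α) (κ → α) ℂ :=
  Matrix.of fun i i' => Matrix.det (Matrix.of fun a b => Rp q (i a) (i' b))

lemma HA_mul_star (hq : ∀ o, fb q o ≠ 0) :
    HA q e0 * (HA q e0).transpose =
      (((Fintype.card κ).factorial : ℂ) * ∏ o, fb q o) • HP q κ := by
  ext i i'
  rw [Matrix.mul_apply]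
  simp only [Matrix.transpose_apply, Matrix.smul_apply, HA, HP, Matrix.of_apply, smul_eq_mul]
  rw [cauchy_binet e0, mul_assoc]
  congr 1
  letI inv : Invertible (Matrix.diagonal (fb q)) := ⟨Matrix.diagonal fun o => (fb q o)⁻¹,
    by rw [Matrix.diagonal_mul_diagonal, ← Matrix.diagonal_one]
       congr 1; funext o; exact inv_mul_cancel₀ (hq o),
    by rw [Matrix.diagonal_mul_diagonal, ← Matrix.diagonal_one]
       congr 1; funext o; exact mul_inv_cancel₀ (hq o)⟩
  have hinv : ⅟(Matrix.diagonal (fb q)) = Matrix.diagonal fun o => (fb q o)⁻¹ := rfl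
  have hblock : (Matrix.of fun l l' => ∑ x, Sum.elim (Ev i) (Uv q) l x * Sum.elim (Ev i') (Uv q) l' x) =
      Matrix.fromBlocks (Matrix.of fun a b => if i a = i' b then (1 : ℂ) else 0)
        (Matrix.of fun a o => if q (i a) = o then (1 : ℂ) else 0)
        (Matrix.of fun o b => if q (i' b) = o then (1 : ℂ) else 0)
        (Matrix.diagonal (fb q)) := by
    ext l l'
    rcases l with a | o <;> rcases l' with b | o'
    · simp [Ev, eq_comm]
    · simp only [Ev, Uv, Matrix.of_apply, Sum.elim_inr, Sum.elim_inl, Matrix.fromBlocks_apply₁₂]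
      rw [Finset.sum_eq_single (i a)] <;> simp +contextual
    · simp only [Ev, Uv, Matrix.of_apply, Sum.elim_inr, Sum.elim_inl, Matrix.fromBlocks_apply₂₁]
      rw [Finset.sum_eq_single (i' b)] <;> simp +contextual
    · simp only [Uv, Matrix.of_apply, Sum.elim_inr, Matrix.fromBlocks_apply₂₂, Matrix.diagonal_apply]
      split_ifs with h
      · subst h
        simp only [fb, mul_ite, mul_one, mul_zero]
        rw [Finset.card_filter]
        push_cast
        exact Finset.sum_congr rfl fun x _ => by split_ifs <;> rfl
      · refine Finset.sum_eq_zero fun x _ => ?_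
        by_cases hx : q x = o
        · rw [if_neg (fun h' => h (hx.symm.trans h')), mul_zero]
        · rw [if_neg hx, zero_mul]
  rw [hblock, Matrix.det_fromBlocks₂₂, Matrix.det_diagonal, hinv]
  congr 2
  ext a b
  rw [Matrix.sub_apply, Matrix.mul_apply]
  simp only [Matrix.mul_diagonal, Matrix.of_apply, Rp]
  congr 1
  rw [Finset.sum_eq_single (q (i a))]
  · by_cases h : q (i a) = q (i' b)
    · simp [h]
    · simp [h, Ne.symm h]
  · intro o _ ho
    rw [if_neg (Ne.symm ho)]; simp
  · simp

lemma Rp_mul (hq : ∀ o, fb q o ≠ 0) (x z : α) : ∑ y, Rp q x y * Rp q y z = Rp q x z := by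
  simp only [Rp, sub_mul, mul_sub, Finset.sum_sub_distrib]
  have h1 : ∑ y, (if q x = q y then (fb q (q x))⁻¹ else 0) * (if q y = q z then (fb q (q y))⁻¹ else 0)
      = if q x = q z then (fb q (q x))⁻¹ else 0 := by
    split_ifs with h
    · have : ∀ y, (if q x = q y then (fb q (q x))⁻¹ else 0) * (if q y = q z then (fb q (q y))⁻¹ else 0)
        = if q y = q x then (fb q (q x))⁻¹ * (fb q (q x))⁻¹ else 0 := by
        intro y
        by_cases hy : q y = q x
        · simp [hy, h]
        · simp [hy, Ne.symm hy]
      simp only [this]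
      rw [← Finset.sum_filter, Finset.sum_const, nsmul_eq_mul, ← mul_assoc]
      change fb q (q x) * _ * _ = _
      rw [mul_inv_cancel₀ (hq _), one_mul]
    · refine Finset.sum_eq_zero fun y _ => ?_
      by_cases hy : q x = q y
      · rw [if_neg (fun h' => h (hy.trans h')), mul_zero]
      · rw [if_neg hy, zero_mul]
  rw [h1]
  have h2 : ∀ F : α → ℂ, ∑ y, (if x = y then 1 else 0) * F y = F x := by intro F; simp
  have h3 : ∀ F : α → ℂ, ∑ y, F y * (if y = z then 1 else 0) = F z := by intro F; simp
  rw [h2, h2, h3]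
  ring

lemma HP_mul (hq : ∀ o, fb q o ≠ 0) :
    HP q κ * HP q κ = ((Fintype.card κ).factorial : ℂ) • HP q κ := by
  ext i i'
  rw [Matrix.mul_apply]
  simp only [Matrix.smul_apply, HP, Matrix.of_apply, smul_eq_mul]
  have h1 : ∀ j : κ → α, Matrix.det (Matrix.of fun a b => Rp q (j a) (i' b)) =
      ∑ σ : Equiv.Perm κ, ((Equiv.Perm.sign σ : ℤ) : ℂ) * ∏ a, Rp q (j (σ a)) (i' a) := by
    intro j; rw [Matrix.det_apply']; rfl
  simp only [h1, Finset.mul_sum]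
  rw [Finset.sum_comm]
  have h2 : ∀ σ : Equiv.Perm κ, ∑ j : κ → α, Matrix.det (Matrix.of fun a b => Rp q (i a) (j b)) *
      (((Equiv.Perm.sign σ : ℤ) : ℂ) * ∏ a, Rp q (j (σ a)) (i' a)) =
      Matrix.det (Matrix.of fun a b => Rp q (i a) (i' b)) := by
    intro σ
    have h3 := sum_prod_det (fun a x => Rp q (i a) x) (fun a x => Rp q x (i' a))
    simp only [Rp_mul q hq] at h3
    rw [← h3]
    refine Fintype.sum_equiv (σ.symm.arrowCongr (Equiv.refl α)) _ _ fun j => ?_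
    have h4 : (σ.symm.arrowCongr (Equiv.refl α)) j = j ∘ σ := by ext; simp
    rw [h4]
    have h5 := Matrix.det_permute' σ (Matrix.of fun a b => Rp q (i a) (j b))
    have h6 : (Matrix.of fun a b => Rp q (i a) (j b)).submatrix id σ =
      Matrix.of fun a b => Rp q (i a) ((j ∘ σ) b) := rfl
    rw [h6] at h5
    rw [h5]
    simp only [Function.comp]
    ring
  simp only [h2]
  rw [Finset.sum_const, Finset.card_univ, Fintype.card_perm, nsmul_eq_mul, ← Finset.mul_sum, ← h1]

/-- The scalar `c` with `A³ = c A`. -/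
def hc : ℂ := ((Equiv.Perm.sign (swp κ m) : ℤ) : ℂ) * (((Fintype.card κ).factorial : ℂ) ^ 2 * ∏ o, fb q o)

open scoped ComplexOrder in
/-- `A²` is a multiple of `HP`, itself a multiple of a projection; hence the eigenvalues of `A` are among
`0` and the two square roots of `hc`. -/
lemma HA_cube (hq : ∀ o, fb q o ≠ 0) :
    HA q e0 * HA q e0 * HA q e0 = hc (κ := κ) q • HA q e0 := by
  set s : ℂ := ((Equiv.Perm.sign (swp κ m) : ℤ) : ℂ) with hs
  have hss : s * s = 1 := sign_sq_cast _
  have hsc : star s = s := by rw [hs]; simp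
  have ht : (HA q e0).transpose = s • HA q e0 := by
    ext i i'; exact HA_swap q e0 i' i
  have h1 := HA_mul_star q e0 hq
  rw [ht, Matrix.mul_smul] at h1
  set K : ℂ := ((Fintype.card κ).factorial : ℂ)
  have h2 : HA q e0 * HA q e0 = (s * (K * ∏ o, fb q o)) • HP q κ := by
    rw [mul_smul, ← h1, smul_smul, hss, one_smul]
  have hcdef : hc (κ := κ) q = s * (K ^ 2 * ∏ o, fb q o) := rfl
  have hcc : star (hc (κ := κ) q) = hc (κ := κ) q := by
    rw [hcdef, star_mul', hsc, star_mul', star_pow, star_prod]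
    congr 2
    · simp [K]
    · exact Finset.prod_congr rfl fun o _ => by simp [fb]
  set A := HA q e0 with hA
  set c := hc (κ := κ) q
  have h4 : A * A * (A * A) = c • (A * A) := by
    rw [h2, Matrix.smul_mul, Matrix.mul_smul, HP_mul q hq, smul_smul, smul_smul, smul_smul, hcdef]
    congr 1
    change _ * K = _
    ring
  have hN : (A * A * A - c • A) * (A * A * A - c • A).conjTranspose = 0 := by
    have : (A * A * A - c • A).conjTranspose = s • (A * A * A - c • A) := by
      rw [Matrix.conjTranspose_sub, Matrix.conjTranspose_mul, Matrix.conjTranspose_mul,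
        Matrix.conjTranspose_smul, HA_star, hcc, ← hs, ← hA]
      simp only [Matrix.smul_mul, Matrix.mul_smul, smul_smul, hss, one_smul, smul_sub, mul_comm c s,
        mul_assoc]
    rw [this, Matrix.mul_smul]
    have h5 : (A * A * A - c • A) * (A * A * A - c • A) =
        A * A * (A * A) * (A * A) - (2 * c) • (A * A * (A * A)) + (c * c) • (A * A) := by
      simp only [mul_sub, sub_mul, Matrix.smul_mul, Matrix.mul_smul, smul_smul, mul_assoc, two_mul, add_smul]
      abel
    rw [h5, h4, Matrix.smul_mul, h4, smul_smul, smul_smul, ← sub_smul, ← add_smul]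
    rw [show c * c - 2 * c * c + c * c = 0 by ring, zero_smul, smul_zero]
  exact sub_eq_zero.1 (Matrix.self_mul_conjTranspose_eq_zero.1 hN)

lemma HA_equiv (h : Equiv.Perm α) (hh : ∀ x, q (h x) = q x) (i i' : κ → α) :
    HA q e0 (h ∘ i) (h ∘ i') = ((Equiv.Perm.sign h : ℤ) : ℂ) * HA q e0 i i' := by
  simp only [HA, Matrix.of_apply]
  have := dt_right e0 h⁻¹ (Sum.elim (Sum.elim (Ev i) (Uv q)) (Ev i'))
  rw [Equiv.Perm.sign_inv] at this
  rw [← this]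
  congr 1
  funext t x
  have hx : q (h⁻¹ x) = q x := by rw [← hh (h⁻¹ x)]; simp
  rcases t with (a | a) | a
  · simp only [Ev, Sum.elim_inl, Function.comp, Equiv.Perm.inv_eq_iff_eq]
  · simp only [Uv, Sum.elim_inl, Sum.elim_inr, hx]
  · simp only [Ev, Sum.elim_inr, Function.comp, Equiv.Perm.inv_eq_iff_eq]

/-- The trace of the Hodge-type operator against a permutation. -/
def hf (h : Equiv.Perm α) : ℂ := ∑ i : κ → α, HA q e0 i (h ∘ i)

lemma hf_eq (h : Equiv.Perm α) : hf q e0 h = ∑ τ : (κ ⊕ m) ⊕ κ ≃ α, sg e0 τ *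
    if (∀ k, h (τ (Sum.inl (Sum.inl k))) = τ (Sum.inr k)) ∧ ∀ o, q (τ (Sum.inl (Sum.inr o))) = o
    then 1 else 0 := by
  simp only [hf, HA, Matrix.of_apply, dt_eq]
  rw [Finset.sum_comm]
  refine Finset.sum_congr rfl fun τ _ => ?_
  rw [← Finset.mul_sum]
  congr 1
  simp only [Fintype.prod_sum_type, Sum.elim_inl, Sum.elim_inr, prod_Ev]
  rw [Finset.sum_eq_single (fun k => τ (Sum.inl (Sum.inl k)))]
  · rw [if_pos rfl, one_mul]
    simp only [Uv, Finset.prod_ite_zero, Finset.prod_const_one, funext_iff, Function.comp, Finset.mem_univ,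
      true_imp_iff]
    simp only [mul_ite, mul_one, mul_zero, ← ite_and]
  · intro i _ hi
    rw [if_neg hi]; simp
  · simp

lemma hf_conj (h x : Equiv.Perm α) (hx : ∀ y, q (x y) = q y) :
    hf q e0 (x * h * x⁻¹) = ((Equiv.Perm.sign x : ℤ) : ℂ) * hf q e0 h := by
  rw [hf, hf, Finset.mul_sum]
  refine (Fintype.sum_equiv ((Equiv.refl κ).arrowCongr x) _ _ fun i => ?_).symm
  rw [← HA_equiv q e0 x hx]
  congr 1
  funext k
  simp

/-- The eigenspaces of `A` for the two square roots `±w` of `hc` are representations of every group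
of even permutations preserving the fibres of `q`; the twisted trace is `w` times the difference
of their characters. -/
lemma hodge_chr {G : Type} [Group G] [Fintype G] (φ : G →* Equiv.Perm α)
    (hφ : ∀ g x, q (φ g x) = q x) (hsn : ∀ g, Equiv.Perm.sign (φ g) = 1) (hq : ∀ o, fb q o ≠ 0) :
    ∃ w : ℂ, w ^ 2 = hc (κ := κ) q ∧ ∃ a ∈ Chr G, ∃ b ∈ Chr G, ∀ g, hf q e0 (φ g) = w * (a g - b g) := by
  obtain ⟨w, hw⟩ := IsAlgClosed.exists_pow_nat_eq (hc (κ := κ) q) (n := 2) (by norm_num)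
  have hc0 : hc (κ := κ) q ≠ 0 := by
    refine mul_ne_zero ?_ (mul_ne_zero (pow_ne_zero _ (by exact_mod_cast Nat.factorial_ne_zero _))
      (Finset.prod_ne_zero_iff.2 fun o _ => hq o))
    intro h0
    have := sign_sq_cast (swp κ m)
    rw [h0] at this; simp at this
  have hw0 : w ≠ 0 := by rintro rfl; apply hc0; rw [← hw]; simp
  let M : G →* Matrix (κ → α) (κ → α) ℂ :=
    { toFun := fun g => Matrix.of fun i i' => if i = φ g ∘ i' then 1 else 0
      map_one' := by ext i i'; simp [Matrix.one_apply]
      map_mul' := by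
        intro g h; ext i i'
        simp [Matrix.mul_apply, Function.comp_assoc] }
  have hM : ∀ g, HA q e0 * M g = M g * HA q e0 := by
    intro g
    ext i i'
    have e1 : (HA q e0 * M g) i i' = HA q e0 i (φ g ∘ i') := by simp [M, Matrix.mul_apply]
    have e2 : (M g * HA q e0) i i' = HA q e0 (φ g⁻¹ ∘ i) i' := by
      rw [Matrix.mul_apply, Finset.sum_eq_single (φ g⁻¹ ∘ i)]
      · simp [M, ← Function.comp_assoc]
      · intro j _ hj
        have : i ≠ φ g ∘ j := by
          rintro rfl; apply hj; funext k; simp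
        simp [M, this]
      · simp
    rw [e1, e2]
    have := HA_equiv q e0 (φ g) (hφ g) (φ g⁻¹ ∘ i) i'
    rw [hsn] at this
    have h3 : φ g ∘ φ g⁻¹ ∘ i = i := by funext k; simp
    rw [h3] at this
    simpa using this
  have hcube := HA_cube q e0 hq
  set J := w⁻¹ • HA q e0 with hJ
  have hJ3 : J * J * J = J := by
    rw [hJ]
    simp only [Matrix.smul_mul, Matrix.mul_smul, smul_smul, hcube, ← hw]
    congr 1; field_simp
  have hJM : ∀ g, J * M g = M g * J := by
    intro g; rw [hJ, Matrix.smul_mul, Matrix.mul_smul, hM]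
  have hJ4 : J * J * (J * J) = J * J := by rw [← mul_assoc, hJ3]
  have hJ3' : J * (J * J) = J := by rw [← mul_assoc, hJ3]
  have key : ∀ t : ℂ, t * t = 1 → (fun g => (((2:ℂ)⁻¹ • (J * J + t • J)) * M g).trace) ∈ Chr G := by
    intro t ht
    apply Chr.of_idem
    · simp only [Matrix.smul_mul, Matrix.mul_smul, mul_add, add_mul, smul_smul, hJ3, hJ3', hJ4, ht, one_smul,
        smul_add]
      match_scalars
      · linear_combination (1 / 4 : ℂ) * ht
      · ring
    · intro g
      have : J * J * M g = M g * (J * J) := by rw [mul_assoc, hJM, ← mul_assoc, hJM, mul_assoc]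
      simp only [Matrix.smul_mul, Matrix.mul_smul, mul_add, add_mul, this, hJM]
  refine ⟨w, hw, _, key 1 (by norm_num), _, key (-1) (by norm_num), fun g => ?_⟩
  have htr : hf q e0 (φ g) = (HA q e0 * M g).trace := by
    rw [hf, Matrix.trace]
    refine Finset.sum_congr rfl fun i _ => ?_
    simp [M, Matrix.mul_apply]
  have hA : HA q e0 = w • J := by rw [hJ, smul_smul, mul_inv_cancel₀ hw0, one_smul]
  rw [htr, hA]
  simp only [Matrix.smul_mul, add_mul, Matrix.trace_smul, Matrix.trace_add, smul_eq_mul]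
  ring

end hodge

/-! ### Permutations centralized only by even permutations -/

section orbits
variable {n : ℕ}

/-- The map sending a point to its orbit. -/
def qo (g : Equiv.Perm (Fin n)) : Fin n → Orb g := fun a => Quotient.mk _ a

lemma qo_eq_iff {g : Equiv.Perm (Fin n)} {a b : Fin n} : qo g a = qo g b ↔ g.SameCycle a b :=
  mk_eq_iff g a b

lemma qo_zpow (g : Equiv.Perm (Fin n)) (r : ℤ) (a : Fin n) : qo g ((g ^ r) a) = qo g a :=
  qo_eq_iff.2 (Equiv.Perm.SameCycle.symm ⟨r, rfl⟩)

lemma fb_qo (g : Equiv.Perm (Fin n)) (o : Orb g) : fb (qo g) o = (olen g o : ℂ) := by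
  rw [fb, olen]
  congr

lemma olen_pos (g : Equiv.Perm (Fin n)) (o : Orb g) : 0 < olen g o :=
  Finset.card_pos.2 ⟨o.out, by simp⟩

lemma zpow_fix_iff (g : Equiv.Perm (Fin n)) (a : Fin n) (r : ℤ) :
    (g ^ r) a = a ↔ (olen g (qo g a) : ℤ) ∣ r := by
  have h := MulAction.zpow_smul_eq_iff_minimalPeriod_dvd (a := g) (b := a) (n := r)
  rw [MulAction.minimalPeriod_eq_card] at h
  have hc : Fintype.card (MulAction.orbit (Subgroup.zpowers g) a) = olen g (qo g a) := by
    rw [olen, ← Set.toFinset_card]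
    congr 1
    ext y
    simp only [Set.mem_toFinset, Finset.mem_filter, Finset.mem_univ, true_and]
    change y ∈ MulAction.orbit _ a ↔ qo g y = qo g a
    rw [eq_comm, qo_eq_iff, MulAction.mem_orbit_iff]
    constructor
    · rintro ⟨⟨_, ⟨r, rfl⟩⟩, h⟩; exact ⟨r, h⟩
    · rintro ⟨r, h⟩; exact ⟨⟨_, ⟨r, rfl⟩⟩, h⟩
  rw [hc] at h
  exact h

lemma zpow_eq_iff (g : Equiv.Perm (Fin n)) (a : Fin n) (r s : ℤ) :
    (g ^ r) a = (g ^ s) a ↔ (olen g (qo g a) : ℤ) ∣ r - s := by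
  rw [← zpow_fix_iff, sub_eq_neg_add, zpow_add, Equiv.Perm.mul_apply, zpow_neg,
    Equiv.Perm.inv_eq_iff_eq]

/-- Two permutations with the same orbits are conjugate by a permutation preserving every orbit,
and this permutation can be chosen to match prescribed base points. -/
lemma exists_conj (g h : Equiv.Perm (Fin n)) (hsc : ∀ x y, h.SameCycle x y ↔ g.SameCycle x y)
    (j j' : Orb g → Fin n) (hj : ∀ o, qo g (j o) = o) (hj' : ∀ o, qo g (j' o) = o) :
    ∃ w : Equiv.Perm (Fin n), (∀ x, w (g x) = h (w x)) ∧ (∀ o, w (j o) = j' o) ∧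
      ∀ x, qo g (w x) = qo g x := by
  have hlen : ∀ a, olen h (qo h a) = olen g (qo g a) := by
    intro a
    rw [olen, olen]
    congr 1
    ext y
    simp only [Finset.mem_filter, Finset.mem_univ, true_and]
    change qo h y = qo h a ↔ qo g y = qo g a
    rw [qo_eq_iff, qo_eq_iff, hsc]
  have hr : ∀ x, ∃ r : ℤ, (g ^ r) (j (qo g x)) = x := fun x => qo_eq_iff.1 (hj (qo g x))
  choose r hr using hr
  have hqh : ∀ (s : ℤ) a, qo g ((h ^ s) a) = qo g a := fun s a =>
    (qo_eq_iff.2 ((hsc _ _).1 ⟨s, rfl⟩)).symm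
  let w : Fin n → Fin n := fun x => (h ^ r x) (j' (qo g x))
  have hw : ∀ o (s : ℤ), w ((g ^ s) (j o)) = (h ^ s) (j' o) := by
    intro o s
    have h1 : qo g ((g ^ s) (j o)) = o := by rw [qo_zpow, hj]
    have h2 := hr ((g ^ s) (j o))
    simp only [w]
    rw [h1] at h2 ⊢
    rw [zpow_eq_iff] at h2 ⊢
    rw [hlen, hj', ← hj o]
    rwa [hj] at h2 ⊢
  have hqw : ∀ x, qo g (w x) = qo g x := fun x => by simp only [w]; rw [hqh, hj']
  have hinj : Function.Injective w := by
    intro x y hxy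
    have hq : qo g x = qo g y := by rw [← hqw x, ← hqw y, hxy]
    rw [← hr x, ← hr y] at hxy ⊢
    rw [hw, hw, ← hq, zpow_eq_iff, hlen, hj'] at hxy
    rw [← hq, zpow_eq_iff, hj]
    exact hxy
  refine ⟨Equiv.ofBijective w (Finite.injective_iff_bijective.1 hinj), fun x => ?_, fun o => ?_, hqw⟩
  · change w (g x) = h (w x)
    obtain ⟨s, hs⟩ : ∃ s : ℤ, (g ^ s) (j (qo g x)) = x := ⟨_, hr x⟩
    conv_lhs => rw [← hs]
    conv_rhs => rw [← hs]
    rw [hw, ← Equiv.Perm.mul_apply, ← zpow_one_add, hw, zpow_one_add, Equiv.Perm.mul_apply]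
  · have := hw o 0
    simpa using this

end orbits

section split
variable {n : ℕ} (g : Equiv.Perm (Fin n))

/-- A permutation centralized only by even permutations has distinct odd cycle lengths, so the
order of its centralizer is their product. -/
lemma split_typ (hg : Subgroup.centralizer {g} ≤ alternatingGroup (Fin n)) :
    (∀ o, Odd (olen g o)) ∧ Nat.card (Subgroup.centralizer {g}) = ∏ o, olen g o := by
  obtain ⟨h1, h2, h3⟩ := Equiv.Perm.centralizer_le_alternating_iff.1 hg
  have ht : typ g = _ := typ_eq_orb g
  have hp : typ g = g.cycleType + Multiset.replicate (n - g.support.card) 1 := by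
    rw [typ, Equiv.Perm.parts_partition, Fintype.card_fin]
  constructor
  · intro o
    have hm : olen g o ∈ typ g := by rw [ht]; exact Multiset.mem_map_of_mem _ (by simp)
    rw [hp, Multiset.mem_add] at hm
    rcases hm with hm | hm
    · exact h1 _ hm
    · rw [Multiset.eq_of_mem_replicate hm]; exact odd_one
  · have e1 : ∏ o, olen g o = (typ g).prod := by rw [ht]; rfl
    rw [e1, hp, Equiv.Perm.nat_card_centralizer, Multiset.prod_add]
    have e2 : ∏ k ∈ g.cycleType.toFinset, (g.cycleType.count k).factorial = 1 := by
      refine Finset.prod_eq_one fun k _ => ?_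
      have := h3 k
      interval_cases g.cycleType.count k <;> rfl
    have e3 : (Fintype.card (Fin n) - g.cycleType.sum).factorial = 1 := by
      rw [Nat.factorial_eq_one]; omega
    rw [e2, e3]; simp

/-- Index type for half of the non-base points of the orbits of `g`, all of odd length. -/
abbrev Kp : Type := Σ o : Orb g, Fin (olen g o / 2)

/-- The orbit to which an index belongs. -/
def io : (Kp g ⊕ Orb g) ⊕ Kp g → Orb g := Sum.elim (Sum.elim (fun k => k.1) id) (fun k => k.1)

/-- The position of an index along its orbit. -/
def ix : (Kp g ⊕ Orb g) ⊕ Kp g → ℕ :=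
  Sum.elim (Sum.elim (fun k => 2 * k.2 + 1) (fun _ => 0)) (fun k => 2 * k.2 + 2)

variable {g}

lemma ix_lt (ho : ∀ o, Odd (olen g o)) (t) : ix g t < olen g (io g t) := by
  rcases t with (⟨o, r⟩ | o) | ⟨o, r⟩
  · have := r.2; simp only [ix, io, Sum.elim_inl]; omega
  · exact olen_pos g o
  · have := r.2
    obtain ⟨c, hc⟩ := ho o
    simp only [ix, io, Sum.elim_inr]; omega

lemma qo_out (o : Orb g) : qo g o.out = o := Quotient.out_eq o

lemma e0_inj (ho : ∀ o, Odd (olen g o)) :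
    Function.Injective fun t => (g ^ (ix g t : ℤ)) (io g t).out := by
  intro t t' h
  have h1 : io g t = io g t' := by
    have := congrArg (qo g) h
    simpa only [qo_zpow, qo_out] using this
  have l1 := ix_lt ho t
  have l2 := ix_lt ho t'
  simp only [← h1] at h l2
  rw [zpow_eq_iff, qo_out] at h
  have h2 : ix g t = ix g t' := by
    have := Int.eq_zero_of_abs_lt_dvd h (by rw [abs_lt]; omega)
    omega
  rcases t with (⟨o, r⟩ | o) | ⟨o, r⟩ <;> rcases t' with (⟨o', r'⟩ | o') | ⟨o', r'⟩ <;>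
    simp only [ix, io, Sum.elim_inl, Sum.elim_inr, id] at h1 h2
  · subst h1
    have : r = r' := by ext; omega
    rw [this]
  · omega
  · omega
  · omega
  · rw [h1]
  · omega
  · omega
  · omega
  · subst h1
    have : r = r' := by ext; omega
    rw [this]

/-- The reference enumeration of the points along the orbits of `g`. -/
def e0 (ho : ∀ o, Odd (olen g o)) : (Kp g ⊕ Orb g) ⊕ Kp g ≃ Fin n :=
  Equiv.ofBijective (fun t => (g ^ (ix g t : ℤ)) (io g t).out) <|
    (Fintype.bijective_iff_injective_and_card _).2 ⟨e0_inj ho, by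
      rw [Fintype.card_fin, Fintype.card_sum, Fintype.card_sum, Fintype.card_sigma]
      simp only [Fintype.card_fin]
      conv_rhs => rw [← sum_olen g]
      rw [Fintype.card_eq_sum_ones, ← Finset.sum_add_distrib, ← Finset.sum_add_distrib]
      refine Finset.sum_congr rfl fun o _ => ?_
      obtain ⟨c, hc⟩ := ho o
      omega⟩

lemma e0_apply (ho : ∀ o, Odd (olen g o)) (t) : e0 ho t = (g ^ (ix g t : ℤ)) (io g t).out := rfl

variable (g) in
/-- The enumerations contributing to the trace of `h`. -/
def Valid (h : Equiv.Perm (Fin n)) (τ : (Kp g ⊕ Orb g) ⊕ Kp g ≃ Fin n) : Prop :=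
  (∀ k, h (τ (Sum.inl (Sum.inl k))) = τ (Sum.inr k)) ∧ ∀ o, qo g (τ (Sum.inl (Sum.inr o))) = o

lemma e0_valid (ho : ∀ o, Odd (olen g o)) : Valid g g (e0 ho) := by
  constructor
  · rintro ⟨o, r⟩
    rw [e0_apply, e0_apply, ← Equiv.Perm.mul_apply, ← zpow_one_add]
    congr 2
    simp only [ix, Sum.elim_inl, Sum.elim_inr]
    push_cast; ring_nf
  · intro o
    rw [e0_apply, qo_zpow, qo_out]; rfl

/-- The simultaneous action of a permutation of `Kp g` on both copies. -/
def sdbl (π : Equiv.Perm (Kp g)) : Equiv.Perm ((Kp g ⊕ Orb g) ⊕ Kp g) :=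
  Equiv.sumCongr (Equiv.sumCongr π (Equiv.refl _)) π

lemma sign_sdbl (π : Equiv.Perm (Kp g)) : Equiv.Perm.sign (sdbl π) = 1 := by
  have h1 := Equiv.Perm.sign_sumCongr (Equiv.sumCongr π (Equiv.refl (Orb g))) π
  have h2 := Equiv.Perm.sign_sumCongr π (1 : Equiv.Perm (Orb g))
  rw [sdbl]
  refine h1.trans ?_
  refine (congrArg (· * Equiv.Perm.sign π) h2).trans ?_
  simp

/-- A valid enumeration through the base points of the reference enumeration agrees with the latter
up to a simultaneous permutation. -/
lemma valid_base (ho : ∀ o, Odd (olen g o)) (τ : (Kp g ⊕ Orb g) ⊕ Kp g ≃ Fin n) (hv : Valid g g τ)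
    (hb : ∀ o, τ (Sum.inl (Sum.inr o)) = o.out) : ∃ π, (sdbl π).trans τ = e0 ho := by
  have claim : ∀ (o : Orb g) (a : ℕ), a < olen g o →
      ((∃ k, τ (Sum.inl (Sum.inl k)) = (g ^ (a : ℤ)) o.out) ↔ Odd a) := by
    intro o a
    induction a with
    | zero =>
      intro _
      simp only [Nat.cast_zero, zpow_zero, Equiv.Perm.one_apply, Nat.not_odd_zero, iff_false]
      rintro ⟨k, hk⟩
      rw [← hb o] at hk
      simpa using τ.injective hk
    | succ a ih =>
      intro ha
      have ih := ih (by omega)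
      have hsucc : (g ^ ((a + 1 : ℕ) : ℤ)) o.out = g ((g ^ (a : ℤ)) o.out) := by
        rw [← Equiv.Perm.mul_apply, ← zpow_one_add]; congr 2; push_cast; ring
      obtain ⟨t, ht⟩ := τ.surjective ((g ^ ((a + 1 : ℕ) : ℤ)) o.out)
      rcases t with (k | o') | k
      · refine iff_of_true ⟨k, ht⟩ ?_
        rw [Nat.odd_add_one, ← ih]
        rintro ⟨k', hk'⟩
        rw [hsucc, ← hk', hv.1] at ht
        simpa using τ.injective ht
      · exfalso
        rw [hb] at ht
        have h1 : o' = o := by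
          have := congrArg (qo g) ht
          simpa only [qo_zpow, qo_out] using this
        subst h1
        have h2 := (zpow_fix_iff g _ _).1 ht.symm
        rw [qo_out] at h2
        have := Int.eq_zero_of_abs_lt_dvd h2 (by rw [abs_lt]; omega)
        omega
      · have hk : τ (Sum.inl (Sum.inl k)) = (g ^ (a : ℤ)) o.out := by
          apply g.injective
          rw [hv.1, ← hsucc, ht]
        refine iff_of_false ?_ ?_
        · rintro ⟨k', hk'⟩
          rw [← ht] at hk'
          simpa using τ.injective hk'
        · rw [Nat.odd_add_one, ← ih, not_not]; exact ⟨k, hk⟩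
  have h1 : ∀ k : Kp g, ∃ k', τ (Sum.inl (Sum.inl k')) = e0 ho (Sum.inl (Sum.inl k)) := by
    intro k
    exact (claim k.1 (2 * k.2 + 1) (ix_lt ho (Sum.inl (Sum.inl k)))).2 ⟨_, rfl⟩
  choose π hπ using h1
  have hinj : Function.Injective π := by
    intro a b hab
    have := (hπ a).symm.trans ((congrArg _ (by rw [hab])).trans (hπ b))
    simpa using (e0 ho).injective this
  refine ⟨Equiv.ofBijective π (Finite.injective_iff_bijective.1 hinj), ?_⟩
  ext1 t
  rcases t with (k | o) | k
  · exact hπ k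
  · exact hb o
  · change τ (Sum.inr (π k)) = _
    rw [← hv.1, hπ, (e0_valid ho).1]

variable (g) in
/-- The Young subgroup of permutations preserving every orbit of `g`. -/
def HS : Subgroup (Equiv.Perm (Fin n)) where
  carrier := {x | ∀ y, qo g (x y) = qo g y}
  one_mem' := fun y => rfl
  mul_mem' := by
    intro a b ha hb y
    rw [Equiv.Perm.mul_apply, ha, hb]
  inv_mem' := by
    intro a ha y
    have := ha (a⁻¹ y)
    have h1 : a (a⁻¹ y) = y := by simp
    rw [h1] at this
    exact this.symm

/-- The valid enumerations for `g` are obtained from the reference one by permuting the index set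
`Kp g` and by elements of the centralizer. -/
lemma valid_struct (ho : ∀ o, Odd (olen g o)) (τ : (Kp g ⊕ Orb g) ⊕ Kp g ≃ Fin n) (hv : Valid g g τ) :
    ∃ z ∈ HS g ⊓ Subgroup.centralizer {g}, ∃ π, τ = (sdbl π).trans ((e0 ho).trans z) := by
  obtain ⟨z, hz1, hz2, hz3⟩ := exists_conj g g (fun _ _ => Iff.rfl) (fun o => o.out)
    (fun o => τ (Sum.inl (Sum.inr o))) qo_out hv.2
  have hzc : z * g = g * z := by ext1 x; exact hz1 x
  have hzi : ∀ x, z.symm (g x) = g (z.symm x) := by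
    intro x; rw [Equiv.symm_apply_eq, hz1, Equiv.apply_symm_apply]
  obtain ⟨π, hπ⟩ := valid_base ho (τ.trans z.symm)
    ⟨fun k => by simp only [Equiv.trans_apply]; rw [← hzi, hv.1], fun o => by
      simp only [Equiv.trans_apply]
      rw [← hz2 o, Equiv.symm_apply_apply, qo_out]⟩
    (fun o => by simp only [Equiv.trans_apply]; rw [← hz2 o, Equiv.symm_apply_apply])
  refine ⟨z, Subgroup.mem_inf.2 ⟨hz3, ?_⟩, π.symm, ?_⟩
  · rw [Subgroup.mem_centralizer_singleton_iff]; exact hzc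
  · rw [← hπ]
    ext1 t
    rcases t with (k | o) | k <;> simp [sdbl]

/-- All valid enumerations contribute with the sign `+1`, so the twisted trace at `g` counts them. -/
lemma hf_g (hg : Subgroup.centralizer {g} ≤ alternatingGroup (Fin n)) (ho : ∀ o, Odd (olen g o)) :
    ∃ N : ℕ, hf (qo g) (e0 ho) g = N ∧ 0 < N ∧
      N ≤ Nat.card (HS g ⊓ Subgroup.centralizer {g} : Subgroup _) * (Fintype.card (Kp g)).factorial := by
  refine ⟨(Finset.univ.filter (Valid g g)).card, ?_, ?_, ?_⟩
  · rw [hf_eq, Finset.card_filter]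
    push_cast
    refine Finset.sum_congr rfl fun τ _ => ?_
    by_cases hv : Valid g g τ
    · rw [if_pos (show _ ∧ _ from hv), if_pos hv]
      obtain ⟨z, hz, π, rfl⟩ := valid_struct ho τ hv
      have hz1 : Equiv.Perm.sign z = 1 := Equiv.Perm.mem_alternatingGroup.1 (hg hz.2)
      rw [sg_left, sg_right, hz1, sign_sdbl]
      have : sg (e0 ho) (e0 ho) = 1 := by simp [sg]
      rw [this]; simp
    · rw [if_neg (show ¬ (_ ∧ _) from hv), if_neg hv, mul_zero]
  · exact Finset.card_pos.2 ⟨e0 ho, by simpa using e0_valid ho⟩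
  · have hsub : Finset.univ.filter (Valid g g) ⊆ (Finset.univ : Finset
        ((HS g ⊓ Subgroup.centralizer {g} : Subgroup _) × Equiv.Perm (Kp g))).image
        fun s => (sdbl s.2).trans ((e0 ho).trans (s.1 : Equiv.Perm (Fin n))) := by
      intro τ hτ
      obtain ⟨z, hz, π, rfl⟩ := valid_struct ho τ (by simpa using hτ)
      exact Finset.mem_image.2 ⟨(⟨z, hz⟩, π), Finset.mem_univ _, rfl⟩
    refine (Finset.card_le_card hsub).trans (Finset.card_image_le.trans ?_)
    rw [Finset.card_univ, Fintype.card_prod, Fintype.card_perm, Nat.card_eq_fintype_card]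

/-- On the Young subgroup of the orbits of `g` the twisted trace lives on the class of `g`: a valid
enumeration for `h` forces `h` to be a full cycle on each of these orbits. -/
lemma hf_supp (ho : ∀ o, Odd (olen g o)) (h : Equiv.Perm (Fin n)) (hh : h ∈ HS g)
    (hne : hf (qo g) (e0 ho) h ≠ 0) : ∃ w ∈ HS g, h = w * g * w⁻¹ := by
  have hv : ∃ τ, Valid g h τ := by
    by_contra hcon
    push Not at hcon
    apply hne
    rw [hf_eq]
    refine Finset.sum_eq_zero fun τ _ => ?_
    rw [if_neg (show ¬ (_ ∧ _) from hcon τ), mul_zero]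
  obtain ⟨τ, hv⟩ := hv
  have hmid : ∀ x, ∃ o, h.SameCycle x (τ (Sum.inl (Sum.inr o))) := by
    intro x
    by_contra hcon
    push Not at hcon
    -- along this cycle, the points of the two halves of `τ` alternate
    have alt : ∀ y, h.SameCycle x y →
        ((∃ k, τ (Sum.inl (Sum.inl k)) = h y) ↔ ¬ ∃ k, τ (Sum.inl (Sum.inl k)) = y) := by
      intro y hy
      have hy' : h.SameCycle x (h y) := Equiv.Perm.sameCycle_apply_right.2 hy
      obtain ⟨t, rfl⟩ := τ.surjective y
      rcases t with (k | o) | k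
      · refine iff_of_false ?_ (not_not.2 ⟨k, rfl⟩)
        rintro ⟨k', hk'⟩
        rw [hv.1] at hk'
        simpa using τ.injective hk'
      · exact absurd hy (hcon o)
      · refine iff_of_true ?_ ?_
        · obtain ⟨t', ht'⟩ := τ.surjective (h (τ (Sum.inr k)))
          rcases t' with (k' | o') | k'
          · exact ⟨k', ht'⟩
          · rw [← ht'] at hy'
            exact absurd hy' (hcon o')
          · rw [← hv.1] at ht'
            simpa using τ.injective (h.injective ht')
        · rintro ⟨k', hk'⟩
          simpa using τ.injective hk'
    have par : ∀ a : ℕ, (∃ k, τ (Sum.inl (Sum.inl k)) = (h ^ (a : ℤ)) x) ↔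
        ((∃ k, τ (Sum.inl (Sum.inl k)) = x) ↔ Even a) := by
      intro a
      induction a with
      | zero => simp
      | succ a ih =>
        have hsucc : (h ^ ((a + 1 : ℕ) : ℤ)) x = h ((h ^ (a : ℤ)) x) := by
          rw [← Equiv.Perm.mul_apply, ← zpow_one_add]; congr 2; push_cast; ring
        rw [hsucc, alt _ ⟨a, rfl⟩, ih, Nat.even_add_one]
        by_cases c1 : ∃ k, τ (Sum.inl (Sum.inl k)) = x <;> by_cases c2 : Even a <;> simp only [c1, c2] <;> simp
    have hev : Even (olen h (qo h x)) := by
      have h1 := par (olen h (qo h x))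
      have h2 : (h ^ ((olen h (qo h x) : ℕ) : ℤ)) x = x := (zpow_fix_iff h x _).2 dvd_rfl
      rw [h2] at h1
      by_cases c1 : ∃ k, τ (Sum.inl (Sum.inl k)) = x
      · exact (h1.1 c1).1 c1
      · by_contra c2
        exact c1 (h1.2 (iff_of_false c1 c2))
    have hfix : h x ≠ x := by
      intro hx
      rw [show qo h x = Quotient.mk _ x from rfl, olen_fixed h x hx] at hev
      exact absurd hev (by decide)
    have hsign : Equiv.Perm.sign (h.cycleOf x) = -1 := by
      rw [(Equiv.Perm.isCycle_cycleOf h hfix).sign, support_cycleOf_mk h x hfix]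
      rw [show (Quotient.mk _ x : Orb h) = qo h x from rfl, hev.neg_one_pow]
    have hcomm : h.cycleOf x * h = h * h.cycleOf x := by
      ext1 y
      simp only [Equiv.Perm.mul_apply, Equiv.Perm.cycleOf_apply, Equiv.Perm.sameCycle_apply_right]
      split_ifs <;> rfl
    have hz : ∀ y, qo g (h.cycleOf x y) = qo g y := by
      intro y
      rw [Equiv.Perm.cycleOf_apply]
      split_ifs
      · exact hh y
      · rfl
    have := hf_conj (qo g) (e0 ho) h (h.cycleOf x) hz
    rw [hcomm, mul_inv_cancel_right, hsign] at this
    apply hne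
    push_cast at this
    linear_combination (1 / 2 : ℂ) * this
  have hqh : ∀ x y, h.SameCycle x y → qo g x = qo g y := by
    rintro x y ⟨r, rfl⟩
    exact ((HS g).zpow_mem hh r x).symm
  have hm2 : ∀ x, h.SameCycle x (τ (Sum.inl (Sum.inr (qo g x)))) := by
    intro x
    obtain ⟨o, ho⟩ := hmid x
    have := hqh _ _ ho
    rw [hv.2] at this
    rwa [this]
  obtain ⟨w, hw1, -, hw3⟩ := exists_conj g h (fun x y => ⟨fun hxy => qo_eq_iff.1 (hqh x y hxy), fun hxy => by
    have h1 := hm2 x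
    rw [qo_eq_iff.2 hxy] at h1
    exact h1.trans (hm2 y).symm⟩) (fun o => o.out) (fun o => o.out) qo_out qo_out
  refine ⟨w, hw3, ?_⟩
  rw [eq_mul_inv_iff_mul_eq]
  ext1 x
  exact (hw1 x).symm

end split

/-! ### Functions odd under conjugation have large values -/


/-- Summation over a subgroup of a function supported on a single conjugacy class of it. -/
lemma orbit_sum {G : Type} [Group G] [Fintype G] (H : Subgroup G) (g : G) (hg : g ∈ H)
    (F : G → ℂ) (hinv : ∀ w ∈ H, F (w * g * w⁻¹) = F g)
    (hsupp : ∀ h ∈ H, F h ≠ 0 → ∃ w ∈ H, h = w * g * w⁻¹) :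
    (Nat.card (H ⊓ Subgroup.centralizer {g} : Subgroup G) : ℂ) *
      ∑ h ∈ Finset.univ.filter (fun h => h ∈ H), F h = (Nat.card H : ℂ) * F g := by
  have h1 : ∑ x ∈ Finset.univ.filter (fun h => h ∈ H), F (x * g * x⁻¹) =
      (Nat.card H : ℂ) * F g := by
    rw [Finset.sum_congr rfl (fun x hx => hinv x (Finset.mem_filter.1 hx).2), Finset.sum_const,
      nsmul_eq_mul, Nat.card_eq_fintype_card, Fintype.card_subtype]
  rw [← h1, ← Finset.sum_fiberwise_of_maps_to (g := fun x => x * g * x⁻¹)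
    (f := fun x => F (x * g * x⁻¹)) (s := Finset.univ.filter (fun h => h ∈ H))
    (t := Finset.univ.filter (fun h => h ∈ H)), Finset.mul_sum]
  · refine Finset.sum_congr rfl fun h hh => ?_
    rw [Finset.sum_congr rfl (fun x hx => by rw [(Finset.mem_filter.1 hx).2] :
      ∀ x ∈ _, F (x * g * x⁻¹) = F h), Finset.sum_const, nsmul_eq_mul]
    by_cases h0 : F h = 0
    · rw [h0]; simp
    obtain ⟨w, hw, rfl⟩ := hsupp h (Finset.mem_filter.1 hh).2 h0
    congr 2
    rw [Nat.card_eq_fintype_card, Fintype.card_subtype]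
    refine Finset.card_bij (fun x _ => w * x) ?_ ?_ ?_
    · intro x hx
      simp only [Finset.mem_filter, Finset.mem_univ, true_and, Subgroup.mem_inf,
        Subgroup.mem_centralizer_singleton_iff] at hx ⊢
      refine ⟨H.mul_mem hw hx.1, ?_⟩
      have : x * g * x⁻¹ = g := by rw [hx.2, mul_inv_cancel_right]
      calc w * x * g * (w * x)⁻¹ = w * (x * g * x⁻¹) * w⁻¹ := by group
        _ = _ := by rw [this]
    · intro x _ y _ hxy
      exact mul_left_cancel hxy
    · intro y hy
      simp only [Finset.mem_filter, Finset.mem_univ, true_and, Subgroup.mem_inf,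
        Subgroup.mem_centralizer_singleton_iff] at hy ⊢
      refine ⟨w⁻¹ * y, ⟨H.mul_mem (H.inv_mem hw) hy.1, ?_⟩, by group⟩
      have : y * g = w * g * w⁻¹ * y := by rw [← hy.2]; group
      rw [mul_assoc, this]; group
  · intro x hx
    simp only [Finset.mem_filter, Finset.mem_univ, true_and] at hx ⊢
    exact H.mul_mem (H.mul_mem hx hg) (H.inv_mem hx)

lemma vc_comp {G H : Type} [Group G] [Fintype G] [Group H] [Fintype H] {a : G → ℂ}
    (ha : a ∈ VC G) (f : H →* G) : (fun x => a (f x)) ∈ VC H := by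
  induction ha using Submodule.span_induction with
  | mem x hx => exact chr_mem_vc (Chr.comp (IrrChar.subset_chr hx) f)
  | zero => exact (VC H).zero_mem
  | add x y _ _ h1 h2 => exact (VC H).add_mem h1 h2
  | smul c x _ h1 => exact (VC H).smul_mem c h1

lemma vc_isIntegral {G : Type} [Group G] [Fintype G] {a : G → ℂ} (ha : a ∈ VC G) (g : G) :
    IsIntegral ℤ (a g) := by
  induction ha using Submodule.span_induction with
  | mem x hx => exact Chr.isIntegral (IrrChar.subset_chr hx) g
  | zero => exact isIntegral_zero
  | add x y _ _ h1 h2 => exact h1.add h2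
  | smul c x _ h1 => exact h1.smul c

lemma isIntegral_conj {z : ℂ} (h : IsIntegral ℤ z) : IsIntegral ℤ ((starRingEnd ℂ) z) :=
  h.map ((starRingEnd ℂ).toIntAlgHom)

/-- A rational algebraic integer is an integer. -/
lemma int_of_isIntegral {z : ℂ} (h : IsIntegral ℤ z) {a b : ℤ} (ha : a ≠ 0)
    (hab : (a : ℂ) * z = b) : ∃ t : ℤ, z = t := by
  have hz : z = algebraMap ℚ ℂ ((b : ℚ) / a) := by
    have : (a : ℂ) ≠ 0 := by exact_mod_cast ha
    simp; field_simp; linear_combination hab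
  rw [hz, isIntegral_algebraMap_iff (algebraMap ℚ ℂ).injective] at h
  obtain ⟨t, ht⟩ := IsIntegrallyClosed.isIntegral_iff.1 h
  refine ⟨t, ?_⟩
  rw [hz, ← ht]; simp

section delta
variable {n : ℕ}

lemma card_HS_even (H : Subgroup (Equiv.Perm (Fin n))) :
    ∃ i : ℕ, i ∣ 2 ∧ Nat.card H =
      i * Nat.card (H ⊓ alternatingGroup (Fin n) : Subgroup (Equiv.Perm (Fin n))) := by
  refine ⟨(alternatingGroup (Fin n)).relIndex H, ?_, ?_⟩
  · refine (Subgroup.relIndex_dvd_index_of_normal _ _).trans ?_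
    rcases subsingleton_or_nontrivial (Fin n) with h | h
    · rw [alternatingGroup.index_eq_one]; exact one_dvd _
    · rw [alternatingGroup.index_eq_two]
  · have := Subgroup.relIndex_mul_relIndex ⊥ (H ⊓ alternatingGroup (Fin n)) H bot_le inf_le_left
    rw [Subgroup.relIndex_bot_left, Subgroup.relIndex_bot_left, Subgroup.inf_relIndex_left] at this
    rw [← this, mul_comm]


/-- A virtual character of `A_n` which changes sign under odd conjugations satisfies
`|δ(g)|² ≥ |C(g)|` wherever it does not vanish. Its inner product, on the even part of the Young
subgroup of the orbits of `g`, with the virtual character from `hodge_chr` is an integer, and it is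
a nonzero multiple of `δ(g)` because the latter character lives on the class of `g`. -/
lemma delta_lower (δ : Equiv.Perm (Fin n) → ℂ)
    (h1 : ∀ y h, δ (y * h * y⁻¹) = ((Equiv.Perm.sign y : ℤ) : ℂ) * δ h)
    (h2 : (fun a : alternatingGroup (Fin n) => δ a) ∈ VC (alternatingGroup (Fin n)))
    (h3 : ∀ h, Equiv.Perm.sign h = -1 → δ h = 0)
    (g : Equiv.Perm (Fin n)) (hg : δ g ≠ 0) :
    Subgroup.centralizer {g} ≤ alternatingGroup (Fin n) ∧
      Odd (Nat.card (Subgroup.centralizer {g})) ∧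
      (Nat.card (Subgroup.centralizer {g}) : ℝ) ≤ ‖δ g‖ ^ 2 := by
  have hC : Subgroup.centralizer {g} ≤ alternatingGroup (Fin n) := by
    intro z hz
    rw [Equiv.Perm.mem_alternatingGroup]
    rw [Subgroup.mem_centralizer_singleton_iff] at hz
    have := h1 z g
    rw [hz, mul_inv_cancel_right] at this
    rcases Int.units_eq_one_or (Equiv.Perm.sign z) with h | h
    · exact h
    · rw [h] at this
      push_cast at this
      exact absurd (by linear_combination (1 / 2 : ℂ) * this) hg
  obtain ⟨ho, hcard⟩ := split_typ g hC
  have hodd : Odd (Nat.card (Subgroup.centralizer {g})) := by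
    rw [hcard]
    exact Finset.prod_induction _ Odd (fun a b => Odd.mul) odd_one (fun o _ => ho o)
  refine ⟨hC, hodd, ?_⟩
  set CH : ℕ := Nat.card (HS g ⊓ Subgroup.centralizer {g} : Subgroup _) with hCH
  have hCHdvd : CH ∣ Nat.card (Subgroup.centralizer {g}) :=
    Subgroup.card_dvd_of_le inf_le_right
  have hCHodd : Odd CH := hodd.of_dvd_nat hCHdvd
  have hCHpos : 0 < CH := hCHodd.pos
  set Hp : Subgroup (Equiv.Perm (Fin n)) := HS g ⊓ alternatingGroup (Fin n) with hHp
  have hgA : g ∈ alternatingGroup (Fin n) := hC (Subgroup.mem_centralizer_singleton_iff.2 rfl)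
  have hgH : g ∈ HS g := fun y => by simpa using qo_zpow g 1 y
  obtain ⟨w, hw, a, ha, b, hb, hab⟩ := hodge_chr (qo g) (e0 ho) Hp.subtype
    (fun x y => x.2.1 y) (fun x => Equiv.Perm.mem_alternatingGroup.1 x.2.2)
    (fun o => by rw [fb_qo]; exact_mod_cast (olen_pos g o).ne')
  obtain ⟨N, hN, hN0, hNle⟩ := hf_g hC ho
  have hDVC : a - b ∈ VC Hp := (VC Hp).sub_mem (chr_mem_vc ha) (chr_mem_vc hb)
  have hdVC : (fun x : Hp => δ x) ∈ VC Hp :=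
    vc_comp h2 (Subgroup.inclusion (inf_le_right : Hp ≤ alternatingGroup (Fin n)))
  obtain ⟨n1, hn1⟩ := vc_ip_int hDVC hdVC
  have hwn : ‖w‖ ^ 2 = ((Fintype.card (Kp g)).factorial : ℝ) ^ 2 *
      (Nat.card (Subgroup.centralizer {g}) : ℝ) := by
    rw [← norm_pow, hw, hc, norm_mul, norm_mul, hcard]
    have : ‖(((Equiv.Perm.sign (swp (Kp g) (Orb g))) : ℤ) : ℂ)‖ = 1 := by
      rcases Int.units_eq_one_or (Equiv.Perm.sign (swp (Kp g) (Orb g))) with h | h <;> simp [h]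
    rw [this, one_mul, norm_pow, Complex.norm_natCast]
    congr 1
    simp only [fb_qo]
    rw [norm_prod]
    push_cast
    exact Finset.prod_congr rfl fun o _ => Complex.norm_natCast _
  have hw0 : w ≠ 0 := by
    rintro rfl
    have := hodd.pos
    simp [Nat.factorial_ne_zero] at hwn
  set gp : Hp := ⟨g, hgH, hgA⟩ with hgp
  set θ : ℂ := (a gp - b gp) * (starRingEnd ℂ) (δ g) with hθ
  have hθint : IsIntegral ℤ θ :=
    (vc_isIntegral hDVC gp).mul (isIntegral_conj (vc_isIntegral hdVC gp))
  obtain ⟨i, hi2, hi⟩ := card_HS_even (HS g)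
  have hsum := orbit_sum (HS g) g hgH (fun h => hf (qo g) (e0 ho) h * (starRingEnd ℂ) (δ h))
    (fun x hx => by
      show hf (qo g) (e0 ho) (x * g * x⁻¹) * (starRingEnd ℂ) (δ (x * g * x⁻¹)) = _
      rw [hf_conj _ _ _ _ hx, h1, map_mul, map_intCast]
      linear_combination (hf (qo g) (e0 ho) g * (starRingEnd ℂ) (δ g)) * sign_sq_cast x)
    (fun h hh hne => hf_supp ho h hh (left_ne_zero_of_mul hne))
  have hsplit : ∑ h ∈ Finset.univ.filter (fun h => h ∈ HS g),
      hf (qo g) (e0 ho) h * (starRingEnd ℂ) (δ h) = w * (Nat.card Hp * n1) := by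
    have e1 : ∑ h ∈ Finset.univ.filter (fun h => h ∈ HS g),
        hf (qo g) (e0 ho) h * (starRingEnd ℂ) (δ h) =
        ∑ h ∈ Finset.univ.filter (fun h => h ∈ Hp), hf (qo g) (e0 ho) h * (starRingEnd ℂ) (δ h) := by
      symm
      refine Finset.sum_subset ?_ ?_
      · intro x hx
        simp only [Finset.mem_filter, Finset.mem_univ, true_and] at hx ⊢
        exact hx.1
      · intro x hx hx'
        simp only [Finset.mem_filter, Finset.mem_univ, true_and] at hx hx'
        rw [h3 x, map_zero, mul_zero]
        refine (Int.units_eq_one_or (Equiv.Perm.sign x)).resolve_left fun h => hx' ⟨hx, ?_⟩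
        exact Equiv.Perm.mem_alternatingGroup.2 h
    rw [e1, Finset.sum_subtype (p := fun h => h ∈ Hp) _ (by simp)]
    have e2 : ∑ x : Hp, hf (qo g) (e0 ho) x * (starRingEnd ℂ) (δ x) =
        w * ∑ x : Hp, (a - b) x * (starRingEnd ℂ) (δ x) := by
      rw [Finset.mul_sum]
      refine Finset.sum_congr rfl fun x _ => ?_
      have := hab x
      rw [show hf (qo g) (e0 ho) (x : Equiv.Perm (Fin n)) = w * (a x - b x) from this]
      simp only [Pi.sub_apply]; ring
    rw [e2]
    congr 1
    rw [← hn1, ip, Nat.card_eq_fintype_card, mul_inv_cancel_left₀]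
    exact_mod_cast Fintype.card_ne_zero
  have hgval : hf (qo g) (e0 ho) g = w * (a gp - b gp) := hab gp
  have hHp0 : (Nat.card Hp : ℂ) ≠ 0 := by exact_mod_cast Nat.card_pos.ne'
  have hmain : (i : ℂ) * θ = CH * n1 := by
    rw [hsplit, hgval, hi] at hsum
    push_cast at hsum
    apply mul_left_cancel₀ (mul_ne_zero hw0 hHp0)
    rw [hθ]
    linear_combination -hsum
  have hi0 : i ≠ 0 := by rintro rfl; simp at hi2
  obtain ⟨t, ht⟩ := int_of_isIntegral hθint (a := i) (b := CH * n1) (by exact_mod_cast hi0)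
    (by push_cast; exact hmain)
  have hdvd : (CH : ℤ) ∣ t := by
    have e : (i : ℤ) * t = CH * n1 := by
      rw [ht] at hmain; exact_mod_cast hmain
    have hcop : IsCoprime (CH : ℤ) (i : ℤ) := by
      rw [Nat.isCoprime_iff_coprime]
      exact (Nat.coprime_two_right.2 hCHodd).coprime_dvd_right hi2
    exact hcop.dvd_of_dvd_mul_left ⟨n1, e⟩
  have hD : w * (a gp - b gp) = N := by rw [← hgval, hN]
  have ht0 : t ≠ 0 := by
    rintro rfl
    simp only [Int.cast_zero, hθ] at ht
    rcases mul_eq_zero.1 ht with h | h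
    · rw [h, mul_zero] at hD
      exact hN0.ne' (by exact_mod_cast hD.symm)
    · exact hg (by simpa using h)
  have habs : (CH : ℝ) ≤ ‖θ‖ := by
    rw [ht, Complex.norm_intCast]
    have := Int.le_of_dvd (abs_pos.2 ht0) ((dvd_abs _ _).2 hdvd)
    exact_mod_cast this
  -- `‖w‖ ‖θ‖ = N ‖δ g‖`
  have hprod : ‖w‖ * ‖θ‖ = N * ‖δ g‖ := by
    rw [← norm_mul, hθ, ← mul_assoc, hD, norm_mul, Complex.norm_natCast, RCLike.norm_conj]
  have hNle' : (N : ℝ) ≤ CH * ((Fintype.card (Kp g)).factorial : ℝ) := by exact_mod_cast hNle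
  have hf0 : (0 : ℝ) < ((Fintype.card (Kp g)).factorial : ℝ) := by
    exact_mod_cast Nat.factorial_pos _
  have hC0 : (0 : ℝ) < CH := by exact_mod_cast hCHpos
  have hle : ‖w‖ ≤ (Fintype.card (Kp g)).factorial * ‖δ g‖ := by
    have e1 : ‖w‖ * CH ≤ ‖w‖ * ‖θ‖ := by gcongr
    have e2 : (N : ℝ) * ‖δ g‖ ≤ CH * ((Fintype.card (Kp g)).factorial : ℝ) * ‖δ g‖ := by gcongr
    have e3 : CH * ‖w‖ ≤ CH * ((Fintype.card (Kp g)).factorial * ‖δ g‖) := by linarith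
    exact le_of_mul_le_mul_left e3 hC0
  have hsq : ‖w‖ ^ 2 ≤ ((Fintype.card (Kp g)).factorial * ‖δ g‖) ^ 2 := by gcongr
  rw [hwn, mul_pow] at hsq
  exact le_of_mul_le_mul_left hsq (by positivity)

/-- If moreover `δ` has norm `2`, the class of `g` already exhausts the norm, so `δ` vanishes elsewhere
and `|δ(g)|²` is the odd number `|C(g)|`. -/
lemma delta_supp (δ : Equiv.Perm (Fin n) → ℂ)
    (h1 : ∀ y h, δ (y * h * y⁻¹) = ((Equiv.Perm.sign y : ℤ) : ℂ) * δ h)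
    (h2 : (fun a : alternatingGroup (Fin n) => δ a) ∈ VC (alternatingGroup (Fin n)))
    (h3 : ∀ h, Equiv.Perm.sign h = -1 → δ h = 0)
    (h4 : ∑ h, ‖δ h‖ ^ 2 = (n.factorial : ℝ))
    (g : Equiv.Perm (Fin n)) (hg : δ g ≠ 0) :
    (∃ z : ℕ, Odd z ∧ ‖δ g‖ ^ 2 = z) ∧ ∀ h, δ h ≠ 0 → IsConj g h := by
  obtain ⟨-, hodd, hlow⟩ := delta_lower δ h1 h2 h3 g hg
  have hcls := card_class g
  rw [zm_typ] at hcls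
  have hnorm : ∀ h ∈ Finset.univ.filter (fun h => IsConj g h), ‖δ h‖ ^ 2 = ‖δ g‖ ^ 2 := by
    intro h hh
    obtain ⟨c, hc⟩ := isConj_iff.1 (Finset.mem_filter.1 hh).2
    rw [← hc, h1, norm_mul]
    rcases Int.units_eq_one_or (Equiv.Perm.sign c) with h | h <;> simp [h]
  have hsum : ∑ h ∈ Finset.univ.filter (fun h => IsConj g h), ‖δ h‖ ^ 2 =
      (Finset.univ.filter (fun h => IsConj g h)).card * ‖δ g‖ ^ 2 := by
    rw [Finset.sum_congr rfl hnorm, Finset.sum_const, nsmul_eq_mul]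
  have htot := Finset.sum_filter_add_sum_filter_not Finset.univ (fun h => IsConj g h)
    (fun h => ‖δ h‖ ^ 2)
  rw [hsum, h4] at htot
  have hcls' : ((Finset.univ.filter (fun h => IsConj g h)).card : ℝ) *
      (Nat.card (Subgroup.centralizer {g}) : ℝ) = n.factorial := by exact_mod_cast hcls
  have hrest : 0 ≤ ∑ h ∈ Finset.univ.filter (fun h => ¬ IsConj g h), ‖δ h‖ ^ 2 :=
    Finset.sum_nonneg fun _ _ => by positivity
  have hpos : (0 : ℝ) < ((Finset.univ.filter (fun h => IsConj g h)).card : ℝ) := by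
    have : 0 < (Finset.univ.filter (fun h => IsConj g h)).card :=
      Finset.card_pos.2 ⟨g, Finset.mem_filter.2 ⟨Finset.mem_univ _, IsConj.refl g⟩⟩
    exact_mod_cast this
  have hup : ‖δ g‖ ^ 2 ≤ (Nat.card (Subgroup.centralizer {g}) : ℝ) := by
    refine le_of_mul_le_mul_left ?_ hpos
    linarith
  have heq := le_antisymm hup hlow
  refine ⟨⟨_, hodd, heq⟩, fun h hh => ?_⟩
  by_contra hcon
  rw [heq, hcls'] at htot
  have hz : ∑ h ∈ Finset.univ.filter (fun h => ¬ IsConj g h), ‖δ h‖ ^ 2 = 0 := by linarith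
  rw [Finset.sum_eq_zero_iff_of_nonneg (fun _ _ => by positivity)] at hz
  have := hz h (Finset.mem_filter.2 ⟨Finset.mem_univ _, hcon⟩)
  exact hh (by simpa using this)

end delta

/-! ### Restriction to the alternating group -/


section clifford
variable {n : ℕ}

/-- Restriction to the alternating group. -/
def res (ψ : Equiv.Perm (Fin n) → ℂ) : alternatingGroup (Fin n) → ℂ := fun a => ψ a

/-- Multiplication by the sign character. -/
def tw (ψ : Equiv.Perm (Fin n) → ℂ) : Equiv.Perm (Fin n) → ℂ :=
  fun g => ((Equiv.Perm.sign g : ℤ) : ℂ) * ψ g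

/-- Extension by zero from the alternating group. -/
def ext0 (ρ : alternatingGroup (Fin n) → ℂ) : Equiv.Perm (Fin n) → ℂ :=
  fun g => if h : g ∈ alternatingGroup (Fin n) then ρ ⟨g, h⟩ else 0

lemma ext0_coe (ρ : alternatingGroup (Fin n) → ℂ) (a : alternatingGroup (Fin n)) :
    ext0 ρ a = ρ a := by
  rw [ext0, dif_pos a.2]

lemma sign_cases (g : Equiv.Perm (Fin n)) :
    g ∈ alternatingGroup (Fin n) ∧ Equiv.Perm.sign g = 1 ∨
      g ∉ alternatingGroup (Fin n) ∧ Equiv.Perm.sign g = -1 := by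
  rw [Equiv.Perm.mem_alternatingGroup]
  rcases Int.units_eq_one_or (Equiv.Perm.sign g) with h | h
  · exact Or.inl ⟨h, h⟩
  · refine Or.inr ⟨?_, h⟩
    rw [h]; decide

lemma tw_tw (ψ : Equiv.Perm (Fin n) → ℂ) : tw (tw ψ) = ψ := by
  funext g
  simp only [tw]
  rw [← mul_assoc, sign_sq_cast, one_mul]

lemma tw_irr {ψ : Equiv.Perm (Fin n) → ℂ} (h : ψ ∈ IrrChar _) : tw ψ ∈ IrrChar _ := sign_irr h

lemma res_tw (ψ : Equiv.Perm (Fin n) → ℂ) : res (tw ψ) = res ψ := by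
  funext a
  simp only [res, tw, Equiv.Perm.mem_alternatingGroup.1 a.2]
  simp

lemma sum_alt (f : Equiv.Perm (Fin n) → ℂ) (hf : ∀ g, g ∉ alternatingGroup (Fin n) → f g = 0) :
    ∑ a : alternatingGroup (Fin n), f a = ∑ g, f g := by
  rw [← Finset.sum_subtype (Finset.univ.filter fun g => g ∈ alternatingGroup (Fin n)) (by simp) f]
  refine Finset.sum_subset (Finset.subset_univ _) fun g _ hg => hf g ?_
  simpa using hg

lemma card_alt (hn : 2 ≤ n) :
    (Fintype.card (Equiv.Perm (Fin n)) : ℂ) = 2 * Fintype.card (alternatingGroup (Fin n)) := by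
  haveI : Nontrivial (Fin n) := Fin.nontrivial_iff_two_le.2 hn
  have := two_mul_card_alternatingGroup (α := Fin n)
  rw [← this]; push_cast; congr 2
  

lemma ip_ext0 (hn : 2 ≤ n) (ρ : alternatingGroup (Fin n) → ℂ) (ψ : Equiv.Perm (Fin n) → ℂ) :
    2 * ip (ext0 ρ) ψ = ip ρ (res ψ) := by
  rw [ip, ip, card_alt hn, ← sum_alt]
  · simp only [ext0_coe, res]
    rw [mul_inv]; ring
  · intro g hg
    rw [ext0, dif_neg hg, zero_mul]

lemma ip_res (hn : 2 ≤ n) (φ ψ : Equiv.Perm (Fin n) → ℂ) :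
    ip (res φ) (res ψ) = ip φ ψ + ip (tw φ) ψ := by
  rw [← ip_ext0 hn, ← ip_add_left, ← ip_smul_left]
  congr 1
  funext g
  rcases sign_cases g with ⟨h, hs⟩ | ⟨h, hs⟩
  · simp only [Pi.smul_apply, Pi.add_apply, smul_eq_mul, tw, hs, ext0, dif_pos h, res]; simp; ring
  · simp only [Pi.smul_apply, Pi.add_apply, smul_eq_mul, tw, hs, ext0, dif_neg h, res]; simp

lemma sym_complete (φ : Equiv.Perm (Fin n) → ℂ) (hφ : ∀ g h, IsConj g h → φ g = φ h)
    (h : ∀ ψ ∈ IrrChar (Equiv.Perm (Fin n)), ip φ ψ = 0) : φ = 0 := by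
  refine eq_zero_of_chi (N := n) le_rfl φ hφ fun x hx => ?_
  have key : ip φ (chi x) = 0 := by
    rcases chi_irr le_rfl hx with h1 | h1
    · exact h _ h1
    · have := h _ h1
      rwa [ip_neg_right, neg_eq_zero] at this
  simp only [ip, chi_conj] at key
  rcases mul_eq_zero.1 key with h0 | h0
  · exact absurd h0 (inv_ne_zero (by exact_mod_cast Fintype.card_ne_zero))
  · exact h0

lemma res_chr {ψ : Equiv.Perm (Fin n) → ℂ} (h : ψ ∈ IrrChar _) : res ψ ∈ Chr (alternatingGroup (Fin n)) :=
  Chr.comp (IrrChar.subset_chr h) (alternatingGroup (Fin n)).subtype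

lemma ip_res_irr (hn : 2 ≤ n) {φ ψ : Equiv.Perm (Fin n) → ℂ} (hφ : φ ∈ IrrChar _) (hψ : ψ ∈ IrrChar _) :
    ip (res φ) (res ψ) = (if φ = ψ then 1 else 0) + (if tw φ = ψ then 1 else 0) := by
  rw [ip_res hn, irr_orth hφ hψ, irr_orth (tw_irr hφ) hψ]

lemma exists_over (hn : 2 ≤ n) {ρ : alternatingGroup (Fin n) → ℂ} (hρ : ρ ∈ IrrChar _) :
    ∃ ψ ∈ IrrChar (Equiv.Perm (Fin n)), ip (res ψ) ρ ≠ 0 := by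
  by_contra hcon
  push Not at hcon
  have hreg := chr_mem_vc (Chr.of_action (MulAction.toPermHom (Equiv.Perm (Fin n)) (Equiv.Perm (Fin n))))
  have key : ∀ a ∈ VC (Equiv.Perm (Fin n)), ip (res a) ρ = 0 := by
    intro a ha
    induction ha using Submodule.span_induction with
    | mem x hx => exact hcon x hx
    | zero => exact ip_zero_left _
    | add x y _ _ h1 h2 =>
      rw [show res (x + y) = res x + res y from rfl, ip_add_left, h1, h2, add_zero]
    | smul c x _ h1 =>
      rw [show res (c • x) = c • res x from rfl, ip_zsmul_left, h1, mul_zero]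
  have h0 := key _ hreg
  obtain ⟨d, hd, h1⟩ := irr_one_ne hρ
  rw [ip, Finset.sum_eq_single 1] at h0
  · rw [h1] at h0
    simp [res, hd] at h0
    exact (Fintype.card_eq_zero_iff.1 h0).elim ⟨1, by simp⟩
  · intro a _ ha
    refine mul_eq_zero_of_left (Nat.cast_eq_zero.2 (Finset.card_eq_zero.2
      (Finset.eq_empty_of_forall_notMem fun x hx => ?_))) _
    simp only [Finset.mem_filter, MulAction.toPermHom_apply, MulAction.toPerm_apply, smul_eq_mul,
      mul_eq_right] at hx
    exact ha (Subtype.ext hx.2)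
  · simp

/-- `ψ` restricts to `ρ₁ + ρ₂` with `ρ₁ ≠ ρ₂` irreducible, conjugate under odd permutations. -/
structure Spl (ψ : Equiv.Perm (Fin n) → ℂ) (ρ₁ ρ₂ : alternatingGroup (Fin n) → ℂ) : Prop where
  irr₁ : ρ₁ ∈ IrrChar _
  irr₂ : ρ₂ ∈ IrrChar _
  ne : ρ₁ ≠ ρ₂
  res : res ψ = ρ₁ + ρ₂
  conj : ∀ y h, (ext0 ρ₁ - ext0 ρ₂) (y * h * y⁻¹) =
    ((Equiv.Perm.sign y : ℤ) : ℂ) * (ext0 ρ₁ - ext0 ρ₂) h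

lemma ext0_conj (ρ : alternatingGroup (Fin n) → ℂ) (y h : Equiv.Perm (Fin n)) :
    ext0 ρ (y * h * y⁻¹) = ext0 (fun a => ρ (MulAut.conjNormal y a)) h := by
  have hm : y * h * y⁻¹ ∈ alternatingGroup (Fin n) ↔ h ∈ alternatingGroup (Fin n) := by
    simp only [Equiv.Perm.mem_alternatingGroup, map_mul, map_inv, mul_inv_cancel_comm]
  by_cases hh : h ∈ alternatingGroup (Fin n)
  · rw [ext0, ext0, dif_pos hh, dif_pos (hm.2 hh)]
    congr 1
  · rw [ext0, ext0, dif_neg hh, dif_neg (fun h' => hh (hm.1 h'))]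

lemma conj_even {ρ : alternatingGroup (Fin n) → ℂ} (hρ : ρ ∈ IrrChar _) {y : Equiv.Perm (Fin n)}
    (hy : y ∈ alternatingGroup (Fin n)) : (fun a => ρ (MulAut.conjNormal y a)) = ρ := by
  funext a
  rw [← Chr.conj (IrrChar.subset_chr hρ) ⟨y, hy⟩ a]
  congr 1

lemma res_conj {ψ : Equiv.Perm (Fin n) → ℂ} (h : ψ ∈ IrrChar _) (y : Equiv.Perm (Fin n))
    (a : alternatingGroup (Fin n)) : res ψ (MulAut.conjNormal y a) = res ψ a := by
  simp only [res, MulAut.conjNormal_apply]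
  exact Chr.conj (IrrChar.subset_chr h) y a

lemma conj_odd (hn : 2 ≤ n) {ψ : Equiv.Perm (Fin n) → ℂ} (hψ : ψ ∈ IrrChar _) (hsd : tw ψ = ψ)
    {ρ₁ ρ₂ : alternatingGroup (Fin n) → ℂ} (h1 : ρ₁ ∈ IrrChar _) (h2 : ρ₂ ∈ IrrChar _) (hne : ρ₁ ≠ ρ₂)
    (hres : res ψ = ρ₁ + ρ₂) {s : Equiv.Perm (Fin n)} (hs : Equiv.Perm.sign s = -1) :
    (fun a => ρ₁ (MulAut.conjNormal s a)) = ρ₂ := by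
  have i1 := irr_comp_aut h1 (MulAut.conjNormal s : MulAut (alternatingGroup (Fin n)))
  have i2 := irr_comp_aut h2 (MulAut.conjNormal s : MulAut (alternatingGroup (Fin n)))
  set r1 : alternatingGroup (Fin n) → ℂ := fun a => ρ₁ (MulAut.conjNormal s a) with hr1
  set r2 : alternatingGroup (Fin n) → ℂ := fun a => ρ₂ (MulAut.conjNormal s a) with hr2
  have hsum : r1 + r2 = ρ₁ + ρ₂ := by
    rw [← hres]
    funext a
    rw [← res_conj hψ s a, hres]; rfl
  have hip : ip r1 (ρ₁ + ρ₂) = 1 + (if r1 = r2 then 1 else 0) := by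
    rw [← hsum, ip_add_right, irr_orth i1 i1, irr_orth i1 i2, if_pos rfl]
  rw [ip_add_right, irr_orth i1 h1, irr_orth i1 h2] at hip
  by_cases e2 : r1 = ρ₂
  · exact e2
  exfalso
  by_cases e1 : r1 = ρ₁
  swap
  · rw [if_neg e1, if_neg e2] at hip
    split_ifs at hip <;> norm_num at hip
  -- `ρ₁` is invariant under all conjugations, so `2 ρ₁` extended by zero is `ψ`
  have hinv : ∀ y, (fun a => ρ₁ (MulAut.conjNormal y a)) = ρ₁ := by
    intro y
    rcases sign_cases y with ⟨hy, -⟩ | ⟨-, hy⟩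
    · exact conj_even h1 hy
    · have hm : y * s⁻¹ ∈ alternatingGroup (Fin n) := by
        rw [Equiv.Perm.mem_alternatingGroup, map_mul, map_inv, hy, hs]; decide
      funext a
      have e3 := congrFun (conj_even h1 hm) (MulAut.conjNormal s a)
      have e4 := congrFun e1 a
      rw [← e4, hr1]
      show _ = ρ₁ (MulAut.conjNormal s a)
      rw [← e3]
      show _ = ρ₁ (MulAut.conjNormal (y * s⁻¹) (MulAut.conjNormal s a))
      rw [← MulAut.mul_apply, ← map_mul, inv_mul_cancel_right]
  have hzero : (2 : ℂ) • ext0 ρ₁ - ψ = 0 := by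
    refine sym_complete _ ?_ ?_
    · intro g h hgh
      obtain ⟨c, rfl⟩ := isConj_iff.1 hgh
      simp only [Pi.sub_apply, Pi.smul_apply]
      rw [ext0_conj, hinv, Chr.conj (IrrChar.subset_chr hψ)]
    · intro φ hφ
      rw [ip_sub_left, ip_smul_left, ip_ext0 hn, irr_orth hψ hφ]
      by_cases hφψ : ψ = φ
      · subst hφψ
        rw [hres, ip_add_right, irr_orth h1 h1, irr_orth h1 h2, if_pos rfl, if_neg hne, if_pos rfl]
        ring
      · rw [if_neg hφψ, sub_zero, ← ip_conj]
        have h0 := ip_res_irr hn hφ hψ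
        have hφψ' : tw φ ≠ ψ := by
          intro h; apply hφψ
          rw [← tw_tw φ, h, hsd]
        rw [if_neg (Ne.symm hφψ), if_neg hφψ', hres, ip_add_right] at h0
        obtain ⟨z1, hz1⟩ := chr_ip_nat (res_chr hφ) h1
        obtain ⟨z2, hz2⟩ := chr_ip_nat (res_chr hφ) h2
        rw [hz1, hz2] at h0
        have : z1 + z2 = 0 := by exact_mod_cast (by simpa using h0 : (z1 : ℂ) + z2 = 0)
        rw [hz1, show z1 = 0 by omega]; simp
  apply hne
  funext a
  have e5 := congrFun hzero a
  have e6 := congrFun hres a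
  simp only [Pi.sub_apply, Pi.smul_apply, ext0_coe, smul_eq_mul, Pi.zero_apply] at e5
  simp only [_root_.res, Pi.add_apply] at e6
  linear_combination e5 + e6

lemma exists_spl (hn : 2 ≤ n) {ψ : Equiv.Perm (Fin n) → ℂ} (hψ : ψ ∈ IrrChar _) (hsd : tw ψ = ψ) :
    ∃ ρ₁ ρ₂, Spl ψ ρ₁ ρ₂ := by
  obtain ⟨ρ₁, h1, ρ₂, h2, hne, hres⟩ := chr_norm_two (res_chr hψ) (by
    rw [ip_res_irr hn hψ hψ, if_pos rfl, if_pos hsd]; norm_num)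
  refine ⟨ρ₁, ρ₂, h1, h2, hne, hres, ?_⟩
  intro y h
  simp only [Pi.sub_apply, ext0_conj]
  rcases sign_cases y with ⟨hy, hs⟩ | ⟨-, hy⟩
  · rw [conj_even h1 hy, conj_even h2 hy, hs]; simp
  · rw [conj_odd hn hψ hsd h1 h2 hne hres hy,
      conj_odd hn hψ hsd h2 h1 hne.symm (by rw [hres, add_comm]) hy, hy]
    push_cast; ring

end clifford

/-! ### The class on which the halves of a split character differ -/


section splitclass
variable {n : ℕ}

lemma chr_disj {G : Type} [Group G] [Fintype G] {a b ρ : G → ℂ} (ha : a ∈ Chr G) (hb : b ∈ Chr G)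
    (hρ : ρ ∈ IrrChar G) (h0 : ip a b = 0) (hne : ip a ρ ≠ 0) : ip b ρ = 0 := by
  obtain ⟨z, hz⟩ := chr_ip_nat ha hρ
  have key : (∃ m : ℕ, ip b ρ = m ∧ ∃ k : ℕ, ip a b = k ∧ z * m ≤ k) := by
    have h := Chr.mem_closure hb
    clear hb h0
    induction h using AddSubmonoid.closure_induction with
    | mem x hx =>
      obtain ⟨k, hk⟩ := chr_ip_nat ha hx
      by_cases hxρ : x = ρ
      · subst hxρ
        exact ⟨1, by rw [irr_orth hx hx]; simp, z, hz, by simp⟩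
      · exact ⟨0, by rw [irr_orth hx hρ, if_neg hxρ]; simp, k, hk, by simp⟩
    | zero => exact ⟨0, by simp, 0, by simp, by simp⟩
    | add x y _ _ h1 h2 =>
      obtain ⟨m1, e1, k1, f1, g1⟩ := h1
      obtain ⟨m2, e2, k2, f2, g2⟩ := h2
      refine ⟨m1 + m2, by rw [ip_add_left, e1, e2]; simp, k1 + k2, by rw [ip_add_right, f1, f2]; simp, ?_⟩
      rw [mul_add]; omega
  obtain ⟨m, hm, k, hk, hle⟩ := key
  rw [h0] at hk
  have hk0 : k = 0 := by exact_mod_cast hk.symm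
  have hz0 : z ≠ 0 := by rintro rfl; exact hne (by simpa using hz)
  rw [hk0, Nat.le_zero, mul_eq_zero] at hle
  rw [hm, hle.resolve_left hz0]; simp

lemma res_disj (hn : 2 ≤ n) {φ ψ : Equiv.Perm (Fin n) → ℂ} (hφ : φ ∈ IrrChar _) (hψ : ψ ∈ IrrChar _)
    (h1 : φ ≠ ψ) (h2 : tw φ ≠ ψ) {ρ : alternatingGroup (Fin n) → ℂ} (hρ : ρ ∈ IrrChar _)
    (hne : ip (res φ) ρ ≠ 0) : ip (res ψ) ρ = 0 :=
  chr_disj (res_chr hφ) (res_chr hψ) hρ (by rw [ip_res_irr hn hφ hψ, if_neg h1, if_neg h2, add_zero]) hne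

namespace Spl
variable {ψ ψ' : Equiv.Perm (Fin n) → ℂ} {ρ₁ ρ₂ ρ₁' ρ₂' : alternatingGroup (Fin n) → ℂ}

lemma ip₁ (h : Spl ψ ρ₁ ρ₂) : ip (_root_.res ψ) ρ₁ = 1 := by
  rw [h.res, ip_add_left, irr_orth h.irr₁ h.irr₁, irr_orth h.irr₂ h.irr₁, if_pos rfl, if_neg h.ne.symm,
    add_zero]

lemma ip₂ (h : Spl ψ ρ₁ ρ₂) : ip (_root_.res ψ) ρ₂ = 1 := by
  rw [h.res, ip_add_left, irr_orth h.irr₁ h.irr₂, irr_orth h.irr₂ h.irr₂, if_pos rfl, if_neg h.ne,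
    zero_add]

lemma ip_d (h : Spl ψ ρ₁ ρ₂) : ip (ρ₁ - ρ₂) (ρ₁ - ρ₂) = 2 := by
  simp only [ip_sub_left, ip_sub_right, irr_orth h.irr₁ h.irr₁, irr_orth h.irr₁ h.irr₂,
    irr_orth h.irr₂ h.irr₁, irr_orth h.irr₂ h.irr₂, if_pos rfl, if_neg h.ne, if_neg h.ne.symm]
  norm_num

lemma supp (hn : 2 ≤ n) (h : Spl ψ ρ₁ ρ₂) {g : Equiv.Perm (Fin n)}
    (hg : (ext0 ρ₁ - ext0 ρ₂) g ≠ 0) :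
    (∃ z : ℕ, Odd z ∧ ‖(ext0 ρ₁ - ext0 ρ₂) g‖ ^ 2 = z) ∧
      ∀ x, (ext0 ρ₁ - ext0 ρ₂) x ≠ 0 → IsConj g x := by
  have hodd : ∀ x, x ∉ alternatingGroup (Fin n) → (ext0 ρ₁ - ext0 ρ₂) x = 0 := by
    intro x hx
    simp only [Pi.sub_apply, ext0, dif_neg hx, sub_zero]
  have hA : (fun a : alternatingGroup (Fin n) => (ext0 ρ₁ - ext0 ρ₂) a) = ρ₁ - ρ₂ := by
    funext a
    simp only [Pi.sub_apply, ext0_coe]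
  refine delta_supp (ext0 ρ₁ - ext0 ρ₂) h.conj ?_ ?_ ?_ g hg
  · rw [hA]
    exact (VC _).sub_mem (irr_mem_vc h.irr₁) (irr_mem_vc h.irr₂)
  · intro x hx
    refine hodd x ?_
    rw [Equiv.Perm.mem_alternatingGroup, hx]; decide
  · have h2 := h.ip_d
    rw [ip] at h2
    have h3 := card_alt hn
    have hc : (Fintype.card (alternatingGroup (Fin n)) : ℂ) ≠ 0 := by
      exact_mod_cast Fintype.card_ne_zero
    rw [inv_mul_eq_iff_eq_mul₀ hc, mul_comm, ← h3, Fintype.card_perm, Fintype.card_fin] at h2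
    have h4 := sum_alt (fun x => (ext0 ρ₁ - ext0 ρ₂) x * (starRingEnd ℂ) ((ext0 ρ₁ - ext0 ρ₂) x))
      (fun x hx => by simp only [hodd x hx, zero_mul])
    rw [← hA, h4] at h2
    simp only [Complex.mul_conj, Complex.normSq_eq_norm_sq] at h2
    exact_mod_cast h2

lemma exists_ne (h : Spl ψ ρ₁ ρ₂) : ∃ g, (ext0 ρ₁ - ext0 ρ₂) g ≠ 0 := by
  obtain ⟨a, ha⟩ := Function.ne_iff.1 h.ne
  exact ⟨a, by simpa only [Pi.sub_apply, ext0_coe] using sub_ne_zero.2 ha⟩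

lemma mem_alt {g : Equiv.Perm (Fin n)} (hg : (ext0 ρ₁ - ext0 ρ₂) g ≠ 0) :
    g ∈ alternatingGroup (Fin n) := by
  by_contra hx
  apply hg
  simp only [Pi.sub_apply, ext0, dif_neg hx, sub_zero]

lemma ne_of_conj (h : Spl ψ ρ₁ ρ₂) {g x : Equiv.Perm (Fin n)} (hg : (ext0 ρ₁ - ext0 ρ₂) g ≠ 0)
    (hx : IsConj g x) : (ext0 ρ₁ - ext0 ρ₂) x ≠ 0 := by
  obtain ⟨c, rfl⟩ := isConj_iff.1 hx
  rw [h.conj]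
  refine mul_ne_zero ?_ hg
  rcases Int.units_eq_one_or (Equiv.Perm.sign c) with h | h <;> simp [h]

lemma odd (hn : 2 ≤ n) (h : Spl ψ ρ₁ ρ₂) (hψ : ψ ∈ IrrChar _) {g : Equiv.Perm (Fin n)}
    (hg : (ext0 ρ₁ - ext0 ρ₂) g ≠ 0) : ∃ m : ℤ, Odd m ∧ ψ g = m := by
  obtain ⟨⟨z, hz, hzn⟩, -⟩ := h.supp hn hg
  obtain ⟨m, hm⟩ := irr_sym_int hψ g
  have hgA := mem_alt hg
  set a : alternatingGroup (Fin n) := ⟨g, hgA⟩ with ha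
  have e1 : ψ g = ρ₁ a + ρ₂ a := congrFun h.res a
  have e2 : (ext0 ρ₁ - ext0 ρ₂) g = ρ₁ a - ρ₂ a := by
    have := ext0_coe ρ₁ a
    have := ext0_coe ρ₂ a
    simp_all only [Pi.sub_apply]
  have e3 : (ρ₁ a - ρ₂ a) * (starRingEnd ℂ) (ρ₁ a - ρ₂ a) = z := by
    rw [← e2, Complex.mul_conj, Complex.normSq_eq_norm_sq, hzn]; simp
  have e4 : (ρ₁ a + ρ₂ a) * (starRingEnd ℂ) (ρ₁ a + ρ₂ a) = m * m := by
    rw [← e1, hm, map_intCast]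
  rw [map_sub] at e3
  rw [map_add] at e4
  have i1 := Chr.isIntegral (IrrChar.subset_chr h.irr₁) a
  have i2 := Chr.isIntegral (IrrChar.subset_chr h.irr₂) a
  obtain ⟨t, ht⟩ := int_of_isIntegral
    ((i1.mul (isIntegral_conj i2)).add (i2.mul (isIntegral_conj i1))) (a := 2) (b := m * m - z)
    (by norm_num) (by push_cast; linear_combination e4 - e3)
  have e5 : ((m * m : ℤ) : ℂ) = ((z + 2 * t : ℤ) : ℂ) := by
    push_cast; linear_combination e3 - e4 + 2 * ht
  have e6 : m * m = z + 2 * t := by exact_mod_cast e5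
  refine ⟨m, ?_, hm⟩
  have : Odd (m * m) := by
    rw [e6]
    exact Odd.add_even (by exact_mod_cast hz) (even_two_mul t)
  exact (Int.odd_mul.1 this).1

lemma eq_zero (hn : 2 ≤ n) (h : Spl ψ ρ₁ ρ₂) (h' : Spl ψ' ρ₁' ρ₂') (hψ : ψ ∈ IrrChar _)
    (hψ' : ψ' ∈ IrrChar _) (hsd : tw ψ = ψ) (hne : ψ ≠ ψ') {g : Equiv.Perm (Fin n)}
    (hg : (ext0 ρ₁ - ext0 ρ₂) g ≠ 0) : (ext0 ρ₁' - ext0 ρ₂') g = 0 := by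
  by_contra hg'
  have hs := (h.supp hn hg).2
  have hs' := (h'.supp hn hg').2
  set c := (ext0 ρ₁' - ext0 ρ₂') g / (ext0 ρ₁ - ext0 ρ₂) g with hc
  have hprop : ∀ x, (ext0 ρ₁' - ext0 ρ₂') x = c * (ext0 ρ₁ - ext0 ρ₂) x := by
    intro x
    by_cases hx : IsConj g x
    · obtain ⟨y, rfl⟩ := isConj_iff.1 hx
      rw [h.conj, h'.conj, hc]; field_simp
    · rw [not_not.1 (fun hh => hx (hs x hh)), not_not.1 (fun hh => hx (hs' x hh)), mul_zero]
  have hA : ρ₁' - ρ₂' = c • (ρ₁ - ρ₂) := by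
    funext a
    simpa only [Pi.sub_apply, Pi.smul_apply, smul_eq_mul, ext0_coe] using hprop a
  have hd : ∀ ρ ∈ IrrChar (alternatingGroup (Fin n)), ip (_root_.res ψ) ρ = 1 → ip ρ₁' ρ = 0 ∧ ip ρ₂' ρ = 0 := by
    intro ρ hρ h1
    have h0 := res_disj hn hψ hψ' hne (by rwa [hsd]) hρ (by rw [h1]; exact one_ne_zero)
    rw [h'.res, ip_add_left, irr_orth h'.irr₁ hρ, irr_orth h'.irr₂ hρ] at h0
    rw [irr_orth h'.irr₁ hρ, irr_orth h'.irr₂ hρ]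
    split_ifs at h0 ⊢ <;> norm_num at h0 <;> norm_num
  have h1 := hd ρ₁ h.irr₁ h.ip₁
  have h2 := hd ρ₂ h.irr₂ h.ip₂
  have : ip (ρ₁' - ρ₂') (ρ₁ - ρ₂) = 0 := by
    simp only [ip_sub_left, ip_sub_right, h1, h2]; ring
  rw [hA, ip_smul_left, h.ip_d] at this
  have hc0 : c = 0 := by simpa using this
  exact (div_ne_zero hg' hg) (hc.symm.trans hc0)

lemma even (h : Spl ψ ρ₁ ρ₂) (hψ : ψ ∈ IrrChar _) {g : Equiv.Perm (Fin n)}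
    (hgA : g ∈ alternatingGroup (Fin n))
    (hg : (ext0 ρ₁ - ext0 ρ₂) g = 0) : ∃ m : ℤ, Even m ∧ ψ g = m := by
  set a : alternatingGroup (Fin n) := ⟨g, hgA⟩ with ha
  obtain ⟨m, hm⟩ := irr_sym_int hψ g
  have e1 : ψ g = ρ₁ a + ρ₂ a := congrFun h.res a
  have e2 : (ext0 ρ₁ - ext0 ρ₂) g = ρ₁ a - ρ₂ a := by
    have := ext0_coe ρ₁ a
    have := ext0_coe ρ₂ a
    simp_all only [Pi.sub_apply]
  rw [hg] at e2
  obtain ⟨t, ht⟩ := int_of_isIntegral (Chr.isIntegral (IrrChar.subset_chr h.irr₁) a) (a := 2) (b := m)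
    (by norm_num) (by rw [← hm, e1]; push_cast; linear_combination -e2)
  exact ⟨2 * t, even_two_mul t, by push_cast; rw [e1]; linear_combination e2 + 2 * ht⟩

end Spl
end splitclass

/-! ### Sums over sign-stable sets, and column orthogonality -/


lemma irr_finite (G : Type) [Group G] [Fintype G] : (IrrChar G).Finite := by
  have : LinearIndependent ℂ (fun χ : IrrChar G => (χ : G → ℂ)) := by
    rw [linearIndependent_iff']
    intro s c h i hi
    exact irr_indep s (fun χ : IrrChar G => (χ : G → ℂ)) (fun χ _ => χ.2) (fun i _ j _ h => Subtype.ext h) c h i hi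
  exact this.setFinite

section parity
variable {n : ℕ}

/-- In a sum over a sign-stable set, only the self-dual members matter modulo a subgroup containing
the contributions of the pairs. -/
lemma tw_sum_mem {M : Type*} [AddCommGroup M] (L : AddSubgroup M) (s : Finset (Equiv.Perm (Fin n) → ℂ))
    (hs : ∀ U ∈ s, tw U ∈ s) (f : (Equiv.Perm (Fin n) → ℂ) → M)
    (h1 : ∀ U ∈ s, f U + f (tw U) ∈ L) (h2 : ∀ U ∈ s, tw U = U → f U ∈ L) : ∑ U ∈ s, f U ∈ L := by
  rw [← QuotientAddGroup.eq_zero_iff]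
  have : ((∑ U ∈ s, f U : M) : M ⧸ L) = ∑ U ∈ s, ((f U : M) : M ⧸ L) :=
    map_sum (QuotientAddGroup.mk' L) f s
  rw [this]
  refine Finset.sum_involution (fun U _ => tw U) ?_ ?_ (fun U hU => hs U hU) (fun U _ => tw_tw U)
  · intro U hU
    rw [← QuotientAddGroup.mk_add, QuotientAddGroup.eq_zero_iff]
    exact h1 U hU
  · intro U hU hne h
    exact hne ((QuotientAddGroup.eq_zero_iff _).2 (h2 U hU h))

lemma tw_sum_even (s : Finset (Equiv.Perm (Fin n) → ℂ))
    (hs : ∀ U ∈ s, tw U ∈ s) (f : (Equiv.Perm (Fin n) → ℂ) → ℤ)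
    (h1 : ∀ U ∈ s, f (tw U) = f U) (h2 : ∀ U ∈ s, tw U = U → Even (f U)) : Even (∑ U ∈ s, f U) := by
  have := tw_sum_mem (AddSubgroup.zmultiples (2 : ℤ)) s hs f (fun U hU => by
    rw [h1 U hU, Int.mem_zmultiples_iff]; exact ⟨f U, by ring⟩) (fun U hU h => by
    rw [Int.mem_zmultiples_iff]; exact (h2 U hU h).two_dvd)
  rw [Int.mem_zmultiples_iff] at this
  exact (even_iff_two_dvd).2 this

/-- Second orthogonality relation for non-conjugate elements of `S_n`. -/
lemma column_orth (s : Finset (Equiv.Perm (Fin n) → ℂ)) (hs : (s : Set _) = IrrChar (Equiv.Perm (Fin n)))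
    {g h : Equiv.Perm (Fin n)} (hgh : ¬ IsConj g h) : ∑ ψ ∈ s, ψ g * ψ h = 0 := by
  have hmem : ∀ {ψ}, ψ ∈ s ↔ ψ ∈ IrrChar (Equiv.Perm (Fin n)) := by
    intro ψ; rw [← hs]; simp
  set f : Equiv.Perm (Fin n) → ℂ := fun x => if IsConj g x then 1 else 0 with hf
  have hconj : ∀ ψ ∈ s, ∀ x, (starRingEnd ℂ) (ψ x) = ψ x := by
    intro ψ hψ x
    obtain ⟨z, hz⟩ := irr_sym_int (hmem.1 hψ) x
    rw [hz, map_intCast]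
  have hip : ∀ ψ ∈ s, ip f ψ = (Fintype.card (Equiv.Perm (Fin n)) : ℂ)⁻¹ *
      ((Finset.univ.filter fun x => IsConj g x).card * ψ g) := by
    intro ψ hψ
    rw [ip]; congr 1
    simp only [hf, ite_mul, one_mul, zero_mul]
    rw [← Finset.sum_filter, Finset.sum_congr rfl (g := fun _ => ψ g), Finset.sum_const, nsmul_eq_mul]
    intro x hx
    rw [hconj ψ hψ, Chr.isConj (IrrChar.subset_chr (hmem.1 hψ)) (Finset.mem_filter.1 hx).2]
  have hzero : f - ∑ ψ ∈ s, ip f ψ • ψ = 0 := by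
    refine sym_complete _ ?_ ?_
    · intro a b hab
      simp only [Pi.sub_apply, Finset.sum_apply, Pi.smul_apply, hf]
      congr 1
      · congr 1
        exact propext ⟨fun h => h.trans hab, fun h => h.trans hab.symm⟩
      · exact Finset.sum_congr rfl fun ψ hψ => by
          rw [Chr.isConj (IrrChar.subset_chr (hmem.1 hψ)) hab]
    · intro φ hφ
      rw [ip_sub_left, ip_sum_left, Finset.sum_eq_single φ]
      · rw [ip_smul_left, irr_orth hφ hφ, if_pos rfl, mul_one, sub_self]
      · intro ψ hψ hne
        rw [ip_smul_left, irr_orth (hmem.1 hψ) hφ, if_neg hne, mul_zero]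
      · intro hφ'; exact absurd (hmem.2 hφ) hφ'
  have h0 := congrFun hzero h
  simp only [Pi.sub_apply, Finset.sum_apply, Pi.smul_apply, hf, if_neg hgh, zero_sub, Pi.zero_apply,
    neg_eq_zero, smul_eq_mul] at h0
  rw [Finset.sum_congr rfl (fun ψ hψ => by rw [hip ψ hψ] :
    ∀ ψ ∈ s, ip f ψ * ψ h = (Fintype.card (Equiv.Perm (Fin n)) : ℂ)⁻¹ *
      ((Finset.univ.filter fun x => IsConj g x).card * ψ g) * ψ h)] at h0
  have hc1 : (Fintype.card (Equiv.Perm (Fin n)) : ℂ)⁻¹ ≠ 0 :=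
    inv_ne_zero (by exact_mod_cast Fintype.card_ne_zero)
  have hc2 : ((Finset.univ.filter fun x => IsConj g x).card : ℂ) ≠ 0 := by
    have : 0 < (Finset.univ.filter fun x => IsConj g x).card :=
      Finset.card_pos.2 ⟨g, Finset.mem_filter.2 ⟨Finset.mem_univ _, IsConj.refl g⟩⟩
    exact_mod_cast this.ne'
  apply mul_left_cancel₀ (mul_ne_zero hc1 hc2)
  rw [mul_zero, Finset.mul_sum, ← h0]
  exact Finset.sum_congr rfl fun _ _ => by ring

end parity

/-! ### Transfer of a sign-stable basic set to the alternating group -/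

section transfer
variable {n : ℕ}

/-- The integer value of an integer-valued function (irreducible characters of `S_n` are such). -/
def val (ψ : Equiv.Perm (Fin n) → ℂ) (g : Equiv.Perm (Fin n)) : ℤ := ⌊(ψ g).re⌋

lemma val_eq {ψ : Equiv.Perm (Fin n) → ℂ} {g : Equiv.Perm (Fin n)} {z : ℤ} (h : ψ g = z) : val ψ g = z := by
  rw [val, h, Complex.intCast_re, Int.floor_intCast]

lemma val_cast {ψ : Equiv.Perm (Fin n) → ℂ} (hψ : ψ ∈ IrrChar _) (g : Equiv.Perm (Fin n)) :
    (val ψ g : ℂ) = ψ g := by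
  obtain ⟨z, hz⟩ := irr_sym_int hψ g
  rw [val_eq hz, hz]

lemma tw_apply_even (ψ : Equiv.Perm (Fin n) → ℂ) {g : Equiv.Perm (Fin n)}
    (hg : g ∈ alternatingGroup (Fin n)) : tw ψ g = ψ g :=
  congrFun (res_tw ψ) ⟨g, hg⟩

lemma Spl.symm {ψ : Equiv.Perm (Fin n) → ℂ} {ρ₁ ρ₂ : alternatingGroup (Fin n) → ℂ}
    (h : Spl ψ ρ₁ ρ₂) : Spl ψ ρ₂ ρ₁ where
  irr₁ := h.irr₂
  irr₂ := h.irr₁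
  ne := h.ne.symm
  res := by rw [h.res, add_comm]
  conj y x := by
    have := h.conj y x
    simp only [Pi.sub_apply] at this ⊢
    linear_combination -this

lemma Spl.ext0_odd (hn : 2 ≤ n) {ψ : Equiv.Perm (Fin n) → ℂ} {ρ₁ ρ₂ : alternatingGroup (Fin n) → ℂ}
    (h : Spl ψ ρ₁ ρ₂) (hψ : ψ ∈ IrrChar _) (hsd : tw ψ = ψ) {s : Equiv.Perm (Fin n)}
    (hs : Equiv.Perm.sign s = -1) (x : Equiv.Perm (Fin n)) : ext0 ρ₁ (s * x * s⁻¹) = ext0 ρ₂ x := by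
  rw [ext0_conj, conj_odd hn hψ hsd h.irr₁ h.irr₂ h.ne h.res hs]

lemma res_irr (hn : 2 ≤ n) {U : Equiv.Perm (Fin n) → ℂ} (hU : U ∈ IrrChar _) (h : tw U ≠ U) :
    res U ∈ IrrChar _ := by
  rw [irr_iff]
  exact ⟨res_chr hU, by rw [ip_res_irr hn hU hU, if_pos rfl, if_neg h, add_zero]⟩

/-- The constituents of the restriction of `U`: `res U` itself if `U` is not fixed by the sign
twist, the two halves otherwise. -/
lemma over_cases (hn : 2 ≤ n) {U : Equiv.Perm (Fin n) → ℂ} (hU : U ∈ IrrChar _)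
    {ρ : alternatingGroup (Fin n) → ℂ} (hρ : ρ ∈ IrrChar _) (h : ip (res U) ρ ≠ 0) :
    (tw U ≠ U ∧ ρ = res U) ∨ (tw U = U ∧ ∃ ρ', Spl U ρ ρ') := by
  by_cases hsd : tw U = U
  · refine Or.inr ⟨hsd, ?_⟩
    obtain ⟨ρ₁, ρ₂, hs⟩ := exists_spl hn hU hsd
    by_cases e1 : ρ₁ = ρ
    · exact ⟨ρ₂, e1 ▸ hs⟩
    by_cases e2 : ρ₂ = ρ
    · exact ⟨ρ₁, e2 ▸ hs.symm⟩
    exact absurd (by rw [hs.res, ip_add_left, irr_orth hs.irr₁ hρ, irr_orth hs.irr₂ hρ, if_neg e1,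
      if_neg e2, add_zero]) h
  · refine Or.inl ⟨hsd, ?_⟩
    by_contra hne
    exact h (by rw [irr_orth (res_irr hn hU hsd) hρ, if_neg (Ne.symm hne)])

/-- A finite sign-stable set `Bf` of irreducible characters of `S_n` which is a basic set for the
conjugation-invariant set `C`, with the matrix `a` expressing all irreducible characters
on `C` through `Bf`. -/
structure Dat (C : Set (Equiv.Perm (Fin n))) (Irrf Bf : Finset (Equiv.Perm (Fin n) → ℂ))
    (a : (Equiv.Perm (Fin n) → ℂ) → (Equiv.Perm (Fin n) → ℂ) → ℤ) : Prop where
  irrf : (Irrf : Set _) = IrrChar (Equiv.Perm (Fin n))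
  sub : ∀ U ∈ Bf, U ∈ IrrChar (Equiv.Perm (Fin n))
  stab : ∀ U ∈ Bf, tw U ∈ Bf
  ex : ∀ T ∈ IrrChar (Equiv.Perm (Fin n)), ∀ g ∈ C, T g = ∑ U ∈ Bf, (a T U : ℂ) * U g
  ind : ∀ c : (Equiv.Perm (Fin n) → ℂ) → ℤ, (∀ g ∈ C, ∑ U ∈ Bf, (c U : ℂ) * U g = 0) → ∀ U ∈ Bf, c U = 0
  conj : ∀ g h, IsConj g h → g ∈ C → h ∈ C

/-- Away from `U`, self-dual characters are even on the class where the two halves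
of `U` differ, and the other characters come in pairs. -/
lemma sum_even_at (hn : 2 ≤ n) {U : Equiv.Perm (Fin n) → ℂ} (hU : U ∈ IrrChar _) (hsd : tw U = U)
    {ρ₁ ρ₂ : alternatingGroup (Fin n) → ℂ} (h : Spl U ρ₁ ρ₂) {g : Equiv.Perm (Fin n)}
    (hg : (ext0 ρ₁ - ext0 ρ₂) g ≠ 0) (s : Finset (Equiv.Perm (Fin n) → ℂ))
    (hs : ∀ V ∈ s, V ∈ IrrChar (Equiv.Perm (Fin n))) (hst : ∀ V ∈ s, tw V ∈ s) (hUs : U ∉ s)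
    (w : (Equiv.Perm (Fin n) → ℂ) → ℤ) (hw : ∀ V ∈ s, w (tw V) = w V) :
    Even (∑ V ∈ s, w V * val V g) := by
  refine tw_sum_even s hst _ ?_ ?_
  · intro V hV
    rw [hw V hV, val, val, tw_apply_even V (Spl.mem_alt hg)]
  · intro V hV hVsd
    obtain ⟨σ₁, σ₂, h'⟩ := exists_spl hn (hs V hV) hVsd
    have h0 := h.eq_zero hn h' hU (hs V hV) hsd (fun e => hUs (e ▸ hV)) hg
    obtain ⟨m, hm, hVm⟩ := h'.even (hs V hV) (Spl.mem_alt hg) h0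
    rw [val_eq hVm]
    exact hm.mul_left _

namespace Dat
variable {C : Set (Equiv.Perm (Fin n))} {Irrf Bf : Finset (Equiv.Perm (Fin n) → ℂ)}
  {a : (Equiv.Perm (Fin n) → ℂ) → (Equiv.Perm (Fin n) → ℂ) → ℤ}

lemma mem_irrf (D : Dat C Irrf Bf a) {T : Equiv.Perm (Fin n) → ℂ} : T ∈ Irrf ↔ T ∈ IrrChar (Equiv.Perm (Fin n)) := by
  rw [← D.irrf]; simp

lemma erase_stab {s : Finset (Equiv.Perm (Fin n) → ℂ)} (hs : ∀ V ∈ s, tw V ∈ s)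
    {U : Equiv.Perm (Fin n) → ℂ} (hsd : tw U = U) : ∀ V ∈ s.erase U, tw V ∈ s.erase U := by
  intro V hV
  rw [Finset.mem_erase] at hV ⊢
  refine ⟨fun e => hV.1 ?_, hs V hV.2⟩
  rw [← tw_tw V, e, hsd]

lemma a_tw (D : Dat C Irrf Bf a) {T : Equiv.Perm (Fin n) → ℂ} (hT : T ∈ IrrChar _) {U : Equiv.Perm (Fin n) → ℂ}
    (hU : U ∈ Bf) : a (tw T) (tw U) = a T U := by
  rw [← sub_eq_zero]
  refine D.ind (fun U => a (tw T) (tw U) - a T U) ?_ U hU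
  intro g hg
  have h1 : ∑ V ∈ Bf, (a (tw T) (tw V) : ℂ) * V g = T g := by
    have e1 : ∑ V ∈ Bf, (a (tw T) (tw V) : ℂ) * V g = ∑ V ∈ Bf, (a (tw T) V : ℂ) * tw V g := by
      refine Finset.sum_bij' (fun V _ => tw V) (fun V _ => tw V) D.stab D.stab
        (fun V _ => tw_tw V) (fun V _ => tw_tw V) ?_
      intro V _
      rw [tw_tw]
    rw [e1]
    have e2 : ∑ V ∈ Bf, (a (tw T) V : ℂ) * tw V g =
        ((Equiv.Perm.sign g : ℤ) : ℂ) * ∑ V ∈ Bf, (a (tw T) V : ℂ) * V g := by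
      rw [Finset.mul_sum]
      exact Finset.sum_congr rfl fun V _ => by rw [tw]; ring
    rw [e2, ← D.ex (tw T) (tw_irr hT) g hg]
    exact congrFun (tw_tw T) g
  have h2 := D.ex T hT g hg
  push_cast
  simp only [sub_mul, Finset.sum_sub_distrib]
  rw [h1, ← h2, sub_self]

lemma a_self (D : Dat C Irrf Bf a) {U : Equiv.Perm (Fin n) → ℂ} (hU : U ∈ Bf) : a U U = 1 := by
  rw [← sub_eq_zero]
  have := D.ind (fun V => a U V - if V = U then 1 else 0) ?_ U hU
  · simpa using this
  intro g hg
  have h2 := D.ex U (D.sub U hU) g hg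
  push_cast
  simp only [sub_mul, Finset.sum_sub_distrib]
  rw [← h2]
  simp [hU]

/-- The halves of a self-dual member of the basic set differ inside `C`. -/
lemma supp_mem (D : Dat C Irrf Bf a) (hn : 2 ≤ n) {U : Equiv.Perm (Fin n) → ℂ} (hU : U ∈ Bf) (hsd : tw U = U)
    {ρ₁ ρ₂ : alternatingGroup (Fin n) → ℂ} (h : Spl U ρ₁ ρ₂) {g : Equiv.Perm (Fin n)}
    (hg : (ext0 ρ₁ - ext0 ρ₂) g ≠ 0) : g ∈ C := by
  by_contra hgC
  have hUi := D.sub U hU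
  have h0 : ∑ S ∈ Irrf, a S U * val S g = 0 := by
    refine D.ind (fun V => ∑ S ∈ Irrf, a S V * val S g) ?_ U hU
    intro x hx
    have hgx : ¬ IsConj g x := fun hc => hgC (D.conj x g hc.symm hx)
    rw [← column_orth Irrf D.irrf hgx]
    push_cast
    simp only [Finset.sum_mul]
    rw [Finset.sum_comm]
    refine Finset.sum_congr rfl fun S hS => ?_
    rw [D.ex S (D.mem_irrf.1 hS) x hx, Finset.mul_sum, ← val_cast (D.mem_irrf.1 hS) g]
    exact Finset.sum_congr rfl fun V _ => by ring
  rw [← Finset.add_sum_erase _ _ (D.mem_irrf.2 hUi), D.a_self hU, one_mul] at h0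
  have hev := sum_even_at hn hUi hsd h hg (Irrf.erase U)
    (fun V hV => D.mem_irrf.1 (Finset.mem_of_mem_erase hV))
    (erase_stab (fun V hV => D.mem_irrf.2 (tw_irr (D.mem_irrf.1 hV))) hsd) (Finset.notMem_erase _ _)
    (fun S => a S U) (fun V hV => by
      have := D.a_tw (D.mem_irrf.1 (Finset.mem_of_mem_erase hV)) hU
      rwa [hsd] at this)
  obtain ⟨m, hm, hUm⟩ := h.odd hn hUi hg
  rw [val_eq hUm] at h0
  have := hm.add_even hev
  rw [h0] at this
  exact absurd this (by decide)

lemma a_tw_right (D : Dat C Irrf Bf a) {T : Equiv.Perm (Fin n) → ℂ} (hT : T ∈ IrrChar _) (hsd : tw T = T)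
    {U : Equiv.Perm (Fin n) → ℂ} (hU : U ∈ Bf) : a T (tw U) = a T U := by
  have := D.a_tw hT hU
  rwa [hsd] at this

lemma ex_val (D : Dat C Irrf Bf a) {T : Equiv.Perm (Fin n) → ℂ} (hT : T ∈ IrrChar _) {g : Equiv.Perm (Fin n)}
    (hg : g ∈ C) : val T g = ∑ U ∈ Bf, a T U * val U g := by
  have h := D.ex T hT g hg
  rw [← val_cast hT g] at h
  have : ((val T g : ℤ) : ℂ) = ((∑ U ∈ Bf, a T U * val U g : ℤ) : ℂ) := by
    rw [h]; push_cast
    exact Finset.sum_congr rfl fun V hV => by rw [val_cast (D.sub V hV)]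
  exact_mod_cast this

/-- The halves of a self-dual character outside the basic set agree on `C`. -/
lemma supp_not_mem (D : Dat C Irrf Bf a) (hn : 2 ≤ n) {T : Equiv.Perm (Fin n) → ℂ} (hT : T ∈ IrrChar _)
    (hTB : T ∉ Bf) (hsd : tw T = T)
    {ρ₁ ρ₂ : alternatingGroup (Fin n) → ℂ} (h : Spl T ρ₁ ρ₂) {g : Equiv.Perm (Fin n)}
    (hgC : g ∈ C) : (ext0 ρ₁ - ext0 ρ₂) g = 0 := by
  by_contra hg
  have hev := sum_even_at hn hT hsd h hg Bf D.sub D.stab hTB (a T) (fun V hV => D.a_tw_right hT hsd hV)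
  rw [← D.ex_val hT hgC] at hev
  obtain ⟨m, hm, hTm⟩ := h.odd hn hT hg
  rw [val_eq hTm] at hev
  exact absurd hev (Int.not_even_iff_odd.2 hm)

/-- Evaluation of the expansion of `T` at the class where the halves of `U` differ: there `U` is odd
and everything else is even or cancels in pairs. -/
lemma a_even (D : Dat C Irrf Bf a) (hn : 2 ≤ n) {T : Equiv.Perm (Fin n) → ℂ} (hT : T ∈ IrrChar _)
    (hTB : T ∉ Bf) (hsd : tw T = T) {U : Equiv.Perm (Fin n) → ℂ} (hU : U ∈ Bf) (hUsd : tw U = U) :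
    Even (a T U) := by
  have hUi := D.sub U hU
  have hne : U ≠ T := fun e => hTB (e ▸ hU)
  obtain ⟨ρ₁, ρ₂, h⟩ := exists_spl hn hUi hUsd
  obtain ⟨g, hg⟩ := h.exists_ne
  have hgC := D.supp_mem hn hU hUsd h hg
  obtain ⟨σ₁, σ₂, h'⟩ := exists_spl hn hT hsd
  obtain ⟨t, ht, hTt⟩ := h'.even hT (Spl.mem_alt hg) (h.eq_zero hn h' hUi hT hUsd hne hg)
  obtain ⟨m, hm, hUm⟩ := h.odd hn hUi hg
  have he := D.ex_val hT hgC
  rw [← Finset.add_sum_erase _ _ hU, val_eq hTt, val_eq hUm] at he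
  have hev := sum_even_at hn hUi hUsd h hg (Bf.erase U)
    (fun V hV => D.sub V (Finset.mem_of_mem_erase hV)) (erase_stab D.stab hUsd) (Finset.notMem_erase _ _)
    (a T) (fun V hV => D.a_tw_right hT hsd (Finset.mem_of_mem_erase hV))
  have h3 : Even (a T U * m) := by
    have : a T U * m = t - ∑ V ∈ Bf.erase U, a T V * val V g := by linarith
    rw [this]; exact ht.sub hev
  rcases Int.even_mul.1 h3 with h4 | h4
  · exact h4
  · exact absurd h4 (Int.not_even_iff_odd.2 hm)

end Dat
end transfer

/-! ### The basic set of the alternating group -/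


section final
variable {n : ℕ}

/-- Truncation as a `ℤ`-linear map. -/
def truncL {G : Type} (C : Set G) : (G → ℂ) →ₗ[ℤ] (G → ℂ) where
  toFun := truncCF C
  map_add' x y := by funext g; simp only [truncCF, Pi.add_apply]; split_ifs <;> simp
  map_smul' c x := by funext g; simp only [truncCF, Pi.smul_apply]; split_ifs <;> simp

lemma truncL_apply {G : Type} (C : Set G) (φ : G → ℂ) : truncL C φ = truncCF C φ := rfl

/-- The constituents of restrictions to `A_n` of members of `Bf`. -/
def BA (Bf : Finset (Equiv.Perm (Fin n) → ℂ)) : Set (alternatingGroup (Fin n) → ℂ) :=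
  {ρ ∈ IrrChar ↥(alternatingGroup (Fin n)) | ∃ χ ∈ Bf, ip (res χ) ρ ≠ 0}

/-- The elements of `A_n` lying in `C`. -/
def CA (C : Set (Equiv.Perm (Fin n))) : Set (alternatingGroup (Fin n)) := {x | (x : Equiv.Perm (Fin n)) ∈ C}

namespace Dat
variable {C : Set (Equiv.Perm (Fin n))} {Irrf Bf : Finset (Equiv.Perm (Fin n) → ℂ)}
  {a : (Equiv.Perm (Fin n) → ℂ) → (Equiv.Perm (Fin n) → ℂ) → ℤ}

lemma res_mem (D : Dat C Irrf Bf a) (hn : 2 ≤ n) {U : Equiv.Perm (Fin n) → ℂ} (hU : U ∈ Bf) :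
    truncCF (CA C) (res U) ∈ Submodule.span ℤ (truncCF (CA C) '' BA Bf) := by
  have hUi := D.sub U hU
  by_cases hsd : tw U = U
  · obtain ⟨ρ₁, ρ₂, h⟩ := exists_spl hn hUi hsd
    rw [h.res, ← truncL_apply, map_add]
    refine add_mem (Submodule.subset_span ⟨ρ₁, ⟨h.irr₁, U, hU, ?_⟩, rfl⟩)
      (Submodule.subset_span ⟨ρ₂, ⟨h.irr₂, U, hU, ?_⟩, rfl⟩)
    · rw [h.ip₁]; exact one_ne_zero
    · rw [h.ip₂]; exact one_ne_zero
  · have hr := res_irr hn hUi hsd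
    refine Submodule.subset_span ⟨res U, ⟨hr, U, hU, ?_⟩, rfl⟩
    rw [irr_orth hr hr, if_pos rfl]; exact one_ne_zero

lemma trunc_res (D : Dat C Irrf Bf a) {T : Equiv.Perm (Fin n) → ℂ} (hT : T ∈ IrrChar _) :
    truncCF (CA C) (res T) = ∑ U ∈ Bf, a T U • truncCF (CA C) (res U) := by
  funext x
  simp only [Finset.sum_apply, Pi.smul_apply, truncCF]
  by_cases hx : x ∈ CA C
  · simp only [if_pos hx, zsmul_eq_mul]
    exact D.ex T hT x hx
  · simp [if_neg hx]

/-- The halves of a self-dual `T` outside the basic set agree on `C`, so each of them is half of `T`;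
its expansion has even coefficients at self-dual characters and equal ones at dual pairs. -/
lemma spanning (D : Dat C Irrf Bf a) (hn : 2 ≤ n) {ρ : alternatingGroup (Fin n) → ℂ} (hρ : ρ ∈ IrrChar _) :
    truncCF (CA C) ρ ∈ Submodule.span ℤ (truncCF (CA C) '' BA Bf) := by
  set M := Submodule.span ℤ (truncCF (CA C) '' BA Bf) with hM
  obtain ⟨T, hT, hTρ⟩ := exists_over hn hρ
  by_cases hTB : T ∈ Bf
  · exact Submodule.subset_span ⟨ρ, ⟨hρ, T, hTB, hTρ⟩, rfl⟩
  rcases over_cases hn hT hρ hTρ with ⟨-, rfl⟩ | ⟨hsd, ρ', h⟩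
  · rw [D.trunc_res hT]
    exact sum_mem fun U hU => M.smul_mem _ (D.res_mem hn hU)
  · have h2 : truncCF (CA C) (res T) = (2 : ℤ) • truncCF (CA C) ρ := by
      funext x
      simp only [Pi.smul_apply, truncCF]
      by_cases hx : x ∈ CA C
      · have h0 := D.supp_not_mem hn hT hTB hsd h (g := x) hx
        simp only [Pi.sub_apply, ext0_coe] at h0
        rw [if_pos hx, if_pos hx, h.res, Pi.add_apply, zsmul_eq_mul]
        push_cast
        linear_combination -h0
      · simp [if_neg hx]
    have hL : truncCF (CA C) (res T) ∈
        M.toAddSubgroup.map (zsmulAddGroupHom (2 : ℤ) : (alternatingGroup (Fin n) → ℂ) →+ _) := by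
      rw [D.trunc_res hT]
      refine tw_sum_mem _ Bf D.stab _ ?_ ?_
      · intro U hU
        rw [D.a_tw_right hT hsd hU, res_tw]
        exact ⟨a T U • truncCF (CA C) (res U), M.smul_mem _ (D.res_mem hn hU), by
          simp only [zsmulAddGroupHom_apply]; rw [two_smul]⟩
      · intro U hU hUsd
        obtain ⟨k, hk⟩ := D.a_even hn hT hTB hsd hU hUsd
        exact ⟨k • truncCF (CA C) (res U), M.smul_mem _ (D.res_mem hn hU), by
          simp only [zsmulAddGroupHom_apply]; rw [hk, add_smul, two_smul]⟩
    obtain ⟨m, hm, hm2⟩ := hL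
    simp only [zsmulAddGroupHom_apply] at hm2
    rw [h2] at hm2
    have : m = truncCF (CA C) ρ := by
      funext x
      have := congrFun hm2 x
      simpa using this
    rw [← this]; exact hm

/-- Inducing `ρ` to `S_n`: the restricted sum over the basic set. -/
lemma ind_sum (D : Dat C Irrf Bf a) (hn : 2 ≤ n) {ρ : alternatingGroup (Fin n) → ℂ} (hρ : ρ ∈ BA Bf)
    {s : Equiv.Perm (Fin n)} (hs : Equiv.Perm.sign s = -1) (x : Equiv.Perm (Fin n)) :
    ∑ U ∈ Bf, (if ip (res U) ρ ≠ 0 then U x else 0) = ext0 ρ x + ext0 ρ (s * x * s⁻¹) := by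
  obtain ⟨hρi, U, hU, hUρ⟩ := hρ
  have hUi := D.sub U hU
  have hz : ∀ V ∈ Bf, U ≠ V → tw U ≠ V → (if ip (res V) ρ ≠ 0 then V x else 0) = 0 := by
    intro V hV h1 h2
    rw [if_neg]
    rw [res_disj hn hUi (D.sub V hV) h1 h2 hρi hUρ]; simp
  rcases over_cases hn hUi hρi hUρ with ⟨hsd, rfl⟩ | ⟨hsd, ρ', h⟩
  · rw [Finset.sum_eq_add_of_mem U (tw U) hU (D.stab U hU) (Ne.symm hsd)
      (fun V hV hne => hz V hV (Ne.symm hne.1) (Ne.symm hne.2)), if_pos hUρ, if_pos (by rwa [res_tw]),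
      ext0_conj]
    simp only [res_conj hUi]
    rcases sign_cases x with ⟨hx, hs⟩ | ⟨hx, hs⟩
    · rw [tw_apply_even U hx, ext0, dif_pos hx]; rfl
    · simp only [ext0, dif_neg hx, tw, hs]; simp
  · rw [Finset.sum_eq_single U (fun V hV hne => hz V hV (Ne.symm hne) (by rw [hsd]; exact Ne.symm hne))
      (fun h => absurd hU h), if_pos hUρ, h.ext0_odd hn hUi hsd hs]
    rcases sign_cases x with ⟨hx, hs⟩ | ⟨hx, hs⟩
    · simp only [ext0, dif_pos hx]
      exact congrFun h.res ⟨x, hx⟩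
    · simp only [ext0, dif_neg hx, add_zero]
      have := congrFun hsd x
      simp only [tw, hs] at this
      push_cast at this
      linear_combination -this / 2

/-- A relation, induced to `S_n`, forces the two halves of each self-dual character to have opposite
coefficients; evaluation at the class where they differ then kills these. -/
lemma indep (D : Dat C Irrf Bf a) (hn : 2 ≤ n) (R : Finset (alternatingGroup (Fin n) → ℂ))
    (hR : ∀ {ρ}, ρ ∈ R ↔ ρ ∈ BA Bf) (c : (alternatingGroup (Fin n) → ℂ) → ℤ)
    (hc : ∀ x ∈ CA C, ∑ ρ ∈ R, (c ρ : ℂ) * ρ x = 0) : ∀ ρ ∈ R, c ρ = 0 := by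
  obtain ⟨s, hs⟩ : ∃ s : Equiv.Perm (Fin n), Equiv.Perm.sign s = -1 := by
    haveI : Nontrivial (Fin n) := Fin.nontrivial_iff_two_le.2 hn
    exact Equiv.Perm.sign_surjective (Fin n) (-1)
  have hc1 : ∀ x ∈ C, ∑ ρ ∈ R, (c ρ : ℂ) * ext0 ρ x = 0 := by
    intro x hx
    by_cases hxA : x ∈ alternatingGroup (Fin n)
    · simp only [ext0, dif_pos hxA]
      exact hc ⟨x, hxA⟩ hx
    · simp only [ext0, dif_neg hxA, mul_zero, Finset.sum_const_zero]
  have hc2 : ∀ x ∈ C, ∑ ρ ∈ R, (c ρ : ℂ) * ext0 ρ (s * x * s⁻¹) = 0 := fun x hx =>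
    hc1 _ (D.conj x _ (isConj_iff.2 ⟨s, rfl⟩) hx)
  have hb : ∀ U ∈ Bf, ∑ ρ ∈ R, (if ip (res U) ρ ≠ 0 then c ρ else 0) = 0 := by
    refine D.ind (fun U => ∑ ρ ∈ R, (if ip (res U) ρ ≠ 0 then c ρ else 0)) ?_
    intro x hx
    push_cast
    simp only [Finset.sum_mul]
    rw [Finset.sum_comm]
    have : ∀ ρ ∈ R, ∑ U ∈ Bf, (if ip (res U) ρ ≠ 0 then (c ρ : ℂ) else 0) * U x =
        (c ρ : ℂ) * ext0 ρ x + (c ρ : ℂ) * ext0 ρ (s * x * s⁻¹) := by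
      intro ρ hρ
      rw [← mul_add, ← D.ind_sum hn (hR.1 hρ) hs x, Finset.mul_sum]
      exact Finset.sum_congr rfl fun U _ => by split_ifs <;> simp
    rw [Finset.sum_congr rfl this, Finset.sum_add_distrib, hc1 x hx, hc2 x hx, add_zero]
  intro ρ hρ
  obtain ⟨hρi, U, hU, hUρ⟩ := hR.1 hρ
  have hUi := D.sub U hU
  have hbU := hb U hU
  rcases over_cases hn hUi hρi hUρ with ⟨hsd, hres⟩ | ⟨hsd, ρ', h⟩
  · rw [Finset.sum_eq_single ρ] at hbU
    · rwa [if_pos hUρ] at hbU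
    · intro σ hσ hne
      rw [if_neg]
      rw [← hres, irr_orth hρi (hR.1 hσ).1, if_neg (Ne.symm hne)]; simp
    · intro h; exact absurd hρ h
  · have hU' : ip (res U) ρ' ≠ 0 := by rw [h.ip₂]; exact one_ne_zero
    have hρ' : ρ' ∈ R := hR.2 ⟨h.irr₂, U, hU, hU'⟩
    have hother : ∀ σ ∈ R, σ ≠ ρ ∧ σ ≠ ρ' → ip (res U) σ = 0 := by
      intro σ hσ hne
      rw [h.res, ip_add_left, irr_orth h.irr₁ (hR.1 hσ).1, irr_orth h.irr₂ (hR.1 hσ).1,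
        if_neg (Ne.symm hne.1), if_neg (Ne.symm hne.2), add_zero]
    rw [Finset.sum_eq_add_of_mem ρ ρ' hρ hρ' h.ne (fun σ hσ hne => by
      rw [if_neg]; rw [hother σ hσ hne]; simp), if_pos hUρ, if_pos hU'] at hbU
    obtain ⟨g, hg⟩ := h.exists_ne
    have hgC := D.supp_mem hn hU hsd h hg
    have hd : ∑ σ ∈ R, (c σ : ℂ) * (ext0 σ g - ext0 σ (s * g * s⁻¹)) = 0 := by
      simp only [mul_sub, Finset.sum_sub_distrib]
      rw [hc1 g hgC, hc2 g hgC, sub_zero]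
    rw [Finset.sum_eq_add_of_mem ρ ρ' hρ hρ' h.ne, h.ext0_odd hn hUi hsd hs, h.symm.ext0_odd hn hUi hsd hs] at hd
    · have h4 : ((c ρ : ℂ) - c ρ') * (ext0 ρ - ext0 ρ') g = 0 := by
        rw [← hd, Pi.sub_apply]; ring
      have h5 := (mul_eq_zero.1 h4).resolve_right hg
      have h6 : c ρ - c ρ' = 0 := by exact_mod_cast h5
      omega
    · intro σ hσ hne
      obtain ⟨hσi, V, hV, hVσ⟩ := hR.1 hσ
      have hVi := D.sub V hV
      rcases over_cases hn hVi hσi hVσ with ⟨hVsd, rfl⟩ | ⟨hVsd, σ', h'⟩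
      · rw [ext0_conj]
        simp only [res_conj hVi]
        rw [sub_self, mul_zero]
      · have hUV : U ≠ V := by
          rintro rfl
          exact hVσ (hother σ hσ hne)
        have := h.eq_zero hn h' hUi hVi hsd hUV hg
        rw [h'.ext0_odd hn hVi hVsd hs]
        rw [Pi.sub_apply] at this
        rw [this, mul_zero]

lemma basic (D : Dat C Irrf Bf a) (hn : 2 ≤ n) :
    IsBasicSetOf (CA C) (IrrChar ↥(alternatingGroup (Fin n))) (BA Bf) := by
  refine ⟨fun ρ h => h.1, ?_, le_antisymm (Submodule.span_mono (Set.image_mono fun ρ h => h.1)) ?_⟩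
  · have hfin : (BA Bf).Finite := (irr_finite (alternatingGroup (Fin n))).subset fun ρ h => h.1
    change LinearIndepOn ℤ (truncCF (CA C)) (BA Bf)
    rw [linearIndepOn_iff']
    intro t c ht h0 ρ hρ
    have := D.indep hn hfin.toFinset (by simp) (fun ρ => if ρ ∈ t then c ρ else 0) ?_ ρ
      (by simpa using ht hρ)
    · simpa [hρ] using this
    intro x hx
    have h1 := congrFun h0 x
    simp only [Finset.sum_apply, Pi.smul_apply, truncCF, if_pos hx, Pi.zero_apply] at h1
    simp only [zsmul_eq_mul] at h1
    rw [← h1]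
    have hsub : t ⊆ hfin.toFinset := fun σ hσ => by simpa using ht hσ
    rw [← Finset.sum_subset hsub]
    · exact Finset.sum_congr rfl fun σ hσ => by rw [if_pos hσ]
    · intro σ _ hσ
      rw [if_neg hσ]; simp
  · rw [Submodule.span_le]
    rintro _ ⟨ρ, hρ, rfl⟩
    exact D.spanning hn hρ

end Dat

lemma exists_dat {C : Set (Equiv.Perm (Fin n))} {B : Set (Equiv.Perm (Fin n) → ℂ)}
    (hC : ∀ g h : Equiv.Perm (Fin n), IsConj g h → g ∈ C → h ∈ C)
    (hB : IsBasicSetOf C (IrrChar (Equiv.Perm (Fin n))) B) (hst : ∀ χ ∈ B, tw χ ∈ B) :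
    ∃ (Irrf Bf : Finset (Equiv.Perm (Fin n) → ℂ)) (a : _), (Bf : Set _) = B ∧ Dat C Irrf Bf a := by
  obtain ⟨hsub, hli, hspan⟩ := hB
  have hfin := irr_finite (Equiv.Perm (Fin n))
  have hBfin : B.Finite := hfin.subset hsub
  have hmem : ∀ U, U ∈ hBfin.toFinset ↔ U ∈ B := by simp
  have hcoef : ∀ T : Equiv.Perm (Fin n) → ℂ, ∃ c : (Equiv.Perm (Fin n) → ℂ) → ℤ, T ∈ IrrChar (Equiv.Perm (Fin n)) →
      ∀ g ∈ C, T g = ∑ U ∈ hBfin.toFinset, (c U : ℂ) * U g := by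
    intro T
    by_cases hT : T ∈ IrrChar (Equiv.Perm (Fin n))
    · have h1 : truncCF C T ∈ Submodule.span ℤ (truncCF C '' (hBfin.toFinset : Set _)) := by
        rw [hBfin.coe_toFinset, hspan]
        exact Submodule.subset_span ⟨T, hT, rfl⟩
      rw [Submodule.mem_span_image_finset_iff_exists_fun'] at h1
      obtain ⟨c, hc⟩ := h1
      refine ⟨c, fun _ g hg => ?_⟩
      have := congrFun hc g
      simp only [Finset.sum_apply, Pi.smul_apply, truncCF, if_pos hg] at this
      simp only [zsmul_eq_mul] at this
      exact this.symm
    · exact ⟨0, fun h => absurd h hT⟩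
  choose a ha using hcoef
  refine ⟨hfin.toFinset, hBfin.toFinset, a, hBfin.coe_toFinset, hfin.coe_toFinset, ?_, ?_, ha, ?_, hC⟩
  · intro U hU; exact hsub ((hmem U).1 hU)
  · intro U hU; exact (hmem _).2 (hst U ((hmem U).1 hU))
  · intro c hc U hU
    have hli' : LinearIndepOn ℤ (truncCF C) B := hli
    rw [linearIndepOn_iff'] at hli'
    refine hli' hBfin.toFinset c (by simp) ?_ U hU
    funext g
    simp only [Finset.sum_apply, Pi.smul_apply, truncCF, Pi.zero_apply]
    by_cases hg : g ∈ C
    · simp only [if_pos hg, zsmul_eq_mul]; exact hc g hg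
    · simp [if_neg hg]

lemma preg_conj (p : ℕ) (g h : Equiv.Perm (Fin n)) (hgh : IsConj g h)
    (hg : g ∈ pRegular p (Equiv.Perm (Fin n))) : h ∈ pRegular p (Equiv.Perm (Fin n)) := by
  obtain ⟨c, rfl⟩ := isConj_iff.1 hgh
  have : orderOf (c * g * c⁻¹) = orderOf g := by
    simpa [MulAut.conj_apply] using orderOf_injective (MulAut.conj c).toMonoidHom (MulAut.conj c).injective g
  simpa only [pRegular, Set.mem_setOf_eq, this] using hg

lemma ca_preg (p : ℕ) : CA (pRegular p (Equiv.Perm (Fin n))) = pRegular p ↥(alternatingGroup (Fin n)) := by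
  ext x
  simp only [CA, pRegular, Set.mem_setOf_eq, Subgroup.orderOf_coe]


/-- An irreducible character of a trivial group is the constant function `1`. -/
lemma irr_subsingleton {G : Type} [Group G] [Fintype G] [Subsingleton G] {χ : G → ℂ} :
    χ ∈ IrrChar G ↔ χ = fun _ => 1 := by
  have huniv : (Finset.univ : Finset G) = {1} := by
    ext x; simp [Subsingleton.elim x 1]
  have hcard : Fintype.card G = 1 := Fintype.card_eq_one_iff.2 ⟨1, fun x => Subsingleton.elim _ _⟩
  constructor
  · intro h
    obtain ⟨d, hd, h1⟩ := irr_one_ne h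
    have h2 := (irr_iff.1 h).2
    rw [ip, huniv, Finset.sum_singleton, hcard, h1, map_natCast] at h2
    have h3 : d * d = 1 := by
      have : ((d * d : ℕ) : ℂ) = 1 := by push_cast; simpa using h2
      exact_mod_cast this
    funext x
    rw [Subsingleton.elim x 1, h1, Nat.eq_one_of_mul_eq_one_right h3]
    simp
  · rintro rfl
    rw [irr_iff]
    refine ⟨?_, by simp [ip, huniv, hcard]⟩
    have := Chr.of_action (X := Fin 1) (1 : G →* Equiv.Perm (Fin 1))
    simpa using this

lemma basic_self_of_subsingleton {G : Type} [Group G] [Fintype G] [Subsingleton G] {C : Set G} (hC : 1 ∈ C) :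
    IsBasicSetOf C (IrrChar G) (IrrChar G) := by
  refine ⟨subset_rfl, ?_, rfl⟩
  change LinearIndepOn ℤ (truncCF C) (IrrChar G)
  rw [linearIndepOn_iff']
  intro t c ht h0 χ hχ
  have ht' : t = {χ} := by
    ext ψ
    rw [Finset.mem_singleton]
    refine ⟨fun h => ?_, fun h => h ▸ hχ⟩
    rw [irr_subsingleton.1 (ht h), irr_subsingleton.1 (ht hχ)]
  rw [ht', Finset.sum_singleton, irr_subsingleton.1 (ht hχ)] at h0
  have := congrFun h0 1
  simp only [Pi.smul_apply, truncCF, if_pos hC] at this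
  rw [irr_subsingleton.1 (ht hχ)]
  simpa using this

end final

/-- For any odd prime `p` and any `n ≥ 1`, the symmetric group `S_n` has a sign-stable
`p`-basic set `B` whose restriction to `A_n` (the set of all irreducible constituents of the
restrictions to `A_n` of members of `B`) is a `p`-basic set of `A_n`. -/
theorem exists_pBasicSet_restricting_to_alternating (p n : ℕ) (hp : p.Prime) (hodd : Odd p)
    (hn : 0 < n) :
    ∃ B : Set (Equiv.Perm (Fin n) → ℂ),
      IsBasicSetOf (pRegular p (Equiv.Perm (Fin n))) (IrrChar (Equiv.Perm (Fin n))) B ∧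
      (∀ χ ∈ B, (fun g => ((Equiv.Perm.sign g : ℤ) : ℂ) * χ g) ∈ B) ∧
      IsBasicSetOf (pRegular p ↥(alternatingGroup (Fin n)))
        (IrrChar ↥(alternatingGroup (Fin n)))
        {ρ ∈ IrrChar ↥(alternatingGroup (Fin n)) |
          ∃ χ ∈ B, innerOn (Set.univ : Set ↥(alternatingGroup (Fin n)))
            (fun a => χ (a : Equiv.Perm (Fin n))) ρ ≠ 0} := by
  rcases Nat.lt_or_ge n 2 with h2 | h2
  · obtain rfl : n = 1 := by omega
    refine ⟨IrrChar _, basic_self_of_subsingleton (by simp [pRegular]), fun χ hχ => tw_irr hχ, ?_⟩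
    have : {ρ ∈ IrrChar ↥(alternatingGroup (Fin 1)) |
          ∃ χ ∈ IrrChar (Equiv.Perm (Fin 1)), innerOn (Set.univ : Set ↥(alternatingGroup (Fin 1)))
            (fun a => χ (a : Equiv.Perm (Fin 1))) ρ ≠ 0} = IrrChar ↥(alternatingGroup (Fin 1)) := by
      refine Set.Subset.antisymm (fun ρ h => h.1) fun ρ h => ⟨h, _, irr_subsingleton.2 rfl, ?_⟩
      rw [innerOn_univ]
      have e := irr_subsingleton.1 h
      have := (irr_iff.1 h).2
      rw [e] at this ⊢
      rw [this]; exact one_ne_zero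
    rw [this]
    exact basic_self_of_subsingleton (by simp [pRegular])
  · obtain ⟨B, hB, hst⟩ := exists_basic_sym p n hp hodd
    refine ⟨B, hB, hst, ?_⟩
    obtain ⟨Irrf, Bf, a, rfl, D⟩ := exists_dat (preg_conj p) hB hst
    have := D.basic h2
    rw [ca_preg] at this
    convert this using 1
    ext ρ
    simp only [BA, Set.mem_setOf_eq, innerOn_univ, Finset.mem_coe]
    rfl
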